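/- arXiv:2407.21456 — 2 statements merged into one kernel-verified Lean document; each statement's English description precedes it below -/
import Mathlib

section
/- Under assumptions (A1)–(A3), the order-9 U-statistic ζ̂*_n = ((n)₉)^{-1} Σ_{(i₁,…,i₉) distinct} φ_n((X_{i₁},Y_{i₁},Z_{i₁}),…,(X_{i₉},Y_{i₉},Z_{i₉})), where (n)₉ = n(n−1)⋯(n−8), converges in probability, as n → ∞, to ζ*(X,Y|Z) = E[Θ²(P_{X|Y,Z}, P_{X|Z}) p_{Y,Z}(Y,Z)⁴ p_Z(Z)⁴]. -/
open MeasureTheory ProbabilityTheory Filter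
open scoped ENNReal NNReal Topology

noncomputable section

/-- `ℝ^d` with the Euclidean norm. -/
abbrev Euc (d : ℕ) : Type := EuclideanSpace ℝ (Fin d)

/-- The ball divergence `Θ²(P, Q)` between two Borel measures on `ℝ^d`:
`∫∫ ((P - Q)(B̄(u, ‖v - u‖)))² [dP(u)dP(v) + dQ(u)dQ(v)]`. -/
def ballDiv {d : ℕ} (P Q : Measure (Euc d)) : ℝ :=
  (∫ u, ∫ v, ((P (Metric.closedBall u (dist v u))).toReal
      - (Q (Metric.closedBall u (dist v u))).toReal) ^ 2 ∂P ∂P)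
  + (∫ u, ∫ v, ((P (Metric.closedBall u (dist v u))).toReal
      - (Q (Metric.closedBall u (dist v u))).toReal) ^ 2 ∂Q ∂Q)

/-- Assumption (A2): the kernel `K` is bounded, nonnegative, symmetric about zero, compactly
supported, integrates (as `u ↦ K ‖u‖` on `ℝ^d`) to one and has a scalar second moment matrix. -/
def KernelAssumption (K : ℝ → ℝ) (d : ℕ) : Prop :=
  (∀ t, 0 ≤ K t) ∧ (∃ C : ℝ, ∀ t, K t ≤ C) ∧ (∀ t, K (-t) = K t) ∧
  (∃ R : ℝ, 0 < R ∧ ∀ t : ℝ, R < |t| → K t = 0) ∧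
  (∫ u : Euc d, K ‖u‖) = 1 ∧
  (∃ τ : ℝ, 0 < τ ∧ ∀ i j : Fin d,
    (∫ u : Euc d, u i * u j * K ‖u‖) = if i = j then τ else 0)

/-- Assumption (A3) on the bandwidth sequences `h₁, h₂`. -/
def BandwidthAssumption (dY dZ : ℕ) (h1 h2 : ℕ → ℝ) : Prop :=
  (∀ n, 0 < h1 n) ∧ (∀ n, 0 < h2 n) ∧
  Tendsto (fun n => h1 n ^ (dY + dZ) / h2 n ^ dZ) atTop (𝓝 0) ∧
  Tendsto (fun n : ℕ => (n : ℝ) * h1 n ^ (dY + dZ)) atTop atTop ∧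
  Tendsto (fun n : ℕ => (n : ℝ) * h2 n ^ dZ) atTop atTop ∧
  Tendsto (fun n : ℕ => (n : ℝ) * h1 n ^ (dY + dZ + 4)) atTop (𝓝 0) ∧
  Tendsto (fun n : ℕ => (n : ℝ) * h2 n ^ (dZ + 4)) atTop (𝓝 0)

/-- The remainder `R(x, y; u)` in the definition of a *nice* density, at step size `δ`. -/
def niceRem {α β : Type*} [NormedAddCommGroup β] [NormedSpace ℝ β]
    (f : α → β → ℝ) (δ : ℝ) (x : α) (y u : β) : ℝ :=
  (δ ^ 2)⁻¹ * (f x (y + δ • u) / f x y - 1 - δ * (fderiv ℝ (f x) y u / f x y))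

/-- A joint density `f(x, y)` is *nice with respect to its second argument* if for every sequence
`δ_n → 0`, `sup_{‖u‖ = 1} limsup_n ∫ R_n(x, y; u)² f(x, y) dx` is uniformly bounded in `y`. -/
def NiceWrt {α β : Type*} [MeasureSpace α] [NormedAddCommGroup β] [NormedSpace ℝ β]
    (f : α → β → ℝ) : Prop :=
  ∀ δ : ℕ → ℝ, (∀ n, δ n ≠ 0) → Tendsto δ atTop (𝓝 0) →
    ∃ C : ℝ, ∀ y u : β, ‖u‖ = 1 →
      Filter.limsup (fun n => ∫ x, (niceRem f (δ n) x y u) ^ 2 * f x y) atTop ≤ C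

/-- The `(Y, Z)`-marginal density `p_{Y,Z}`. -/
def margYZ {dX dY dZ : ℕ} (p : Euc dX → Euc dY → Euc dZ → ℝ) (y : Euc dY) (z : Euc dZ) : ℝ :=
  ∫ x, p x y z

/-- The `Z`-marginal density `p_Z`. -/
def margZ {dX dY dZ : ℕ} (p : Euc dX → Euc dY → Euc dZ → ℝ) (z : Euc dZ) : ℝ :=
  ∫ x, ∫ y, p x y z

/-- Assumption (A1): `p_{X,Z}` is nice with respect to `Z`, `p_{X,Y,Z}` is nice with respect to
`(Y,Z)` (equipped with the Euclidean/`L²` product norm), and `p_{X,Y,Z}` and all its marginals are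
uniformly bounded. -/
def A1 {dX dY dZ : ℕ} (p : Euc dX → Euc dY → Euc dZ → ℝ) : Prop :=
  NiceWrt (fun (x : Euc dX) (z : Euc dZ) => ∫ y, p x y z) ∧
  NiceWrt (fun (x : Euc dX) (w : WithLp 2 (Euc dY × Euc dZ)) =>
    p x (WithLp.equiv 2 (Euc dY × Euc dZ) w).1 (WithLp.equiv 2 (Euc dY × Euc dZ) w).2) ∧
  (∃ C : ℝ, (∀ x y z, p x y z ≤ C) ∧
    (∀ y z, (∫ x, p x y z) ≤ C) ∧ (∀ x z, (∫ y, p x y z) ≤ C) ∧ (∀ x y, (∫ z, p x y z) ≤ C) ∧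
    (∀ x : Euc dX, (∫ y, ∫ z, p x y z) ≤ C) ∧ (∀ y : Euc dY, (∫ x, ∫ z, p x y z) ≤ C) ∧
    (∀ z : Euc dZ, (∫ x, ∫ y, p x y z) ≤ C))

/-- The kernel weight `w_{(y', z')}(y, z) = K(‖(y,z) - (y',z')‖ / h₁)`, with the Euclidean norm on
the concatenated vector. -/
def wYZ {dY dZ : ℕ} (K : ℝ → ℝ) (h1 : ℝ) (y y' : Euc dY) (z z' : Euc dZ) : ℝ :=
  K (Real.sqrt (dist y y' ^ 2 + dist z z' ^ 2) / h1)

/-- The estimated conditional distribution `P̃_{X | Y = y, Z = z}` from `n` sample points. -/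
def condEstYZ {dX dY dZ : ℕ} (K : ℝ → ℝ) (h1 : ℝ) (n : ℕ)
    (Xs : ℕ → Euc dX) (Ys : ℕ → Euc dY) (Zs : ℕ → Euc dZ)
    (y : Euc dY) (z : Euc dZ) : Measure (Euc dX) :=
  (∑ i ∈ Finset.range n, ENNReal.ofReal (wYZ K h1 y (Ys i) z (Zs i)))⁻¹ •
    ∑ i ∈ Finset.range n, ENNReal.ofReal (wYZ K h1 y (Ys i) z (Zs i)) • Measure.dirac (Xs i)

/-- The estimated conditional distribution `P̃_{X | Z = z}` from `n` sample points. -/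
def condEstZ {dX dZ : ℕ} (K : ℝ → ℝ) (h2 : ℝ) (n : ℕ)
    (Xs : ℕ → Euc dX) (Zs : ℕ → Euc dZ) (z : Euc dZ) : Measure (Euc dX) :=
  (∑ i ∈ Finset.range n, ENNReal.ofReal (K (dist z (Zs i) / h2)))⁻¹ •
    ∑ i ∈ Finset.range n, ENNReal.ofReal (K (dist z (Zs i) / h2)) • Measure.dirac (Xs i)

/-- The regular conditional distribution `P_{X | Y = y, Z = z}`, given by the density
`x ↦ p(x,y,z) / p_{Y,Z}(y,z)`. -/
def condAtYZ {dX dY dZ : ℕ} (p : Euc dX → Euc dY → Euc dZ → ℝ)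
    (y : Euc dY) (z : Euc dZ) : Measure (Euc dX) :=
  volume.withDensity fun x => ENNReal.ofReal (p x y z / margYZ p y z)

/-- The regular conditional distribution `P_{X | Z = z}`, given by the density
`x ↦ p_{X,Z}(x,z) / p_Z(z)`. -/
def condAtZ {dX dY dZ : ℕ} (p : Euc dX → Euc dY → Euc dZ → ℝ) (z : Euc dZ) : Measure (Euc dX) :=
  volume.withDensity fun x => ENNReal.ofReal ((∫ y, p x y z) / margZ p z)

/-- `δ(x, y, z) = 1{‖x - z‖ ≤ ‖x - y‖}`. -/
def ballδ {d : ℕ} (x y z : Euc d) : ℝ := if dist x z ≤ dist x y then 1 else 0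

/-- `η(x, y, z, z') = δ(x,y,z) δ(x,y,z')`. -/
def ballη {d : ℕ} (x y z z' : Euc d) : ℝ := ballδ x y z * ballδ x y z'

/-- `φ_A`, one half of the ball divergence core function. -/
def ballφA {d : ℕ} (u1 u2 u3 u4 v3 v4 : Euc d) : ℝ :=
  ballη u1 u2 u3 u4 + ballη u1 u2 v3 v4 - ballη u1 u2 u3 v3 - ballη u1 u2 u4 v4

/-- The ball divergence core function `φ` of degree `(4, 4)`. -/
def ballφ {d : ℕ} (u v : Fin 4 → Euc d) : ℝ :=
  ballφA (u 0) (u 1) (u 2) (u 3) (v 2) (v 3) + ballφA (v 0) (v 1) (v 2) (v 3) (u 2) (u 3)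

/-- The symmetrized ball divergence core function `φ'`. -/
def ballφ' {d : ℕ} (u v : Fin 4 → Euc d) : ℝ :=
  ((Nat.factorial 4 * Nat.factorial 4 : ℕ) : ℝ)⁻¹ *
    ∑ τ : Equiv.Perm (Fin 4), ∑ σ : Equiv.Perm (Fin 4), ballφ (u ∘ τ) (v ∘ σ)


/-- The core function `φ_n` of the order-9 U-statistic: kernel weights relative to the first
coordinate times the symmetrized ball divergence core applied to the remaining eight points. -/
def ustatCore {dX dY dZ : ℕ} (K : ℝ → ℝ) (h1 h2 : ℝ)
    (v : Fin 9 → Euc dX × Euc dY × Euc dZ) : ℝ :=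
  (h1 ^ (4 * (dY + dZ)))⁻¹ * (h2 ^ (4 * dZ))⁻¹ *
    ((∏ l : Fin 4, wYZ K h1 (v 0).2.1 ((v ⟨l.val + 1, by have := l.isLt; omega⟩).2.1)
        (v 0).2.2 ((v ⟨l.val + 1, by have := l.isLt; omega⟩).2.2)) *
      (∏ l : Fin 4, K (dist (v 0).2.2 ((v ⟨l.val + 5, by have := l.isLt; omega⟩).2.2) / h2)) *
      ballφ' (fun k : Fin 4 => (v ⟨k.val + 1, by have := k.isLt; omega⟩).1)
        (fun k : Fin 4 => (v ⟨k.val + 5, by have := k.isLt; omega⟩).1))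

/-- The order-9 U-statistic `ζ̂*_n`, averaging the core `φ_n` over all 9-tuples of distinct
sample indices. -/
def ustat {dX dY dZ : ℕ} {Ω : Type} (K : ℝ → ℝ) (h1 h2 : ℝ) (n : ℕ)
    (Xs : ℕ → Ω → Euc dX) (Ys : ℕ → Ω → Euc dY) (Zs : ℕ → Ω → Euc dZ) (ω : Ω) : ℝ :=
  ((n.descFactorial 9 : ℕ) : ℝ)⁻¹ *
    ∑ i ∈ Finset.univ.filter (fun i : Fin 9 → Fin n => Function.Injective i),
      ustatCore K h1 h2 (fun k => (Xs (i k) ω, Ys (i k) ω, Zs (i k) ω))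

/-- Selecting coordinates along an injection pushes a product probability measure to the
corresponding product. -/
lemma mp_precomp {ι κ : Type*} [Fintype ι] [Fintype κ] {E : Type*} [MeasurableSpace E]
    (ν : ι → Measure E) [∀ i, IsProbabilityMeasure (ν i)] (e : κ → ι)
    (he : Function.Injective e) :
    MeasurePreserving (fun v : ι → E => fun k => v (e k)) (Measure.pi ν)
      (Measure.pi fun k => ν (e k)) := by
  refine ⟨by fun_prop, ?_⟩
  have h := iIndepFun_pi (μ := ν) (X := fun i (x : E) => x) (fun i => aemeasurable_id)
  have h2 := h.precomp he
  have h3 := (iIndepFun_iff_map_fun_eq_pi_map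
    (fun k => (measurable_pi_apply (e k)).aemeasurable)).1 h2
  rw [h3]
  congr 1
  funext k
  exact (measurePreserving_eval ν (e k)).map_eq

lemma integral_two_blocks {r : ℕ} {ι : Type*} [Fintype ι] {E : Type*} [MeasurableSpace E]
    (P : Measure E) [IsProbabilityMeasure P] (G : (Fin r → E) → ℝ) (hG : Measurable G)
    (i j : Fin r → ι) (hi : Function.Injective i) (hj : Function.Injective j)
    (hd : ∀ k l, i k ≠ j l) :
    ∫ v, G (fun k => v (i k)) * G (fun k => v (j k)) ∂(Measure.pi fun _ : ι => P)
      = (∫ v, G v ∂(Measure.pi fun _ : Fin r => P)) ^ 2 := by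
  have he : Function.Injective (Sum.elim i j) := by
    rw [Sum.elim_injective]; exact ⟨hi, hj, hd⟩
  have h1 := mp_precomp (fun _ : ι => P) (Sum.elim i j) he
  have h2 := measurePreserving_sumPiEquivProdPi (X := fun _ : Fin r ⊕ Fin r => E)
    (fun _ : Fin r ⊕ Fin r => P)
  have h3 := h2.comp h1
  rw [sq, ← integral_prod_mul, ← h3.map_eq, integral_map h3.measurable.aemeasurable]
  · rfl
  · exact ((hG.comp measurable_fst).mul (hG.comp measurable_snd)).aestronglyMeasurable

lemma integral_prod_bound {r : ℕ} {ι : Type*} [Fintype ι] {E : Type*} [MeasurableSpace E]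
    (P : Measure E) [IsProbabilityMeasure P] (g : Fin r → E → ℝ) (hg : ∀ l, Measurable (g l))
    (M C : ℝ) (hC : 1 ≤ C) (h0 : ∀ l x, 0 ≤ g l x) (hM : ∀ l x, g l x ≤ M)
    (hIntg : ∀ l, ∫ x, g l x ∂P ≤ C)
    (i j : Fin r → ι) (hi : Function.Injective i) (hj : Function.Injective j) :
    ∫ v, (∏ l, g l (v (i l))) * (∏ l, g l (v (j l))) ∂(Measure.pi fun _ : ι => P)
      ≤ C ^ (2 * r) * ∏ l, (open Classical in if j l ∈ Set.range i then M else 1) := by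
  classical
  have hP : P Set.univ = 1 := measure_univ
  obtain ⟨x0⟩ : Nonempty E := by
    by_contra hne
    rw [not_nonempty_iff] at hne
    simp [Set.eq_empty_of_isEmpty] at hP
  by_cases hr : r = 0
  · subst hr; simp
  have hM0 : 0 ≤ M := (h0 ⟨0, Nat.pos_of_ne_zero hr⟩ x0).trans (hM _ x0)
  let S := {l : Fin r // j l ∉ Set.range i}
  let e : Fin r ⊕ S → ι := Sum.elim i (fun s => j s.1)
  have he : Function.Injective e := by
    rw [Sum.elim_injective]
    refine ⟨hi, fun a b h => Subtype.ext (hj h), fun k l h => l.2 ⟨k, h⟩⟩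
  let f : Fin r ⊕ S → E → ℝ := Sum.elim g (fun s => g s.1)
  have h1 := mp_precomp (fun _ : ι => P) e he
  have hf0 : ∀ s x, 0 ≤ f s x := by
    rintro (s | s) x <;> simp [f, h0]
  have hfm : ∀ s, Measurable (f s) := by
    rintro (s | s) <;> simp [f, hg]
  have hfM : ∀ s x, f s x ≤ M := by
    rintro (s | s) x <;> simp [f, hM]
  have hfC : ∀ s, ∫ x, f s x ∂P ≤ C := by
    rintro (s | s) <;> simp [f, hIntg]
  have hprod : ∫ v, ∏ s, f s (v (e s)) ∂(Measure.pi fun _ : ι => P) = ∏ s, ∫ x, f s x ∂P := by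
    rw [← integral_fintype_prod_eq_prod, ← h1.map_eq, integral_map h1.measurable.aemeasurable]
    exact (Finset.measurable_fun_prod _
      (fun s _ => (hfm s).comp (measurable_pi_apply s))).aestronglyMeasurable
  have hpt : ∀ v : ι → E, (∏ l, g l (v (i l))) * (∏ l, g l (v (j l)))
      ≤ (∏ l, if j l ∈ Set.range i then M else 1) * ∏ s, f s (v (e s)) := by
    intro v
    have : ∏ s, f s (v (e s)) = (∏ l, g l (v (i l))) *
        ∏ l, if j l ∈ Set.range i then 1 else g l (v (j l)) := by
      rw [Fintype.prod_sum_type]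
      congr 1
      simp only [f, e, Sum.elim_inr]
      rw [Finset.prod_ite]
      simp only [Finset.prod_const_one, one_mul]
      rw [← Finset.prod_subtype_eq_prod_filter]
      simp only [Finset.subtype_univ]
      rfl
    rw [this, mul_left_comm]
    refine mul_le_mul_of_nonneg_left ?_ (Finset.prod_nonneg fun l _ => h0 _ _)
    rw [← Finset.prod_mul_distrib]
    refine Finset.prod_le_prod (fun l _ => h0 _ _) (fun l _ => ?_)
    split_ifs <;> simp [hM]
  have hfint : Integrable (fun v : ι → E => ∏ s, f s (v (e s))) (Measure.pi fun _ : ι => P) := by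
    refine Integrable.of_bound (C := ∏ s : Fin r ⊕ S, M) ?_ (ae_of_all _ fun v => ?_)
    · exact (Finset.measurable_fun_prod _
        (fun s _ => (hfm s).comp (measurable_pi_apply _))).aestronglyMeasurable
    · rw [Real.norm_of_nonneg (Finset.prod_nonneg fun s _ => hf0 _ _)]
      exact Finset.prod_le_prod (fun s _ => hf0 _ _) (fun s _ => hfM _ _)
  calc _ ≤ ∫ v, (∏ l, if j l ∈ Set.range i then M else 1) * ∏ s, f s (v (e s))
          ∂(Measure.pi fun _ : ι => P) := by
        refine integral_mono_of_nonneg (ae_of_all _ fun v => ?_) (hfint.const_mul _)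
          (ae_of_all _ hpt)
        exact mul_nonneg (Finset.prod_nonneg fun l _ => h0 _ _)
          (Finset.prod_nonneg fun l _ => h0 _ _)
    _ = (∏ l, if j l ∈ Set.range i then M else 1) * ∏ s, ∫ x, f s x ∂P := by
        rw [integral_const_mul, hprod]
    _ ≤ (∏ l, if j l ∈ Set.range i then M else 1) * C ^ (2 * r) := by
        refine mul_le_mul_of_nonneg_left ?_ (Finset.prod_nonneg fun l _ => ?_)
        · calc ∏ s, ∫ x, f s x ∂P ≤ ∏ s : Fin r ⊕ S, C :=
                Finset.prod_le_prod (fun s _ => integral_nonneg (hf0 s)) (fun s _ => hfC s)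
            _ = C ^ (Fintype.card (Fin r ⊕ S)) := by simp
            _ ≤ C ^ (2 * r) := by
                refine pow_le_pow_right₀ hC ?_
                rw [Fintype.card_sum, two_mul]
                have hc := Fintype.card_subtype_le (fun l : Fin r => j l ∉ Set.range i)
                simp only [Fintype.card_fin] at hc ⊢
                exact Nat.add_le_add_left hc _
        · split_ifs <;> simp [hM0]
    _ = _ := mul_comm _ _

lemma integral_abs_le_sqrt_of_sq {Ω : Type*} [MeasurableSpace Ω] (μ : Measure Ω)
    [IsProbabilityMeasure μ] (f : Ω → ℝ) (hf : Measurable f) (B V : ℝ) (hB : ∀ x, |f x| ≤ B)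
    (hV : ∫ x, f x ^ 2 ∂μ ≤ V) : ∫ x, |f x| ∂μ ≤ Real.sqrt V := by
  have h1 : Integrable (fun x => |f x|) μ :=
    Integrable.of_bound hf.abs.aestronglyMeasurable B (ae_of_all _ fun x => by simpa using hB x)
  have h2 : Integrable (fun x => f x ^ 2) μ :=
    Integrable.of_bound (hf.pow_const 2).aestronglyMeasurable (B ^ 2) (ae_of_all _ fun x => by
      rw [Real.norm_eq_abs, abs_pow]
      exact pow_le_pow_left₀ (abs_nonneg _) (hB x) 2)
  apply Real.le_sqrt_of_sq_le
  set c := ∫ x, |f x| ∂μ with hc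
  have h3 : 0 ≤ ∫ x, (|f x| - c) ^ 2 ∂μ := integral_nonneg fun x => sq_nonneg _
  have h4 : ∫ x, (|f x| - c) ^ 2 ∂μ = ∫ x, (f x ^ 2 - 2 * c * |f x| + c ^ 2) ∂μ := by
    congr 1; funext x
    rw [sub_sq, sq_abs]; ring
  have h5 : Integrable (fun x => 2 * c * |f x|) μ := h1.const_mul _
  have h6 : Integrable (fun x => f x ^ 2 - 2 * c * |f x|) μ := h2.sub h5
  rw [h4, integral_add h6 (integrable_const _), integral_sub h2 h5, integral_const_mul, ← hc] at h3
  simp at h3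
  nlinarith

lemma integral_cov_expand {Ω : Type*} [MeasurableSpace Ω] (μ : Measure Ω)
    [IsProbabilityMeasure μ] (f g : Ω → ℝ) (hf : Integrable f μ) (hg : Integrable g μ)
    (hfg : Integrable (fun x => f x * g x) μ) (θ : ℝ) (h1 : ∫ x, f x ∂μ = θ)
    (h2 : ∫ x, g x ∂μ = θ) :
    ∫ x, (f x - θ) * (g x - θ) ∂μ = (∫ x, f x * g x ∂μ) - θ ^ 2 := by
  have e : ∀ x, (f x - θ) * (g x - θ) = f x * g x - θ * f x - θ * g x + θ ^ 2 := fun x => by ring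
  have a1 : Integrable (fun x => θ * f x) μ := hf.const_mul _
  have a2 : Integrable (fun x => θ * g x) μ := hg.const_mul _
  have a3 : Integrable (fun x => f x * g x - θ * f x) μ := hfg.sub a1
  have a4 : Integrable (fun x => f x * g x - θ * f x - θ * g x) μ := a3.sub a2
  simp only [e]
  rw [integral_add a4 (integrable_const _), integral_sub a3 a2, integral_sub hfg a1,
    integral_const_mul, integral_const_mul, h1, h2]
  simp
  ring

lemma sum_range_weight {r N : ℕ} (i : Fin r → Fin N) (hi : Function.Injective i) (a : ℝ) :
    ∑ k : Fin N, (open Classical in if k ∈ Set.range i then a else 1) = (N : ℝ) - r + r * a := by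
  classical
  have h1 : ∀ k : Fin N, (if k ∈ Set.range i then a else 1)
      = 1 + (if k ∈ Finset.univ.image i then (a - 1) else 0) := by
    intro k
    simp only [Set.mem_range, Finset.mem_image, Finset.mem_univ, true_and]
    split_ifs <;> ring
  simp only [h1]
  rw [Finset.sum_add_distrib, Finset.sum_ite_mem, Finset.univ_inter, Finset.sum_const,
    Finset.sum_const, Finset.card_image_of_injective _ hi]
  simp
  ring

/-- The `L¹` error of an (order `r`) U-statistic whose core is dominated by a product of functions
with bounded expectations and sup norm at most `M`. -/
lemma ustat_L1_bound {r N : ℕ} (hN : r ≤ N) {E : Type*} [MeasurableSpace E]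
    (P : Measure E) [IsProbabilityMeasure P] (G : (Fin r → E) → ℝ) (hG : Measurable G)
    (g : Fin r → E → ℝ) (hg : ∀ l, Measurable (g l))
    (M C : ℝ) (hC : 1 ≤ C) (hM0 : 0 ≤ M) (h0 : ∀ l x, 0 ≤ g l x) (hM : ∀ l x, g l x ≤ M)
    (hIntg : ∀ l, ∫ x, g l x ∂P ≤ C) (hGg : ∀ v, |G v| ≤ ∏ l, g l (v l)) :
    ∫ v, |((N.descFactorial r : ℕ) : ℝ)⁻¹ *
        (∑ i ∈ Finset.univ.filter (fun i : Fin r → Fin N => Function.Injective i),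
          G (fun k => v (i k))) - ∫ v, G v ∂(Measure.pi fun _ : Fin r => P)|
        ∂(Measure.pi fun _ : Fin N => P)
      ≤ Real.sqrt (((N.descFactorial r : ℕ) : ℝ)⁻¹ *
          (C ^ (2 * r) * (((N : ℝ) - r + r * M) ^ r - ((N : ℝ) - r) ^ r))) := by
  classical
  set D : ℝ := ((N.descFactorial r : ℕ) : ℝ) with hD
  set I := Finset.univ.filter (fun i : Fin r → Fin N => Function.Injective i) with hI
  set θ := ∫ v, G v ∂(Measure.pi fun _ : Fin r => P) with hθ
  set S : ℝ := C ^ (2 * r) * (((N : ℝ) - r + r * M) ^ r - ((N : ℝ) - r) ^ r) with hS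
  have hDpos : 0 < D := by
    rw [hD]; exact_mod_cast Nat.descFactorial_pos.2 hN
  have hcard : (I.card : ℝ) = D := by
    rw [hD, hI, ← Fintype.card_subtype]
    have := Fintype.card_embedding_eq (α := Fin r) (β := Fin N)
    rw [Fintype.card_fin, Fintype.card_fin] at this
    rw [← this]
    exact_mod_cast Fintype.card_congr (Equiv.subtypeInjectiveEquivEmbedding (Fin r) (Fin N))
  have hGB : ∀ v, |G v| ≤ M ^ r := fun v => (hGg v).trans <| by
    calc ∏ l, g l (v l) ≤ ∏ l : Fin r, M :=
          Finset.prod_le_prod (fun s _ => h0 _ _) (fun s _ => hM _ _)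
      _ = M ^ r := by simp
  have hsel : ∀ i : Fin r → Fin N, Measurable (fun v : Fin N → E => fun k => v (i k)) :=
    fun i => by fun_prop
  have hFm : ∀ i : Fin r → Fin N, Measurable (fun v : Fin N → E => G (fun k => v (i k))) :=
    fun i => hG.comp (hsel i)
  have hFint : ∀ i : Fin r → Fin N,
      Integrable (fun v : Fin N → E => G (fun k => v (i k))) (Measure.pi fun _ : Fin N => P) :=
    fun i => Integrable.of_bound (hFm i).aestronglyMeasurable _ (ae_of_all _ fun v => hGB _)
  have hFFint : ∀ i j : Fin r → Fin N,
      Integrable (fun v : Fin N → E => G (fun k => v (i k)) * G (fun k => v (j k)))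
        (Measure.pi fun _ : Fin N => P) :=
    fun i j => (hFint i).mul_bdd (hFm j).aestronglyMeasurable (ae_of_all _ fun v => hGB _)
  have hFmean : ∀ i ∈ I, ∫ v, G (fun k => v (i k)) ∂(Measure.pi fun _ : Fin N => P) = θ := by
    intro i hi
    have h1 := mp_precomp (fun _ : Fin N => P) i (by simpa [hI] using hi)
    rw [hθ, ← h1.map_eq, integral_map h1.measurable.aemeasurable hG.aestronglyMeasurable]
  have hcov : ∀ i ∈ I, ∀ j ∈ I,
      ∫ v, (G (fun k => v (i k)) - θ) * (G (fun k => v (j k)) - θ) ∂(Measure.pi fun _ : Fin N => P)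
        ≤ C ^ (2 * r) * ((∏ l, if j l ∈ Set.range i then M else 1)
          - ∏ l, if j l ∈ Set.range i then 0 else 1) := by
    intro i hi j hj
    have hi' : Function.Injective i := by simpa [hI] using hi
    have hj' : Function.Injective j := by simpa [hI] using hj
    have hexp : ∫ v, (G (fun k => v (i k)) - θ) * (G (fun k => v (j k)) - θ)
        ∂(Measure.pi fun _ : Fin N => P)
        = (∫ v, G (fun k => v (i k)) * G (fun k => v (j k)) ∂(Measure.pi fun _ : Fin N => P))
          - θ ^ 2 :=
      integral_cov_expand _ _ _ (hFint i) (hFint j) (hFFint i j) θ (hFmean i hi) (hFmean j hj)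
    rw [hexp]
    by_cases hd : ∀ l, j l ∉ Set.range i
    · simp only [hd, if_false, Finset.prod_const_one, sub_self, mul_zero]
      rw [integral_two_blocks P G hG i j hi' hj' (fun k l h => hd l ⟨k, h⟩)]
      simp [hθ]
    · push Not at hd
      obtain ⟨l0, hl0⟩ := hd
      have hz : (∏ l, if j l ∈ Set.range i then (0 : ℝ) else 1) = 0 :=
        Finset.prod_eq_zero (Finset.mem_univ l0) (by rw [if_pos hl0])
      rw [hz, sub_zero]
      have hb := integral_prod_bound P g hg M C hC h0 hM hIntg i j hi' hj'
      refine le_trans ?_ (hb.trans_eq (by congr!))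
      have hle : ∫ v, G (fun k => v (i k)) * G (fun k => v (j k)) ∂(Measure.pi fun _ : Fin N => P)
          ≤ ∫ v, (∏ l, g l (v (i l))) * (∏ l, g l (v (j l))) ∂(Measure.pi fun _ : Fin N => P) := by
        refine integral_mono (hFFint i j) ?_ ?_
        · refine Integrable.of_bound (C := M ^ r * M ^ r) ?_ (ae_of_all _ fun v => ?_)
          · exact ((Finset.measurable_fun_prod _
              (fun s _ => (hg s).comp (measurable_pi_apply _))).mul (Finset.measurable_fun_prod _
              (fun s _ => (hg s).comp (measurable_pi_apply _)))).aestronglyMeasurable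
          · have hk : ∀ i : Fin r → Fin N, ∏ l, g l (v (i l)) ≤ M ^ r := fun i => by
              calc ∏ l, g l (v (i l)) ≤ ∏ l : Fin r, M :=
                    Finset.prod_le_prod (fun s _ => h0 _ _) (fun s _ => hM _ _)
                _ = M ^ r := by simp
            have hk0 : ∀ i : Fin r → Fin N, 0 ≤ ∏ l, g l (v (i l)) :=
              fun i => Finset.prod_nonneg fun _ _ => h0 _ _
            rw [Real.norm_of_nonneg (mul_nonneg (hk0 _) (hk0 _))]
            exact mul_le_mul (hk i) (hk j) (hk0 _) (pow_nonneg hM0 _)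
        · intro v
          refine (le_abs_self _).trans ?_
          rw [abs_mul]
          exact mul_le_mul (hGg _) (hGg _) (abs_nonneg _)
            (Finset.prod_nonneg fun _ _ => h0 _ _)
      linarith [sq_nonneg θ]
  have hsum : ∀ i ∈ I, ∑ j ∈ I, ∫ v, (G (fun k => v (i k)) - θ) * (G (fun k => v (j k)) - θ)
      ∂(Measure.pi fun _ : Fin N => P) ≤ S := by
    intro i hi
    have hi' : Function.Injective i := by simpa [hI] using hi
    refine (Finset.sum_le_sum (hcov i hi)).trans ?_
    rw [← Finset.mul_sum, hS]
    refine mul_le_mul_of_nonneg_left ?_ (by positivity)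
    refine (Finset.sum_le_sum_of_subset_of_nonneg (Finset.subset_univ I) ?_).trans ?_
    · intro j _ _
      rw [sub_nonneg]
      by_cases hd : ∀ l, j l ∉ Set.range i
      · simp [hd]
      · push Not at hd
        obtain ⟨l0, hl0⟩ := hd
        rw [Finset.prod_eq_zero (Finset.mem_univ l0) (by rw [if_pos hl0])]
        exact Finset.prod_nonneg fun l _ => by split_ifs <;> simp [hM0]
    · rw [Finset.sum_sub_distrib]
      have hw : ∀ a : ℝ, ∑ j : Fin r → Fin N, ∏ l, (if j l ∈ Set.range i then a else 1)
          = ((N : ℝ) - r + r * a) ^ r := by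
        intro a
        have := (Finset.sum_pow' (Finset.univ : Finset (Fin N))
          (fun k => if k ∈ Set.range i then a else 1) r).symm
        rw [sum_range_weight i hi' a] at this
        rw [← this]
        simp
      rw [hw, hw]
      simp
  have hmain : ∀ v : Fin N → E, D⁻¹ * (∑ i ∈ I, G (fun k => v (i k))) - θ
      = D⁻¹ * ∑ i ∈ I, (G (fun k => v (i k)) - θ) := by
    intro v
    rw [Finset.sum_sub_distrib, Finset.sum_const, nsmul_eq_mul, hcard, mul_sub, ← mul_assoc,
      inv_mul_cancel₀ hDpos.ne', one_mul]
  have hθB : |θ| ≤ M ^ r := by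
    rw [hθ]
    have h := norm_integral_le_of_norm_le_const (μ := Measure.pi fun _ : Fin r => P)
      (f := G) (C := M ^ r) (ae_of_all _ hGB)
    simpa using h
  refine integral_abs_le_sqrt_of_sq _ _ ?_ (D⁻¹ * ∑ i ∈ I, (2 * M ^ r)) _ ?_ ?_
  · exact ((Finset.measurable_fun_sum _ fun i _ => hFm i).const_mul _).sub_const _
  · intro v
    rw [hmain, abs_mul, abs_of_pos (inv_pos.2 hDpos)]
    refine mul_le_mul_of_nonneg_left ?_ (inv_pos.2 hDpos).le
    refine (Finset.abs_sum_le_sum_abs _ _).trans (Finset.sum_le_sum fun i _ => ?_)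
    refine (abs_sub _ _).trans ?_
    linarith [hGB (fun k => v (i k))]
  · have hsq : ∀ v : Fin N → E, (D⁻¹ * (∑ i ∈ I, G (fun k => v (i k))) - θ) ^ 2
        = (D⁻¹) ^ 2 * ∑ i ∈ I, ∑ j ∈ I, (G (fun k => v (i k)) - θ) * (G (fun k => v (j k)) - θ) := by
      intro v
      rw [hmain, mul_pow, sq (∑ i ∈ I, _), Finset.sum_mul_sum]
    have hint2 : ∀ i j : Fin r → Fin N, Integrable (fun v : Fin N → E =>
        (G (fun k => v (i k)) - θ) * (G (fun k => v (j k)) - θ))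
        (Measure.pi fun _ : Fin N => P) := fun i j =>
      ((hFint i).sub (integrable_const θ)).mul_bdd (c := M ^ r + |θ|)
        ((hFm j).sub_const θ).aestronglyMeasurable
        (ae_of_all _ fun v => (abs_sub _ _).trans (by linarith [hGB (fun k => v (j k))]))
    simp only [hsq]
    rw [integral_const_mul, integral_finsetSum _ (fun i _ => integrable_finsetSum _
      fun j _ => hint2 i j)]
    have : ∀ i ∈ I, ∫ v, ∑ j ∈ I, (G (fun k => v (i k)) - θ) * (G (fun k => v (j k)) - θ)
        ∂(Measure.pi fun _ : Fin N => P) ≤ S := by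
      intro i hi
      rw [integral_finsetSum _ (fun j _ => hint2 i j)]
      exact hsum i hi
    calc (D⁻¹) ^ 2 * ∑ i ∈ I, _ ≤ (D⁻¹) ^ 2 * ∑ i ∈ I, S :=
          mul_le_mul_of_nonneg_left (Finset.sum_le_sum this) (by positivity)
      _ = D⁻¹ * S := by
          rw [Finset.sum_const, nsmul_eq_mul, hcard]
          field_simp

lemma bound_tendsto (r : ℕ) (C : ℝ) (M : ℕ → ℝ) (hM0 : ∀ n, 0 ≤ M n)
    (hM : Tendsto (fun n : ℕ => M n / n) atTop (𝓝 0)) :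
    Tendsto (fun N : ℕ => Real.sqrt (((N.descFactorial r : ℕ) : ℝ)⁻¹ *
          (C ^ (2 * r) * (((N : ℝ) - r + r * M N) ^ r - ((N : ℝ) - r) ^ r)))) atTop (𝓝 0) := by
  have h1 : Tendsto (fun N : ℕ => (N : ℝ) / ((N : ℝ) - r)) atTop (𝓝 1) := by
    have := tendsto_natCast_div_add_atTop (𝕜 := ℝ) (-(r : ℝ))
    simpa [sub_eq_add_neg] using this
  have h2 : Tendsto (fun N : ℕ => Real.sqrt (C ^ (2 * r) *
      ((1 + r * (M N / N * (N / ((N : ℝ) - r)))) ^ r - 1))) atTop (𝓝 0) := by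
    have h3 := (((((hM.mul h1).const_mul (r : ℝ)).const_add 1).pow r).sub_const 1).const_mul
      (C ^ (2 * r))
    have h4 := (Real.continuous_sqrt.tendsto _).comp h3
    simpa [Function.comp_def] using h4
  refine squeeze_zero' (Eventually.of_forall fun _ => Real.sqrt_nonneg _) ?_ h2
  filter_upwards [eventually_gt_atTop r] with N hN
  apply Real.sqrt_le_sqrt
  have hNr : (0 : ℝ) < (N : ℝ) - r := by
    have : (r : ℝ) < N := by exact_mod_cast hN
    linarith
  have hN0 : (0 : ℝ) < N := by
    have : 0 < N := by omega
    exact_mod_cast this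
  have hD : ((N : ℝ) - r) ^ r ≤ ((N.descFactorial r : ℕ) : ℝ) := by
    have h := Nat.pow_sub_le_descFactorial N r
    have h' : (((N + 1 - r : ℕ) : ℝ)) ^ r ≤ ((N.descFactorial r : ℕ) : ℝ) := by exact_mod_cast h
    refine le_trans (pow_le_pow_left₀ hNr.le ?_ r) h'
    rw [Nat.cast_sub (by omega)]
    push_cast
    linarith
  have hA : 0 ≤ C ^ (2 * r) * (((N : ℝ) - r + r * M N) ^ r - ((N : ℝ) - r) ^ r) := by
    refine mul_nonneg (by rw [pow_mul]; positivity) ?_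
    rw [sub_nonneg]
    refine pow_le_pow_left₀ hNr.le ?_ r
    have := mul_nonneg (Nat.cast_nonneg (α := ℝ) r) (hM0 N)
    linarith
  calc _ ≤ (((N : ℝ) - r) ^ r)⁻¹ * (C ^ (2 * r) * (((N : ℝ) - r + r * M N) ^ r
        - ((N : ℝ) - r) ^ r)) :=
      mul_le_mul_of_nonneg_right (inv_anti₀ (by positivity) hD) hA
    _ = C ^ (2 * r) * ((((N : ℝ) - r + r * M N) / ((N : ℝ) - r)) ^ r - 1) := by
      rw [div_pow]
      field_simp
    _ = _ := by
      congr 4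
      field_simp

lemma pi_withDensity_real {ι : Type*} [Fintype ι] {X : Type*} [MeasurableSpace X]
    (ν : ι → Measure X) [∀ l, SigmaFinite (ν l)] (f : ι → X → ℝ) 
    (hf0 : ∀ l x, 0 ≤ f l x) (hfi : ∀ l, Integrable (f l) (ν l)) :
    Measure.pi (fun l => (ν l).withDensity fun x => ENNReal.ofReal (f l x))
      = (Measure.pi ν).withDensity fun x => ENNReal.ofReal (∏ l, f l (x l)) := by
  classical
  refine Measure.pi_eq fun s hs => ?_
  rw [withDensity_apply _ (MeasurableSet.univ_pi hs), ← lintegral_indicator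
    (MeasurableSet.univ_pi hs)]
  have h1 : ∀ x : ι → X, (Set.univ.pi s).indicator
      (fun x => ENNReal.ofReal (∏ l, f l (x l))) x
      = ENNReal.ofReal (∏ l, (s l).indicator (f l) (x l)) := by
    intro x
    by_cases hx : x ∈ Set.univ.pi s
    · rw [Set.indicator_of_mem hx]
      congr 1
      refine Finset.prod_congr rfl fun l _ => ?_
      rw [Set.indicator_of_mem (hx l (Set.mem_univ l))]
    · rw [Set.indicator_of_notMem hx]
      simp only [Set.mem_pi, Set.mem_univ, true_implies, not_forall] at hx
      obtain ⟨l, hl⟩ := hx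
      rw [Finset.prod_eq_zero (Finset.mem_univ l) (Set.indicator_of_notMem hl _)]
      simp
  have hn : ∀ l x, 0 ≤ (s l).indicator (f l) x := fun l x =>
    Set.indicator_nonneg (fun x _ => hf0 l x) x
  have hi : ∀ l, Integrable ((s l).indicator (f l)) (ν l) := fun l => (hfi l).indicator (hs l)
  simp only [h1]
  rw [← ofReal_integral_eq_lintegral_ofReal (Integrable.fintype_prod hi)
    (ae_of_all _ fun x => Finset.prod_nonneg fun l _ => hn l _), integral_fintype_prod_eq_prod,
    ENNReal.ofReal_prod_of_nonneg (fun l _ => integral_nonneg (hn l))]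
  refine Finset.prod_congr rfl fun l _ => ?_
  rw [ofReal_integral_eq_lintegral_ofReal (hi l) (ae_of_all _ (hn l)), withDensity_apply _ (hs l),
    ← lintegral_indicator (hs l)]
  congr 1
  funext x
  by_cases hx : x ∈ s l <;> simp [hx]

lemma tele_prod {ι : Type*} [DecidableEq ι] (s : Finset ι) (a b : ι → ℝ) :
    |∏ k ∈ s, a k - ∏ k ∈ s, b k| ≤
      ∑ l ∈ s, ∏ k ∈ s, (if k = l then |a k - b k| else |a k| + |b k|) := by
  induction s using Finset.induction_on with
  | empty => simp
  | insert x s hx ih =>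
    rw [Finset.prod_insert hx, Finset.prod_insert hx, Finset.sum_insert hx, Finset.prod_insert hx,
      if_pos rfl]
    have e : a x * ∏ k ∈ s, a k - b x * ∏ k ∈ s, b k
        = (a x - b x) * ∏ k ∈ s, b k + a x * (∏ k ∈ s, a k - ∏ k ∈ s, b k) := by ring
    rw [e]
    refine (abs_add_le _ _).trans (add_le_add ?_ ?_)
    · rw [abs_mul, Finset.abs_prod]
      refine mul_le_mul_of_nonneg_left (Finset.prod_le_prod (fun _ _ => abs_nonneg _) ?_)
        (abs_nonneg _)
      intro k hk
      have hkx : k ≠ x := fun h => hx (h ▸ hk)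
      rw [if_neg hkx]
      linarith [abs_nonneg (a k)]
    · rw [abs_mul]
      refine (mul_le_mul_of_nonneg_left ih (abs_nonneg _)).trans ?_
      rw [Finset.mul_sum]
      refine Finset.sum_le_sum fun l hl => ?_
      have hlx : x ≠ l := fun h => hx (h ▸ hl)
      rw [Finset.prod_insert hx, if_neg hlx]
      refine mul_le_mul_of_nonneg_right (by linarith [abs_nonneg (b x)])
        (Finset.prod_nonneg fun k _ => ?_)
      split_ifs <;> positivity

lemma theta_diff {ι : Type*} [Fintype ι] {X : Type*} [MeasurableSpace X]
    (ν : Measure X) [SigmaFinite ν] (φ : (ι → X) → ℝ) (hφ : Measurable φ) (B C : ℝ)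
    (hB : ∀ x, |φ x| ≤ B) (hC : 1 ≤ C) (a b : ι → X → ℝ)
    (ha0 : ∀ l x, 0 ≤ a l x) (hb0 : ∀ l x, 0 ≤ b l x)
    (hai : ∀ l, Integrable (a l) ν) (hbi : ∀ l, Integrable (b l) ν)
    (haC : ∀ l, ∫ x, a l x ∂ν ≤ C) (hbC : ∀ l, ∫ x, b l x ∂ν ≤ C) :
    |(∫ x, φ x * ∏ l, a l (x l) ∂(Measure.pi fun _ : ι => ν))
      - ∫ x, φ x * ∏ l, b l (x l) ∂(Measure.pi fun _ : ι => ν)|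
      ≤ B * (2 * C) ^ (Fintype.card ι) * ∑ l, ∫ x, |a l x - b l x| ∂ν := by
  classical
  have hpa : Integrable (fun x : ι → X => ∏ l, a l (x l)) (Measure.pi fun _ : ι => ν) :=
    Integrable.fintype_prod hai
  have hpb : Integrable (fun x : ι → X => ∏ l, b l (x l)) (Measure.pi fun _ : ι => ν) :=
    Integrable.fintype_prod hbi
  by_cases hX : IsEmpty (ι → X)
  · simp only [Measure.eq_zero_of_isEmpty, integral_zero_measure, sub_self, abs_zero]
    rcases isEmpty_or_nonempty X with hx | hx
    · simp [Measure.eq_zero_of_isEmpty]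
    · exact absurd hX (not_isEmpty_iff.2 inferInstance)
  rw [not_isEmpty_iff] at hX
  obtain ⟨x0⟩ := hX
  have hB0 : 0 ≤ B := (abs_nonneg _).trans (hB x0)
  rw [← integral_sub (hpa.bdd_mul hφ.aestronglyMeasurable (ae_of_all _ hB))
    (hpb.bdd_mul hφ.aestronglyMeasurable (ae_of_all _ hB))]
  let c : ι → ι → X → ℝ := fun l k x => if k = l then |a k x - b k x| else |a k x| + |b k x|
  have hci : ∀ l k, Integrable (c l k) ν := by
    intro l k
    simp only [c]
    split_ifs
    · exact ((hai k).sub (hbi k)).abs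
    · exact (hai k).abs.add (hbi k).abs
  have hc0 : ∀ l k x, 0 ≤ c l k x := by
    intro l k x
    simp only [c]
    split_ifs <;> positivity
  have hcp : ∀ l, Integrable (fun x : ι → X => ∏ k, c l k (x k)) (Measure.pi fun _ : ι => ν) :=
    fun l => Integrable.fintype_prod (hci l)
  have hcb : ∀ l, ∏ k, ∫ x, c l k x ∂ν ≤ (2 * C) ^ (Fintype.card ι) * ∫ x, |a l x - b l x| ∂ν := by
    intro l
    rw [← Finset.mul_prod_erase _ _ (Finset.mem_univ l), mul_comm]
    have e : ∫ x, c l l x ∂ν = ∫ x, |a l x - b l x| ∂ν := by simp [c]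
    rw [e]
    refine mul_le_mul_of_nonneg_right ?_ (integral_nonneg fun _ => abs_nonneg _)
    calc ∏ k ∈ Finset.univ.erase l, ∫ x, c l k x ∂ν
        ≤ ∏ k ∈ Finset.univ.erase l, (2 * C) := by
          refine Finset.prod_le_prod (fun k _ => integral_nonneg (hc0 l k)) fun k hk => ?_
          have : ∀ x, c l k x = a k x + b k x := fun x => by
            simp only [c]
            rw [if_neg (Finset.ne_of_mem_erase hk), abs_of_nonneg (ha0 k x),
              abs_of_nonneg (hb0 k x)]
          simp only [this]
          rw [integral_add (hai k) (hbi k)]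
          linarith [haC k, hbC k]
      _ = (2 * C) ^ (Finset.univ.erase l).card := by simp
      _ ≤ _ := pow_le_pow_right₀ (by linarith) (Finset.card_le_univ _)
  calc _ ≤ ∫ x : ι → X, |φ x * ∏ l, a l (x l) - φ x * ∏ l, b l (x l)|
        ∂(Measure.pi fun _ : ι => ν) := abs_integral_le_integral_abs
    _ ≤ ∫ x : ι → X, B * ∑ l, ∏ k, c l k (x k) ∂(Measure.pi fun _ : ι => ν) := by
        refine integral_mono_of_nonneg (ae_of_all _ fun x => abs_nonneg _)
          ((integrable_finsetSum _ fun l _ => hcp l).const_mul _) (ae_of_all _ fun x => ?_)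
        simp only
        rw [← mul_sub, abs_mul]
        exact mul_le_mul (hB x) (tele_prod Finset.univ (fun l => a l (x l)) (fun l => b l (x l)))
          (abs_nonneg _) hB0
    _ = B * ∑ l, ∏ k, ∫ x, c l k x ∂ν := by
        rw [integral_const_mul, integral_finsetSum _ (fun l _ => hcp l)]
        congr 1
        exact Finset.sum_congr rfl fun l _ => integral_fintype_prod_eq_prod (fun k => c l k)
    _ ≤ B * ∑ l, (2 * C) ^ (Fintype.card ι) * ∫ x, |a l x - b l x| ∂ν :=
        mul_le_mul_of_nonneg_left (Finset.sum_le_sum fun l _ => hcb l) hB0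
    _ = _ := by rw [← Finset.mul_sum, mul_assoc]

/-- Kernel smoothing in the second variable. -/
def smoothK {X V : Type*} [NormedAddCommGroup V] [NormedSpace ℝ V] [MeasureSpace V]
    (g : V → ℝ) (f : X × V → ℝ) (h : ℝ) (x : X) (w : V) : ℝ :=
  ∫ u : V, g u * f (x, w - h • u)

lemma translation_L1 {X V : Type*} [NormedAddCommGroup X] [NormedSpace ℝ X]
    [FiniteDimensional ℝ X] [MeasureSpace X] [BorelSpace X]
    [(volume : Measure X).IsAddHaarMeasure]
    [NormedAddCommGroup V] [NormedSpace ℝ V] [FiniteDimensional ℝ V] [MeasureSpace V] [BorelSpace V]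
    [(volume : Measure V).IsAddHaarMeasure]
    (f : X × V → ℝ) (hf : Integrable f (volume.prod volume)) :
    Tendsto (fun v : V => ∫⁻ q : X × V, ‖f (q.1, q.2 - v) - f q‖ₑ ∂(volume.prod volume))
      (𝓝 0) (𝓝 0) := by
  have : ProperSpace X := FiniteDimensional.proper ℝ X
  have : ProperSpace V := FiniteDimensional.proper ℝ V
  have hmem : MemLp f 1 (volume.prod volume) := memLp_one_iff_integrable.2 hf
  let T : C(V × (X × V), X × V) := ⟨fun a => (a.2.1, a.2.2 - a.1), by fun_prop⟩
  let g : V → C(X × V, X × V) := T.curry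
  have hgc : Continuous g := T.curry.continuous
  have hgm : ∀ v, MeasurePreserving (g v) ((volume : Measure X).prod (volume : Measure V))
      (volume.prod volume) := by
    intro v
    exact (MeasurePreserving.id volume).prod (measurePreserving_sub_right volume v)
  have h := Filter.Tendsto.compMeasurePreservingLp (f := fun _ : V => hmem.toLp f)
    (tendsto_const_nhds) (hgc.tendsto 0) hgm (hgm 0) (by simp)
  rw [tendsto_iff_edist_tendsto_0] at h
  refine h.congr fun v => ?_
  rw [Lp.toLp_compMeasurePreserving, Lp.toLp_compMeasurePreserving, Lp.edist_toLp_toLp,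
    eLpNorm_one_eq_lintegral_enorm]
  refine lintegral_congr fun q => ?_
  simp [g, T]

lemma smoothK_tendsto {X V : Type*} [NormedAddCommGroup X] [NormedSpace ℝ X]
    [FiniteDimensional ℝ X] [MeasureSpace X] [BorelSpace X]
    [(volume : Measure X).IsAddHaarMeasure]
    [NormedAddCommGroup V] [NormedSpace ℝ V] [FiniteDimensional ℝ V] [MeasureSpace V] [BorelSpace V]
    [(volume : Measure V).IsAddHaarMeasure]
    (f : X × V → ℝ) (hfm : Measurable f) (hf : Integrable f (volume.prod volume))
    (C : ℝ) (hfC : ∀ q, |f q| ≤ C) (g : V → ℝ) (hgm : Measurable g) (hgi : Integrable g)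
    (hg1 : ∫ u, g u = 1) (h : ℕ → ℝ) (hh : Tendsto h atTop (𝓝 0)) :
    Tendsto (fun n => ∫⁻ q : X × V, ‖smoothK g f (h n) q.1 q.2 - f q‖ₑ ∂(volume.prod volume))
      atTop (𝓝 0) := by
  have : ProperSpace X := FiniteDimensional.proper ℝ X
  have : ProperSpace V := FiniteDimensional.proper ℝ V
  let Φ : V → ℝ≥0∞ := fun v => ∫⁻ q : X × V, ‖f (q.1, q.2 - v) - f q‖ₑ ∂(volume.prod volume)
  have hΦ : Tendsto Φ (𝓝 0) (𝓝 0) := translation_L1 f hf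
  have hmeas : ∀ c : ℝ, Measurable (fun a : V × (X × V) =>
      ‖f (a.2.1, a.2.2 - c • a.1) - f a.2‖ₑ) := by
    intro c
    refine Measurable.enorm (Measurable.sub (hfm.comp ?_) (hfm.comp measurable_snd))
    fun_prop
  have hΦb : ∀ v, Φ v ≤ 2 * ∫⁻ q, ‖f q‖ₑ ∂(volume.prod volume) := by
    intro v
    have hmp : MeasurePreserving (fun q : X × V => (q.1, q.2 - v))
      ((volume : Measure X).prod (volume : Measure V)) (volume.prod volume) :=
      (MeasurePreserving.id volume).prod (measurePreserving_sub_right volume v)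
    calc Φ v ≤ ∫⁻ q : X × V, (‖f (q.1, q.2 - v)‖ₑ + ‖f q‖ₑ) ∂(volume.prod volume) :=
          lintegral_mono fun q => enorm_sub_le
      _ = 2 * ∫⁻ q, ‖f q‖ₑ ∂(volume.prod volume) := by
          rw [lintegral_add_right _ hfm.enorm, two_mul]
          congr 1
          exact hmp.lintegral_comp hfm.enorm
  have hle : ∀ n, ∫⁻ q : X × V, ‖smoothK g f (h n) q.1 q.2 - f q‖ₑ ∂(volume.prod volume)
      ≤ ∫⁻ u : V, ‖g u‖ₑ * Φ (h n • u) := by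
    intro n
    calc ∫⁻ q : X × V, ‖smoothK g f (h n) q.1 q.2 - f q‖ₑ ∂(volume.prod volume)
        ≤ ∫⁻ q : X × V, (∫⁻ u : V, ‖g u‖ₑ * ‖f (q.1, q.2 - h n • u) - f q‖ₑ)
            ∂(volume.prod volume) := by
          refine lintegral_mono fun q => ?_
          have e : smoothK g f (h n) q.1 q.2 - f q
              = ∫ u : V, g u * (f (q.1, q.2 - h n • u) - f q) := by
            simp only [mul_sub]
            rw [integral_sub, integral_mul_const, hg1, one_mul]
            · rfl
            · refine hgi.mul_bdd (c := C) ?_ (ae_of_all _ fun u => hfC _)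
              exact (hfm.comp (by fun_prop)).aestronglyMeasurable
            · exact hgi.mul_const _
          rw [e]
          refine (enorm_integral_le_lintegral_enorm _).trans (le_of_eq ?_)
          refine lintegral_congr fun u => ?_
          rw [enorm_mul]
      _ = ∫⁻ u : V, ∫⁻ q : X × V, ‖g u‖ₑ * ‖f (q.1, q.2 - h n • u) - f q‖ₑ
            ∂(volume.prod volume) := by
          refine lintegral_lintegral_swap (f := fun (q : X × V) (u : V) =>
            ‖g u‖ₑ * ‖f (q.1, q.2 - h n • u) - f q‖ₑ) ?_
          exact ((hgm.comp measurable_snd).enorm.mul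
            ((hmeas (h n)).comp measurable_swap)).aemeasurable
      _ = ∫⁻ u : V, ‖g u‖ₑ * Φ (h n • u) := by
          refine lintegral_congr fun u => ?_
          rw [lintegral_const_mul]
          exact (hmeas (h n)).comp (measurable_prodMk_left)
  have hlim : Tendsto (fun n => ∫⁻ u : V, ‖g u‖ₑ * Φ (h n • u)) atTop (𝓝 (∫⁻ u : V, 0)) := by
    refine tendsto_lintegral_of_dominated_convergence
      (fun u => ‖g u‖ₑ * (2 * ∫⁻ q, ‖f q‖ₑ ∂(volume.prod volume))) ?_ ?_ ?_ ?_
    · intro n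
      refine hgm.enorm.mul ?_
      exact Measurable.lintegral_prod_right' (f := fun a : V × (X × V) =>
        ‖f (a.2.1, a.2.2 - h n • a.1) - f a.2‖ₑ) (hmeas (h n))
    · intro n
      exact ae_of_all _ fun u => mul_le_mul_right (hΦb _) _
    · rw [lintegral_mul_const _ hgm.enorm]
      exact ENNReal.mul_ne_top hgi.2.ne (ENNReal.mul_ne_top (by simp) hf.2.ne)
    · refine ae_of_all _ fun u => ?_
      have h1 : Tendsto (fun n => h n • u) atTop (𝓝 0) := by
        simpa using hh.smul_const u
      have h2 := ENNReal.Tendsto.const_mul (a := ‖g u‖ₑ) (hΦ.comp h1) (Or.inr (by simp))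
      simpa using h2
  rw [lintegral_zero] at hlim
  exact tendsto_of_tendsto_of_tendsto_of_le_of_le tendsto_const_nhds hlim (fun _ => zero_le)
    hle

lemma smoothK_eq {X V : Type*}
    [NormedAddCommGroup V] [NormedSpace ℝ V] [FiniteDimensional ℝ V] [MeasureSpace V] [BorelSpace V]
    [(volume : Measure V).IsAddHaarMeasure]
    (g : V → ℝ) (f : X × V → ℝ) (h : ℝ) (hh : 0 < h) (x : X) (w : V) :
    ∫ w', (h ^ Module.finrank ℝ V)⁻¹ * g (h⁻¹ • (w - w')) * f (x, w') = smoothK g f h x w := by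
  let G : V → ℝ := fun w' => g (h⁻¹ • (w - w')) * f (x, w')
  have h1 : smoothK g f h x w = ∫ u, G (w - h • u) := by
    unfold smoothK
    refine integral_congr_ae (ae_of_all _ fun u => ?_)
    simp only [G, sub_sub_cancel]
    rw [smul_smul, inv_mul_cancel₀ hh.ne', one_smul]
  rw [h1, Measure.integral_comp_smul volume (fun u => G (w - u)) h, integral_sub_left_eq_self G,
    smul_eq_mul, ← integral_const_mul, abs_of_pos (by positivity)]
  refine integral_congr_ae (ae_of_all _ fun u => ?_)
  simp only [G]
  ring

lemma smoothK_measurable {X V : Type*} [MeasurableSpace X]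
    [NormedAddCommGroup V] [NormedSpace ℝ V] [FiniteDimensional ℝ V] [MeasureSpace V] [BorelSpace V]
    [(volume : Measure V).IsAddHaarMeasure]
    (g : V → ℝ) (hg : Measurable g) (f : X × V → ℝ) (hf : Measurable f) (h : ℝ) :
    Measurable (fun q : X × V => smoothK g f h q.1 q.2) := by
  have : ProperSpace V := FiniteDimensional.proper ℝ V
  have hm : Measurable (fun a : (X × V) × V => g a.2 * f (a.1.1, a.1.2 - h • a.2)) :=
    (hg.comp measurable_snd).mul (hf.comp (by fun_prop))
  exact (hm.stronglyMeasurable.integral_prod_right').measurable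

/-- The `X`-marginal of the kernel-weighted law has density `smoothK`. -/
lemma smoothK_law {X V : Type*} [MeasureSpace X] [SigmaFinite (volume : Measure X)]
    [NormedAddCommGroup V] [NormedSpace ℝ V] [FiniteDimensional ℝ V] [MeasureSpace V] [BorelSpace V]
    [(volume : Measure V).IsAddHaarMeasure]
    (g : V → ℝ) (hg : Measurable g) (hgi : Integrable g) (hg0 : ∀ u, 0 ≤ g u)
    (f : X × V → ℝ) (hf : Measurable f) (hf0 : ∀ q, 0 ≤ f q)
    (C : ℝ) (hfC : ∀ q, f q ≤ C) (h : ℝ) (hh : 0 < h) (w : V) :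
    Measure.map Prod.fst (((volume.prod volume : Measure (X × V)).withDensity
      (fun q => ENNReal.ofReal (f q))).withDensity
        (fun q => ENNReal.ofReal ((h ^ Module.finrank ℝ V)⁻¹ * g (h⁻¹ • (w - q.2)))))
      = volume.withDensity (fun x => ENNReal.ofReal (smoothK g f h x w)) := by
  have : ProperSpace V := FiniteDimensional.proper ℝ V
  have hk : Measurable (fun w' : V => (h ^ Module.finrank ℝ V)⁻¹ * g (h⁻¹ • (w - w'))) :=
    (hg.comp (by fun_prop)).const_mul _
  have hk0 : ∀ w' : V, 0 ≤ (h ^ Module.finrank ℝ V)⁻¹ * g (h⁻¹ • (w - w')) := fun w' =>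
    mul_nonneg (by positivity) (hg0 _)
  have hki : Integrable (fun w' : V => (h ^ Module.finrank ℝ V)⁻¹ * g (h⁻¹ • (w - w'))) := by
    refine Integrable.const_mul ?_ _
    have h1 : Integrable (fun v : V => g (h⁻¹ • v)) := hgi.comp_smul (inv_ne_zero hh.ne')
    exact h1.comp_sub_left w
  have hk' : Measurable (fun q : X × V =>
      ENNReal.ofReal ((h ^ Module.finrank ℝ V)⁻¹ * g (h⁻¹ • (w - q.2)))) :=
    (hk.comp measurable_snd).ennreal_ofReal
  rw [← withDensity_mul _ hf.ennreal_ofReal hk']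
  ext s hs
  have hsm : MeasurableSet (Prod.fst ⁻¹' s : Set (X × V)) := measurable_fst hs
  rw [Measure.map_apply measurable_fst hs, withDensity_apply _ hsm, withDensity_apply _ hs,
    ← Set.prod_univ, setLIntegral_prod]
  · refine lintegral_congr fun x => ?_
    rw [← smoothK_eq g f h hh x w, Measure.restrict_univ, ofReal_integral_eq_lintegral_ofReal]
    · refine lintegral_congr fun w' => ?_
      simp only [Pi.mul_apply, Function.comp_def]
      rw [mul_comm, ENNReal.ofReal_mul (hk0 w')]
    · refine hki.mul_bdd (c := C) (hf.comp (by fun_prop)).aestronglyMeasurable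
        (ae_of_all _ fun w' => ?_)
      rw [Real.norm_of_nonneg (hf0 _)]
      exact hfC _
    · exact ae_of_all _ fun w' => mul_nonneg (hk0 _) (hf0 _)
  · exact (hf.ennreal_ofReal.mul hk').aemeasurable

/-- Splitting a sum over injective tuples according to the first index. -/
lemma sum_inj_split {r N : ℕ} (F : Fin (N + 1) → (Fin r → Fin (N + 1)) → ℝ) :
    ∑ i ∈ Finset.univ.filter (fun i : Fin (r + 1) → Fin (N + 1) => Function.Injective i),
        F (i 0) (fun l => i l.succ)
      = ∑ k : Fin (N + 1), ∑ i ∈ Finset.univ.filter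
          (fun i : Fin r → Fin N => Function.Injective i), F k (fun l => k.succAbove (i l)) := by
  classical
  rw [Finset.sum_sigma']
  symm
  refine Finset.sum_bij (fun a _ => Fin.cons a.1 (fun l => a.1.succAbove (a.2 l))) ?_ ?_ ?_ ?_
  · rintro ⟨k, i⟩ hi
    simp only [Finset.mem_sigma, Finset.mem_univ, Finset.mem_filter, true_and] at hi ⊢
    rw [Fin.cons_injective_iff]
    refine ⟨?_, fun a b hab => hi (Fin.succAbove_right_injective hab)⟩
    rintro ⟨l, hl⟩
    exact Fin.succAbove_ne k (i l) hl
  · rintro ⟨k, i⟩ hi ⟨k', i'⟩ hi' h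
    have h0 : k = k' := by simpa using congrFun h 0
    subst h0
    have h1 : i = i' := by
      funext l
      have := congrFun h l.succ
      simp only [Fin.cons_succ] at this
      exact Fin.succAbove_right_injective this
    subst h1
    rfl
  · intro j hj
    simp only [Finset.mem_filter, Finset.mem_univ, true_and] at hj
    have hne : ∀ l : Fin r, ∃ z, (j 0).succAbove z = j l.succ := fun l =>
      Fin.exists_succAbove_eq (fun h => Fin.succ_ne_zero l (hj h))
    choose z hz using hne
    refine ⟨⟨j 0, z⟩, ?_, ?_⟩
    · simp only [Finset.mem_sigma, Finset.mem_univ, Finset.mem_filter, true_and]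
      intro a b hab
      have : j a.succ = j b.succ := by rw [← hz a, ← hz b, hab]
      exact Fin.succ_injective _ (hj this)
    · funext l
      refine Fin.cases ?_ (fun l => ?_) l
      · simp
      · simp [hz]
  · rintro ⟨k, i⟩ hi
    simp

/-- Abstract consistency in `L¹` of a localised U-statistic. -/
lemma abstract_consistency {E : Type*} [MeasurableSpace E] (P : Measure E)
    [IsProbabilityMeasure P] (r : ℕ) (G : ℕ → E → (Fin r → E) → ℝ)
    (hG : ∀ n, Measurable (fun q : E × (Fin r → E) => G n q.1 q.2))
    (g : ℕ → Fin r → E → E → ℝ) (hg : ∀ n l x, Measurable (g n l x))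
    (M : ℕ → ℝ) (hMt : Tendsto (fun n : ℕ => M n / n) atTop (𝓝 0)) (hM0 : ∀ n, 0 ≤ M n)
    (C : ℝ) (hC : 1 ≤ C) (h0 : ∀ n l x y, 0 ≤ g n l x y) (hM : ∀ n l x y, g n l x y ≤ M n)
    (hIntg : ∀ n l x, ∫ y, g n l x y ∂P ≤ C)
    (hGg : ∀ n x v, |G n x v| ≤ ∏ l, g n l x (v l))
    (θ : E → ℝ) (hθ : Measurable θ) (B : ℝ) (hB : ∀ x, |θ x| ≤ B)
    (hlim : Tendsto (fun n => ∫ x, |∫ v, G n x v ∂(Measure.pi fun _ : Fin r => P) - θ x| ∂P)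
      atTop (𝓝 0)) :
    Tendsto (fun n : ℕ => ∫ v : Fin n → E, |((n.descFactorial (r + 1) : ℕ) : ℝ)⁻¹ *
        (∑ i ∈ Finset.univ.filter (fun i : Fin (r + 1) → Fin n => Function.Injective i),
          G n (v (i 0)) (fun l => v (i l.succ))) - ∫ x, θ x ∂P| ∂(Measure.pi fun _ : Fin n => P))
      atTop (𝓝 0) := by
  classical
  rw [← tendsto_add_atTop_iff_nat 1]
  -- bounds
  have hGb : ∀ n x v, |G n x v| ≤ M n ^ r := by
    intro n x v
    refine (hGg n x v).trans ?_
    refine (Finset.prod_le_prod (fun l _ => h0 _ _ _ _) (fun l _ => hM n l x (v l))).trans ?_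
    simp
  let S : (N : ℕ) → (E × (Fin N → E)) → ℝ := fun N q => ((N.descFactorial r : ℕ) : ℝ)⁻¹ *
        (∑ i ∈ Finset.univ.filter (fun i : Fin r → Fin N => Function.Injective i),
          G (N + 1) q.1 (fun l => q.2 (i l)))
  have hSm : ∀ N, Measurable (S N) := by
    intro N
    refine Measurable.const_mul (Finset.measurable_sum _ fun i _ => ?_) _
    have hm : Measurable (fun q : E × (Fin N → E) => (q.1, fun l : Fin r => q.2 (i l))) :=
      measurable_fst.prodMk (measurable_pi_lambda _ fun l =>
        (measurable_pi_apply _).comp measurable_snd)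
    exact (hG (N + 1)).comp hm
  have hSb : ∀ N, ∃ D, ∀ q, |S N q| ≤ D := by
    intro N
    refine ⟨((N.descFactorial r : ℕ) : ℝ)⁻¹ *
      ∑ i ∈ Finset.univ.filter (fun i : Fin r → Fin N => Function.Injective i), M (N + 1) ^ r,
      fun q => ?_⟩
    rw [abs_mul, abs_of_nonneg (by positivity : (0 : ℝ) ≤ ((N.descFactorial r : ℕ) : ℝ)⁻¹)]
    refine mul_le_mul_of_nonneg_left ?_ (by positivity)
    exact (Finset.abs_sum_le_sum_abs _ _).trans (Finset.sum_le_sum fun i _ => hGb _ _ _)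
  let θn : ℕ → E → ℝ := fun n x => ∫ v, G n x v ∂(Measure.pi fun _ : Fin r => P)
  have hθnm : ∀ n, Measurable (θn n) := fun n =>
    ((hG n).stronglyMeasurable.integral_prod_right').measurable
  have hθnb : ∀ n x, |θn n x| ≤ M n ^ r := by
    intro n x
    have := norm_integral_le_of_norm_le_const (μ := Measure.pi fun _ : Fin r => P)
      (f := G n x) (C := M n ^ r) (ae_of_all _ fun v => hGb n x v)
    simpa using this
  let b : ℕ → ℝ := fun N => Real.sqrt (((N.descFactorial r : ℕ) : ℝ)⁻¹ *
          (C ^ (2 * r) * (((N : ℝ) - r + r * M (N + 1)) ^ r - ((N : ℝ) - r) ^ r)))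
  have hb : Tendsto b atTop (𝓝 0) := by
    refine bound_tendsto r C (fun N => M (N + 1)) (fun n => hM0 _) ?_
    have h1 := (tendsto_add_atTop_iff_nat (f := fun n : ℕ => M n / n) 1).2 hMt
    have h2 : Tendsto (fun N : ℕ => ((N : ℝ) + 1) / N) atTop (𝓝 1) := by
      have : Tendsto (fun N : ℕ => 1 + 1 / (N : ℝ)) atTop (𝓝 (1 + 0)) :=
        tendsto_one_div_atTop_nhds_zero_nat.const_add 1
      rw [add_zero] at this
      refine this.congr' ?_
      filter_upwards [eventually_gt_atTop 0] with N hN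
      have : (N : ℝ) ≠ 0 := by positivity
      field_simp
    have h3 := h1.mul h2
    rw [zero_mul] at h3
    refine h3.congr fun N => ?_
    have : (N : ℝ) + 1 ≠ 0 := by positivity
    push_cast
    rw [div_mul_div_comm, mul_comm, mul_comm ((N : ℝ) + 1), mul_div_mul_comm]
    field_simp
  let c : ℕ → ℝ := fun N => Real.sqrt (((N.descFactorial 1 : ℕ) : ℝ)⁻¹ *
          ((max B 1) ^ (2 * 1) * (((N : ℝ) - (1 : ℕ) + (1 : ℕ) * max B 1) ^ 1
            - ((N : ℝ) - (1 : ℕ)) ^ 1)))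
  have hc : Tendsto c atTop (𝓝 0) := by
    refine bound_tendsto 1 (max B 1) (fun _ => max B 1) (fun _ => by positivity) ?_
    exact tendsto_const_div_atTop_nhds_zero_nat _
  have hB0 : 0 ≤ B := by
    have : Nonempty E := P.nonempty_of_neZero
    exact (abs_nonneg _).trans (hB (Classical.arbitrary E))
  have hbd := (hb.add ((tendsto_add_atTop_iff_nat 1).2 hlim)).add ((tendsto_add_atTop_iff_nat 1).2 hc)
  simp only [add_zero] at hbd
  refine squeeze_zero' (Eventually.of_forall fun N => integral_nonneg fun v => abs_nonneg _)
    ?_ hbd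
  filter_upwards [eventually_ge_atTop r] with N hN
  -- pieces
  have hsplit : ∀ v : Fin (N + 1) → E, (((N + 1).descFactorial (r + 1) : ℕ) : ℝ)⁻¹ *
        (∑ i ∈ Finset.univ.filter (fun i : Fin (r + 1) → Fin (N + 1) => Function.Injective i),
          G (N + 1) (v (i 0)) (fun l => v (i l.succ)))
      = ((N : ℝ) + 1)⁻¹ * ∑ k : Fin (N + 1), S N (v k, fun j => v (k.succAbove j)) := by
    intro v
    rw [sum_inj_split (fun k i => G (N + 1) (v k) (fun l => v (i l))), Nat.succ_descFactorial_succ]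
    push_cast
    rw [mul_inv, mul_assoc, Finset.mul_sum]
  have hT : ∀ k : Fin (N + 1), ∫ v : Fin (N + 1) → E, |S N (v k, fun j => v (k.succAbove j)) - θ (v k)|
      ∂(Measure.pi fun _ => P) ≤ b N + ∫ x, |θn (N + 1) x - θ x| ∂P := by
    intro k
    have hmp := measurePreserving_piFinSuccAbove (fun _ : Fin (N + 1) => P) k
    have e1 := hmp.integral_comp' (fun q : E × (Fin N → E) => |S N q - θ q.1|)
    have e2 : ∫ v : Fin (N + 1) → E, |S N (v k, fun j => v (k.succAbove j)) - θ (v k)|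
      ∂(Measure.pi fun _ => P) = ∫ q : E × (Fin N → E), |S N q - θ q.1|
        ∂(P.prod (Measure.pi fun _ => P)) := e1
    obtain ⟨D, hD⟩ := hSb N
    have hDi : Integrable (fun q : E × (Fin N → E) => |S N q - θ q.1|)
        (P.prod (Measure.pi fun _ => P)) := by
      refine Integrable.of_bound (C := D + B)
        (((hSm N).sub (hθ.comp measurable_fst)).abs.aestronglyMeasurable) (ae_of_all _ fun q => ?_)
      rw [Real.norm_eq_abs, abs_abs]
      exact (abs_sub _ _).trans (add_le_add (hD q) (hB q.1))
    rw [e2, integral_prod _ hDi]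
    have hθi : Integrable (fun x => |θn (N + 1) x - θ x|) P := by
      refine Integrable.of_bound (C := M (N + 1) ^ r + B)
        (((hθnm _).sub hθ).abs.aestronglyMeasurable) (ae_of_all _ fun q => ?_)
      rw [Real.norm_eq_abs, abs_abs]
      exact (abs_sub _ _).trans (add_le_add (hθnb _ q) (hB q))
    calc ∫ x, ∫ y, |S N (x, y) - θ x| ∂(Measure.pi fun _ => P) ∂P
        ≤ ∫ x, (b N + |θn (N + 1) x - θ x|) ∂P := by
          refine integral_mono hDi.integral_prod_left ((integrable_const _).add hθi) fun x => ?_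
          have hx : Measurable (fun y => S N (x, y)) := (hSm N).comp measurable_prodMk_left
          have i1 : Integrable (fun y => |S N (x, y) - θn (N + 1) x|)
              (Measure.pi fun _ : Fin N => P) := by
            refine Integrable.of_bound (C := D + M (N + 1) ^ r)
              ((hx.sub_const _).abs.aestronglyMeasurable) (ae_of_all _ fun y => ?_)
            rw [Real.norm_eq_abs, abs_abs]
            exact (abs_sub _ _).trans (add_le_add (hD _) (hθnb _ x))
          have i2 : Integrable (fun y => |S N (x, y) - θ x|)
              (Measure.pi fun _ : Fin N => P) := by
            refine Integrable.of_bound (C := D + B)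
              ((hx.sub_const _).abs.aestronglyMeasurable) (ae_of_all _ fun y => ?_)
            rw [Real.norm_eq_abs, abs_abs]
            exact (abs_sub _ _).trans (add_le_add (hD _) (hB x))
          calc ∫ y, |S N (x, y) - θ x| ∂(Measure.pi fun _ => P)
              ≤ ∫ y, (|S N (x, y) - θn (N + 1) x| + |θn (N + 1) x - θ x|)
                  ∂(Measure.pi fun _ => P) :=
                integral_mono i2 (i1.add (integrable_const _)) fun y => abs_sub_le _ _ _
            _ = ∫ y, |S N (x, y) - θn (N + 1) x| ∂(Measure.pi fun _ => P)
                  + |θn (N + 1) x - θ x| := by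
                rw [integral_add i1 (integrable_const _)]
                simp
            _ ≤ b N + |θn (N + 1) x - θ x| := by
                refine add_le_add ?_ le_rfl
                exact ustat_L1_bound hN P (G (N + 1) x) ((hG _).comp measurable_prodMk_left)
                  (fun l => g (N + 1) l x) (fun l => hg _ _ _) (M (N + 1)) C hC (hM0 _)
                  (fun l y => h0 _ _ _ _) (fun l y => hM _ _ _ _) (fun l => hIntg _ _ _)
                  (fun v => hGg _ _ _)
      _ = b N + ∫ x, |θn (N + 1) x - θ x| ∂P := by
          rw [integral_add (integrable_const _) hθi]
          simp
  have hL : ∫ v : Fin (N + 1) → E, |((N : ℝ) + 1)⁻¹ * ∑ k : Fin (N + 1), θ (v k) - ∫ x, θ x ∂P|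
      ∂(Measure.pi fun _ => P) ≤ c (N + 1) := by
    have := ustat_L1_bound (r := 1) (N := N + 1) (by omega) P (fun v => θ (v 0))
      (hθ.comp (measurable_pi_apply _)) (fun _ _ => max B 1) (fun _ => measurable_const)
      (max B 1) (max B 1) (le_max_right _ _) (by positivity) (fun _ _ => by positivity)
      (fun _ _ => le_rfl) (fun _ => by simp)
      (fun v => by simpa using Or.inl (hB (v 0)))
    have e0 : ∫ v : Fin 1 → E, θ (v 0) ∂(Measure.pi fun _ : Fin 1 => P) = ∫ x, θ x ∂P := by
      have hmp := measurePreserving_eval (fun _ : Fin 1 => P) 0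
      have := integral_map (μ := Measure.pi fun _ : Fin 1 => P) hmp.measurable.aemeasurable
        (f := θ) hθ.aestronglyMeasurable
      rw [hmp.map_eq] at this
      exact this.symm
    have e3 : ∀ v : Fin (N + 1) → E, ∑ i ∈ Finset.univ.filter
        (fun i : Fin 1 → Fin (N + 1) => Function.Injective i), θ (v (i 0))
        = ∑ k : Fin (N + 1), θ (v k) := by
      intro v
      rw [Finset.filter_true_of_mem (fun i _ => Function.injective_of_subsingleton i)]
      exact Fintype.sum_equiv (Equiv.funUnique (Fin 1) (Fin (N + 1))) _ _ (fun i => rfl)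
    rw [e0] at this
    simp only [e3] at this
    simpa [c] using this
  have hSi : ∀ k : Fin (N + 1), Integrable (fun v : Fin (N + 1) → E =>
      |S N (v k, fun j => v (k.succAbove j)) - θ (v k)|) (Measure.pi fun _ => P) := by
    intro k
    obtain ⟨D, hD⟩ := hSb N
    refine Integrable.of_bound (C := D + B) ?_ (ae_of_all _ fun q => ?_)
    · refine (((hSm N).comp ?_).sub (hθ.comp (measurable_pi_apply k))).abs.aestronglyMeasurable
      exact (measurable_pi_apply k).prodMk (measurable_pi_lambda _ fun l => measurable_pi_apply _)
    · rw [Real.norm_eq_abs, abs_abs]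
      exact (abs_sub _ _).trans (add_le_add (hD _) (hB _))
  have hLi : Integrable (fun v : Fin (N + 1) → E =>
      |((N : ℝ) + 1)⁻¹ * ∑ k : Fin (N + 1), θ (v k) - ∫ x, θ x ∂P|) (Measure.pi fun _ => P) := by
    refine ((Integrable.const_mul (integrable_finsetSum _ fun k _ => ?_) _).sub
      (integrable_const _)).abs
    exact Integrable.of_bound (C := B) (hθ.comp (measurable_pi_apply k)).aestronglyMeasurable
      (ae_of_all _ fun v => hB _)
  have hn0 : (0 : ℝ) ≤ ((N : ℝ) + 1)⁻¹ := by positivity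
  calc ∫ v : Fin (N + 1) → E, |(((N + 1).descFactorial (r + 1) : ℕ) : ℝ)⁻¹ *
        (∑ i ∈ Finset.univ.filter (fun i : Fin (r + 1) → Fin (N + 1) => Function.Injective i),
          G (N + 1) (v (i 0)) (fun l => v (i l.succ))) - ∫ x, θ x ∂P| ∂(Measure.pi fun _ => P)
      ≤ ∫ v : Fin (N + 1) → E, ((((N : ℝ) + 1)⁻¹ * ∑ k : Fin (N + 1),
          |S N (v k, fun j => v (k.succAbove j)) - θ (v k)|)
          + |((N : ℝ) + 1)⁻¹ * ∑ k : Fin (N + 1), θ (v k) - ∫ x, θ x ∂P|)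
          ∂(Measure.pi fun _ => P) := by
        refine integral_mono_of_nonneg (ae_of_all _ fun v => abs_nonneg _)
          (((integrable_finsetSum _ fun k _ => hSi k).const_mul _).add hLi)
          (ae_of_all _ fun v => ?_)
        simp only
        rw [hsplit]
        refine (abs_sub_le _ (((N : ℝ) + 1)⁻¹ * ∑ k : Fin (N + 1), θ (v k)) _).trans
          (add_le_add ?_ le_rfl)
        rw [← mul_sub, ← Finset.sum_sub_distrib, abs_mul, abs_of_nonneg hn0]
        exact mul_le_mul_of_nonneg_left (Finset.abs_sum_le_sum_abs _ _) hn0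
    _ = ((N : ℝ) + 1)⁻¹ * ∑ k : Fin (N + 1), ∫ v : Fin (N + 1) → E,
          |S N (v k, fun j => v (k.succAbove j)) - θ (v k)| ∂(Measure.pi fun _ => P)
          + ∫ v : Fin (N + 1) → E, |((N : ℝ) + 1)⁻¹ * ∑ k : Fin (N + 1), θ (v k) - ∫ x, θ x ∂P|
          ∂(Measure.pi fun _ => P) := by
        rw [integral_add ((integrable_finsetSum _ fun k _ => hSi k).const_mul _) hLi,
          integral_const_mul, integral_finsetSum _ fun k _ => hSi k]
    _ ≤ ((N : ℝ) + 1)⁻¹ * ∑ k : Fin (N + 1), (b N + ∫ x, |θn (N + 1) x - θ x| ∂P) + c (N + 1) :=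
        add_le_add (mul_le_mul_of_nonneg_left (Finset.sum_le_sum fun k _ => hT k) hn0) hL
    _ = b N + ∫ x, |θn (N + 1) x - θ x| ∂P + c (N + 1) := by
        rw [Finset.sum_const, Finset.card_univ, Fintype.card_fin, nsmul_eq_mul, ← mul_assoc]
        push_cast
        rw [inv_mul_cancel₀ (by positivity), one_mul]

/-- A measurable, bounded, nonnegative version of the radial kernel. -/
lemma kernel_version {d : ℕ} {K : ℝ → ℝ} (hK : KernelAssumption K d) :
    ∃ (g : Euc d → ℝ) (CK : ℝ), Measurable g ∧ (∀ u, 0 ≤ g u) ∧ 0 ≤ CK ∧ (∀ u, g u ≤ CK) ∧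
      Integrable g ∧ ∫ u, g u = 1 ∧ g =ᵐ[volume] fun u => K ‖u‖ := by
  obtain ⟨h0, ⟨C, hC⟩, -, -, hI, -⟩ := hK
  have hC0 : 0 ≤ C := (h0 0).trans (hC 0)
  have hIntg : Integrable (fun u : Euc d => K ‖u‖) := by
    by_contra h
    rw [integral_undef h] at hI
    exact zero_ne_one hI
  let g0 := hIntg.aestronglyMeasurable.mk
  have hg0 : (fun u : Euc d => K ‖u‖) =ᵐ[volume] g0 := hIntg.aestronglyMeasurable.ae_eq_mk
  have hg0m : Measurable g0 := hIntg.aestronglyMeasurable.stronglyMeasurable_mk.measurable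
  have hae : (fun u => max 0 (min (g0 u) C)) =ᵐ[volume] fun u : Euc d => K ‖u‖ := by
    filter_upwards [hg0] with u hu
    rw [← hu, min_eq_left (hC _), max_eq_right (h0 _)]
  refine ⟨fun u => max 0 (min (g0 u) C), C, ?_, fun u => le_max_left _ _, hC0,
    fun u => max_le hC0 (min_le_right _ _), hIntg.congr hae.symm, ?_, hae⟩
  · exact measurable_const.max (hg0m.min measurable_const)
  · rw [integral_congr_ae hae, hI]

lemma exists_concat (dY dZ : ℕ) : ∃ T : Euc dY × Euc dZ → Euc (dY + dZ),
    MeasurePreserving T volume volume ∧ MeasurableEmbedding T ∧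
      ∀ y z, ‖T (y, z)‖ = Real.sqrt (‖y‖ ^ 2 + ‖z‖ ^ 2) := by
  have hfr : Module.finrank ℝ (WithLp 2 (Euc dY × Euc dZ)) = dY + dZ := by
    rw [(WithLp.linearEquiv 2 ℝ (Euc dY × Euc dZ)).finrank_eq]
    simp
  let e : WithLp 2 (Euc dY × Euc dZ) ≃ₗᵢ[ℝ] Euc (dY + dZ) :=
    ((stdOrthonormalBasis ℝ (WithLp 2 (Euc dY × Euc dZ))).reindex (finCongr hfr)).repr
  have h1 : MeasurePreserving e := e.measurePreserving
  have h2 := WithLp.volume_preserving_toLp (Euc dY) (Euc dZ)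
  refine ⟨fun w => e (WithLp.toLp 2 w), h1.comp h2, ?_, ?_⟩
  · exact e.toHomeomorph.measurableEmbedding.comp
      (MeasurableEquiv.toLp 2 (Euc dY × Euc dZ)).measurableEmbedding
  · intro y z
    rw [LinearIsometryEquiv.norm_map, WithLp.prod_norm_eq_of_L2]
    rfl

/-- The version of the kernel on the product space. -/
lemma kernel_version_prod {dY dZ : ℕ} {K : ℝ → ℝ} (hK : KernelAssumption K (dY + dZ)) :
    ∃ (g : Euc dY × Euc dZ → ℝ) (CK : ℝ), Measurable g ∧ (∀ u, 0 ≤ g u) ∧ 0 ≤ CK ∧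
      (∀ u, g u ≤ CK) ∧ Integrable g ∧ ∫ u, g u = 1 ∧
      g =ᵐ[volume] fun u => K (Real.sqrt (‖u.1‖ ^ 2 + ‖u.2‖ ^ 2)) := by
  obtain ⟨g, C, hm, h0, hC0, hC, hi, h1, hae⟩ := kernel_version hK
  obtain ⟨T, hT, hTe, hTn⟩ := exists_concat dY dZ
  refine ⟨g ∘ T, C, hm.comp hT.measurable, fun u => h0 _, hC0, fun u => hC _,
    (hT.integrable_comp_emb hTe).2 hi, ?_, ?_⟩
  · rw [← h1]; exact hT.integral_comp hTe g
  · filter_upwards [hT.quasiMeasurePreserving.ae hae] with u hu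
    simp only [Function.comp]
    rw [hu, ← hTn]

/-- The data space. -/
abbrev Dat (dX dY dZ : ℕ) : Type := Euc dX × Euc dY × Euc dZ

/-- The kernel weights with measurable versions of the kernels. -/
def kern {dX dY dZ : ℕ} (g1 : Euc dY × Euc dZ → ℝ) (g2 : Euc dZ → ℝ) (h1 h2 : ℝ) (l : Fin 8)
    (v0 v : Dat dX dY dZ) : ℝ :=
  if l.val < 4 then (h1 ^ (dY + dZ))⁻¹ * g1 (h1⁻¹ • (v0.2 - v.2))
  else (h2 ^ dZ)⁻¹ * g2 (h2⁻¹ • (v0.2.2 - v.2.2))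

/-- The symmetrised core as a function of eight points. -/
def psi {dX : ℕ} (x : Fin 8 → Euc dX) : ℝ :=
  ballφ' (fun k : Fin 4 => x ⟨k.val, by omega⟩) (fun k : Fin 4 => x ⟨k.val + 4, by omega⟩)

/-- The core of the U-statistic with measurable versions of the kernels. -/
def coreG {dX dY dZ : ℕ} (g1 : Euc dY × Euc dZ → ℝ) (g2 : Euc dZ → ℝ) (h1 h2 : ℝ)
    (v0 : Dat dX dY dZ) (v : Fin 8 → Dat dX dY dZ) : ℝ :=
  (∏ l, kern g1 g2 h1 h2 l v0 (v l)) * psi (fun l => (v l).1)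

lemma core_eq {dX dY dZ : ℕ} (K : ℝ → ℝ) (g1 : Euc dY × Euc dZ → ℝ) (g2 : Euc dZ → ℝ) (h1 h2 : ℝ)
    (hh1 : 0 < h1) (hh2 : 0 < h2) (v : Fin 9 → Dat dX dY dZ)
    (H1 : ∀ l : Fin 8, g1 (h1⁻¹ • ((v 0).2 - (v l.succ).2))
      = K (Real.sqrt (‖(h1⁻¹ • ((v 0).2 - (v l.succ).2)).1‖ ^ 2
          + ‖(h1⁻¹ • ((v 0).2 - (v l.succ).2)).2‖ ^ 2)))
    (H2 : ∀ l : Fin 8, g2 (h2⁻¹ • ((v 0).2.2 - (v l.succ).2.2))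
      = K ‖h2⁻¹ • ((v 0).2.2 - (v l.succ).2.2)‖) :
    ustatCore K h1 h2 v = coreG g1 g2 h1 h2 (v 0) (fun l => v l.succ) := by
  have e1 : ∀ l : Fin 8, wYZ K h1 (v 0).2.1 (v l.succ).2.1 (v 0).2.2 (v l.succ).2.2
      = g1 (h1⁻¹ • ((v 0).2 - (v l.succ).2)) := by
    intro l
    rw [H1 l, wYZ]
    congr 1
    simp only [Prod.smul_fst, Prod.smul_snd, Prod.fst_sub, Prod.snd_sub, norm_smul,
      dist_eq_norm, Real.norm_eq_abs, abs_of_pos (inv_pos.2 hh1)]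
    rw [mul_pow, mul_pow, ← mul_add, Real.sqrt_mul (by positivity), Real.sqrt_sq (by positivity)]
    rw [div_eq_inv_mul]
  have e2 : ∀ l : Fin 8, K (dist (v 0).2.2 (v l.succ).2.2 / h2)
      = g2 (h2⁻¹ • ((v 0).2.2 - (v l.succ).2.2)) := by
    intro l
    rw [H2 l]
    congr 1
    rw [norm_smul, dist_eq_norm, Real.norm_eq_abs, abs_of_pos (inv_pos.2 hh2), div_eq_inv_mul]
  have hpsi : ballφ' (fun k : Fin 4 => (v ⟨k.val + 1, by omega⟩).1)
        (fun k : Fin 4 => (v ⟨k.val + 5, by omega⟩).1) = psi (fun l : Fin 8 => (v l.succ).1) := rfl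
  have p1 : (∏ l : Fin 4, wYZ K h1 (v 0).2.1 ((v ⟨l.val + 1, by omega⟩).2.1)
        (v 0).2.2 ((v ⟨l.val + 1, by omega⟩).2.2))
      = ∏ l : Fin 4, g1 (h1⁻¹ • ((v 0).2 - (v (Fin.succ (⟨l.val, by omega⟩ : Fin 8))).2)) :=
    Finset.prod_congr rfl fun l _ => e1 ⟨l.val, by omega⟩
  have p2 : (∏ l : Fin 4, K (dist (v 0).2.2 ((v ⟨l.val + 5, by omega⟩).2.2) / h2))
      = ∏ l : Fin 4, g2 (h2⁻¹ • ((v 0).2.2 - (v (Fin.succ (⟨l.val + 4, by omega⟩ : Fin 8))).2.2)) :=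
    Finset.prod_congr rfl fun l _ => e2 ⟨l.val + 4, by omega⟩
  unfold ustatCore coreG
  rw [hpsi, p1, p2]
  have key : (∏ l : Fin 8, kern g1 g2 h1 h2 l (v 0) (v l.succ))
      = (∏ i : Fin 4, kern g1 g2 h1 h2 (Fin.castAdd 4 i) (v 0) (v (Fin.castAdd 4 i).succ)) *
        ∏ i : Fin 4, kern g1 g2 h1 h2 (Fin.natAdd 4 i) (v 0) (v (Fin.natAdd 4 i).succ) :=
    Fin.prod_univ_add (a := 4) (b := 4) (fun l : Fin 8 => kern g1 g2 h1 h2 l (v 0) (v l.succ))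
  rw [key]
  have q1 : ∏ i : Fin 4, kern g1 g2 h1 h2 (Fin.castAdd 4 i) (v 0) (v (Fin.castAdd 4 i).succ)
      = (h1 ^ (4 * (dY + dZ)))⁻¹ *
        ∏ l : Fin 4, g1 (h1⁻¹ • ((v 0).2 - (v (Fin.succ (⟨l.val, by omega⟩ : Fin 8))).2)) := by
    have : ∀ i : Fin 4, kern g1 g2 h1 h2 (Fin.castAdd 4 i) (v 0) (v (Fin.castAdd 4 i).succ)
        = (h1 ^ (dY + dZ))⁻¹ *
          g1 (h1⁻¹ • ((v 0).2 - (v (Fin.succ (⟨i.val, by omega⟩ : Fin 8))).2)) := by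
      intro i
      unfold kern
      rw [if_pos (by simp)]
      rfl
    rw [Finset.prod_congr rfl fun i _ => this i, Finset.prod_mul_distrib, Finset.prod_const,
      Finset.card_univ, Fintype.card_fin, inv_pow, ← pow_mul, mul_comm (dY + dZ) 4]
  have q2 : ∏ i : Fin 4, kern g1 g2 h1 h2 (Fin.natAdd 4 i) (v 0) (v (Fin.natAdd 4 i).succ)
      = (h2 ^ (4 * dZ))⁻¹ *
        ∏ l : Fin 4, g2 (h2⁻¹ • ((v 0).2.2 -
          (v (Fin.succ (⟨l.val + 4, by omega⟩ : Fin 8))).2.2)) := by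
    have : ∀ i : Fin 4, kern g1 g2 h1 h2 (Fin.natAdd 4 i) (v 0) (v (Fin.natAdd 4 i).succ)
        = (h2 ^ dZ)⁻¹ * g2 (h2⁻¹ • ((v 0).2.2 -
          (v (Fin.succ (⟨i.val + 4, by omega⟩ : Fin 8))).2.2)) := by
      intro i
      have hi : (Fin.natAdd 4 i : Fin 8) = ⟨i.val + 4, by omega⟩ := by
        ext; simp [add_comm]
      unfold kern
      rw [if_neg (by simp)]
      rw [hi]
    rw [Finset.prod_congr rfl fun i _ => this i, Finset.prod_mul_distrib, Finset.prod_const,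
      Finset.card_univ, Fintype.card_fin, inv_pow, ← pow_mul, mul_comm dZ 4]
  rw [q1, q2]
  ring

lemma ae_kernel_agree {E V : Type*} [MeasurableSpace E] (P : Measure E) [IsProbabilityMeasure P]
    [NormedAddCommGroup V] [NormedSpace ℝ V] [FiniteDimensional ℝ V] [MeasureSpace V] [BorelSpace V]
    [(volume : Measure V).IsAddHaarMeasure] (F : E → V)
    (hF : Measure.QuasiMeasurePreserving F P volume) (A : V → Prop) (hA : ∀ᵐ u, A u) (h : ℝ)
    (hh : 0 < h) :
    ∀ᵐ q ∂(P.prod P), A (h⁻¹ • (F q.1 - F q.2)) := by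
  have : ProperSpace V := FiniteDimensional.proper ℝ V
  let N := toMeasurable volume {u | ¬ A u}
  have hN : MeasurableSet N := measurableSet_toMeasurable _ _
  have hN0 : volume N = 0 := by rw [measure_toMeasurable]; exact hA
  have hFm := hF.measurable
  have hm : Measurable (fun q : E × E => h⁻¹ • (F q.1 - F q.2)) := by fun_prop
  have h0 : (P.prod P) ((fun q : E × E => h⁻¹ • (F q.1 - F q.2)) ⁻¹' N) = 0 := by
    rw [Measure.measure_prod_null (hm hN)]
    refine ae_of_all _ fun a => ?_
    have hq : Measure.QuasiMeasurePreserving (fun v : V => h⁻¹ • (F a - v)) volume volume := by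
      have e1 : Measure.QuasiMeasurePreserving (fun v : V => h⁻¹ • v) volume volume :=
        (Homeomorph.smulOfNeZero h⁻¹ (inv_ne_zero hh.ne')).toMeasurableEquiv.measurable
          |> fun hmm => ⟨hmm, by
            have := Measure.map_addHaar_smul (volume : Measure V) (inv_ne_zero hh.ne')
            rw [this]
            exact Measure.smul_absolutelyContinuous⟩
      exact e1.comp (Measure.measurePreserving_sub_left volume (F a)).quasiMeasurePreserving
    exact (hq.comp hF).preimage_null hN0
  rw [ae_iff]
  refine measure_mono_null ?_ h0
  intro q hq
  exact subset_toMeasurable _ _ hq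

lemma marg_bound {X V : Type*} [MeasureSpace X] [MeasureSpace V]
    [SigmaFinite (volume : Measure X)] [SigmaFinite (volume : Measure V)]
    (f : X × V → ℝ) (hf : Measurable f) (hf0 : ∀ q, 0 ≤ f q)
    (hfi : Integrable f (volume.prod volume)) (C : ℝ) (hC : ∀ w, ∫ x, f (x, w) ≤ C)
    (F : V → ℝ≥0∞) (hF : Measurable F) :
    ∫⁻ q, F q.2 ∂((volume.prod volume : Measure (X × V)).withDensity
      fun q => ENNReal.ofReal (f q)) ≤ ENNReal.ofReal C * ∫⁻ w, F w := by
  have hF' : Measurable (fun q : X × V => F q.2) := hF.comp measurable_snd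
  rw [lintegral_withDensity_eq_lintegral_mul _ hf.ennreal_ofReal hF',
    lintegral_prod_symm' _ (hf.ennreal_ofReal.mul hF'),
    ← lintegral_const_mul _ hF]
  refine lintegral_mono_ae ?_
  filter_upwards [hfi.prod_left_ae] with w hw
  simp only [Pi.mul_apply]
  have hfw : Measurable (fun x => ENNReal.ofReal (f (x, w))) :=
    (hf.comp measurable_prodMk_right).ennreal_ofReal
  rw [lintegral_mul_const _ hfw,
    ← ofReal_integral_eq_lintegral_ofReal hw (ae_of_all _ fun x => hf0 _)]
  gcongr
  exact hC w

lemma map_withDensity_comp {E F : Type*} [MeasurableSpace E] [MeasurableSpace F] (P : Measure E)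
    (T : E → F) (hT : Measurable T) (k : F → ℝ≥0∞) (hk : Measurable k) :
    Measure.map T (P.withDensity fun e => k (T e)) = (Measure.map T P).withDensity k := by
  ext s hs
  rw [Measure.map_apply hT hs, withDensity_apply _ (hT hs), withDensity_apply _ hs,
    setLIntegral_map hs hk hT]

/-- Representation of the mean of the localised core. -/
lemma theta_rep {ι E X : Type*} [Fintype ι] [MeasurableSpace E] [MeasurableSpace X]
    (P : Measure E) [IsProbabilityMeasure P] (ν : Measure X) [SigmaFinite ν] (κ : ι → E → ℝ)
    (hκm : ∀ l, Measurable (κ l)) (hκ0 : ∀ l e, 0 ≤ κ l e) (hκi : ∀ l, Integrable (κ l) P)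
    (F : E → X) (hF : Measurable F) (a : ι → X → ℝ) (ham : ∀ l, Measurable (a l))
    (ha0 : ∀ l x, 0 ≤ a l x) (hai : ∀ l, Integrable (a l) ν)
    (hlaw : ∀ l, Measure.map F (P.withDensity fun e => ENNReal.ofReal (κ l e))
      = ν.withDensity fun x => ENNReal.ofReal (a l x))
    (ψ : (ι → X) → ℝ) (hψ : Measurable ψ) :
    ∫ v, (∏ l, κ l (v l)) * ψ (fun l => F (v l)) ∂(Measure.pi fun _ : ι => P)
      = ∫ x, ψ x * ∏ l, a l (x l) ∂(Measure.pi fun _ : ι => ν) := by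
  have hfin : ∀ l, IsFiniteMeasure (P.withDensity fun e => ENNReal.ofReal (κ l e)) := by
    intro l
    refine isFiniteMeasure_withDensity_ofReal (hκi l).2
  have hfin2 : ∀ l, IsFiniteMeasure (ν.withDensity fun e => ENNReal.ofReal (a l e)) := by
    intro l
    refine isFiniteMeasure_withDensity_ofReal (hai l).2
  have hm1 : Measurable (fun v : ι → E => ENNReal.ofReal (∏ l, κ l (v l))) :=
    (Finset.measurable_prod _ fun l _ => (hκm l).comp (measurable_pi_apply l)).ennreal_ofReal
  have hm2 : Measurable (fun v : ι → X => ENNReal.ofReal (∏ l, a l (v l))) :=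
    (Finset.measurable_prod _ fun l _ => (ham l).comp (measurable_pi_apply l)).ennreal_ofReal
  have e1 : ∫ v, (∏ l, κ l (v l)) * ψ (fun l => F (v l)) ∂(Measure.pi fun _ : ι => P)
      = ∫ v, ψ (fun l => F (v l)) ∂(Measure.pi fun l : ι =>
        P.withDensity fun e => ENNReal.ofReal (κ l e)) := by
    rw [pi_withDensity_real (fun _ => P) κ hκ0 hκi,
      integral_withDensity_eq_integral_toReal_smul hm1 (ae_of_all _ fun _ => ENNReal.ofReal_lt_top)]
    refine integral_congr_ae (ae_of_all _ fun v => ?_)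
    simp only [smul_eq_mul]
    rw [ENNReal.toReal_ofReal (Finset.prod_nonneg fun l _ => hκ0 _ _)]
  have e2 : ∫ x, ψ x * ∏ l, a l (x l) ∂(Measure.pi fun _ : ι => ν)
      = ∫ x, ψ x ∂(Measure.pi fun l : ι => ν.withDensity fun e => ENNReal.ofReal (a l e)) := by
    rw [pi_withDensity_real (fun _ => ν) a ha0 hai,
      integral_withDensity_eq_integral_toReal_smul hm2 (ae_of_all _ fun _ => ENNReal.ofReal_lt_top)]
    refine integral_congr_ae (ae_of_all _ fun v => ?_)
    simp only [smul_eq_mul]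
    rw [ENNReal.toReal_ofReal (Finset.prod_nonneg fun l _ => ha0 _ _), mul_comm]
  rw [e1, e2]
  have hs : ∀ l, SigmaFinite (Measure.map F (P.withDensity fun e => ENNReal.ofReal (κ l e))) := by
    intro l
    rw [hlaw l]
    infer_instance
  have e3 := Measure.pi_map_pi (μ := fun l : ι => P.withDensity fun e => ENNReal.ofReal (κ l e))
    (f := fun _ => F) (fun l => hF.aemeasurable)
  simp only [hlaw] at e3
  rw [← e3, integral_map]
  · exact (measurable_pi_lambda _ fun l => hF.comp (measurable_pi_apply l)).aemeasurable
  · exact hψ.aestronglyMeasurable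

/-- Deletion of the middle coordinate. -/
lemma map_del {X Y Z : Type*} [MeasureSpace X] [MeasureSpace Y] [MeasureSpace Z]
    [SigmaFinite (volume : Measure X)] [SigmaFinite (volume : Measure Y)]
    [SigmaFinite (volume : Measure Z)] (f : X × Y × Z → ℝ) (hf : Measurable f)
    (hf0 : ∀ q, 0 ≤ f q) (hfi : Integrable f) :
    Measure.map (fun v : X × Y × Z => (v.1, v.2.2))
      ((volume : Measure (X × Y × Z)).withDensity fun v => ENNReal.ofReal (f v))
      = (volume.prod volume : Measure (X × Z)).withDensity
        fun q => ENNReal.ofReal (∫ y, f (q.1, y, q.2)) := by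
  have hT : Measurable (fun v : X × Y × Z => (v.1, v.2.2)) := by fun_prop
  -- rearrangement
  let R : (X × Z) × Y → X × Y × Z := fun a => (a.1.1, a.2, a.1.2)
  have hR : MeasurePreserving R (((volume : Measure X).prod (volume : Measure Z)).prod volume)
      (volume.prod (volume.prod volume)) := by
    have h1 : MeasurePreserving (MeasurableEquiv.prodAssoc : (X × Z) × Y ≃ᵐ X × Z × Y)
        (((volume : Measure X).prod (volume : Measure Z)).prod volume)
        (volume.prod (volume.prod volume)) := ⟨MeasurableEquiv.measurable _, Measure.prodAssoc_prod⟩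
    have h2 : MeasurePreserving (Prod.map id Prod.swap : X × Z × Y → X × Y × Z)
        (volume.prod (volume.prod volume)) (volume.prod (volume.prod volume)) :=
      (MeasurePreserving.id volume).prod Measure.measurePreserving_swap
    exact h2.comp h1
  have hi : Integrable (fun a : (X × Z) × Y => f (R a))
      (((volume : Measure X).prod (volume : Measure Z)).prod volume) := by
    exact (hR.integrable_comp hfi.aestronglyMeasurable).2 hfi
  ext s hs
  rw [Measure.map_apply hT hs, withDensity_apply _ (hT hs), withDensity_apply _ hs,
    ← lintegral_indicator (hT hs), ← lintegral_indicator hs]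
  have hm : Measurable (((fun v : X × Y × Z => (v.1, v.2.2)) ⁻¹' s).indicator
      fun v => ENNReal.ofReal (f v)) := hf.ennreal_ofReal.indicator (hT hs)
  have e := hR.lintegral_comp hm
  have hm' : Measurable (fun a => ((fun v : X × Y × Z => (v.1, v.2.2)) ⁻¹' s).indicator
      (fun v => ENNReal.ofReal (f v)) (R a)) := hm.comp hR.measurable
  rw [show (volume : Measure (X × Y × Z)) = volume.prod (volume.prod volume) from rfl, ← e,
    lintegral_prod _ hm'.aemeasurable]
  refine lintegral_congr_ae ?_
  filter_upwards [hi.prod_right_ae] with q hq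
  by_cases hqs : q ∈ s
  · rw [Set.indicator_of_mem hqs, ofReal_integral_eq_lintegral_ofReal hq
      (ae_of_all _ fun _ => hf0 _)]
    refine lintegral_congr fun y => ?_
    rw [Set.indicator_of_mem]
    exact hqs
  · rw [Set.indicator_of_notMem hqs]
    rw [lintegral_eq_zero_of_ae_eq_zero]
    refine ae_of_all _ fun y => ?_
    exact Set.indicator_of_notMem (a := R (q, y)) (s := (fun v : X × Y × Z => (v.1, v.2.2)) ⁻¹' s)
      hqs _

/-- The joint density on the product space. -/
def pH {dX dY dZ : ℕ} (p : Euc dX → Euc dY → Euc dZ → ℝ) (v : Dat dX dY dZ) : ℝ := p v.1 v.2.1 v.2.2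

/-- The `(X, Z)`-marginal density. -/
def qH {dX dY dZ : ℕ} (p : Euc dX → Euc dY → Euc dZ → ℝ) (q : Euc dX × Euc dZ) : ℝ :=
  ∫ y, p q.1 y q.2

/-- The law of one observation. -/
def lawP {dX dY dZ : ℕ} (p : Euc dX → Euc dY → Euc dZ → ℝ) : Measure (Dat dX dY dZ) :=
  volume.withDensity fun v => ENNReal.ofReal (pH p v)

/-- The properties of the density which are used. -/
structure GoodDens {dX dY dZ : ℕ} (p : Euc dX → Euc dY → Euc dZ → ℝ) (C : ℝ) : Prop where
  meas : Measurable (pH p)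
  nonneg : ∀ x y z, 0 ≤ p x y z
  prob : IsProbabilityMeasure (lawP p)
  one_le : 1 ≤ C
  le : ∀ x y z, p x y z ≤ C
  leYZ : ∀ y z, ∫ x, p x y z ≤ C
  leXZ : ∀ x z, ∫ y, p x y z ≤ C
  leZ : ∀ z, ∫ x, ∫ y, p x y z ≤ C

namespace GoodDens

variable {dX dY dZ : ℕ} {p : Euc dX → Euc dY → Euc dZ → ℝ} {C : ℝ}

lemma pH_nonneg (hp : GoodDens p C) (v) : 0 ≤ pH p v := hp.nonneg _ _ _

lemma pH_int (hp : GoodDens p C) : Integrable (pH p) := by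
  refine ⟨hp.meas.aestronglyMeasurable, ?_⟩
  have h1 : lawP p Set.univ = 1 := hp.prob.measure_univ
  rw [lawP, withDensity_apply _ MeasurableSet.univ, Measure.restrict_univ] at h1
  rw [hasFiniteIntegral_iff_ofReal (ae_of_all _ hp.pH_nonneg), h1]
  exact ENNReal.one_lt_top

lemma qH_meas (hp : GoodDens p C) : Measurable (qH p) := by
  have h : Measurable (fun a : (Euc dX × Euc dZ) × Euc dY => pH p (a.1.1, a.2, a.1.2)) :=
    hp.meas.comp (by fun_prop)
  exact (h.stronglyMeasurable.integral_prod_right').measurable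

lemma qH_nonneg (hp : GoodDens p C) (q) : 0 ≤ qH p q := integral_nonneg fun _ => hp.nonneg _ _ _

lemma qH_le (hp : GoodDens p C) (q) : qH p q ≤ C := hp.leXZ _ _

lemma map_law (hp : GoodDens p C) : Measure.map (fun v : Dat dX dY dZ => (v.1, v.2.2)) (lawP p)
    = (volume.prod volume : Measure (Euc dX × Euc dZ)).withDensity
        fun q => ENNReal.ofReal (qH p q) :=
  map_del (pH p) hp.meas hp.pH_nonneg hp.pH_int

lemma qH_int (hp : GoodDens p C) : Integrable (qH p) (volume.prod volume) := by
  refine ⟨hp.qH_meas.aestronglyMeasurable, ?_⟩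
  have hm : Measurable (fun v : Dat dX dY dZ => (v.1, v.2.2)) := by fun_prop
  have := hp.prob
  have h1 : Measure.map (fun v : Dat dX dY dZ => (v.1, v.2.2)) (lawP p) Set.univ = 1 := by
    rw [Measure.map_apply hm MeasurableSet.univ]
    simp
  rw [hp.map_law, withDensity_apply _ MeasurableSet.univ, Measure.restrict_univ] at h1
  rw [hasFiniteIntegral_iff_ofReal (ae_of_all _ hp.qH_nonneg), h1]
  exact ENNReal.one_lt_top

lemma boundW (hp : GoodDens p C) (F : Euc dY × Euc dZ → ℝ≥0∞) (hF : Measurable F) :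
    ∫⁻ v, F v.2 ∂(lawP p) ≤ ENNReal.ofReal C * ∫⁻ w, F w :=
  marg_bound (pH p) hp.meas hp.pH_nonneg hp.pH_int C (fun w => hp.leYZ w.1 w.2) F hF

lemma boundZ (hp : GoodDens p C) (F : Euc dZ → ℝ≥0∞) (hF : Measurable F) :
    ∫⁻ v, F v.2.2 ∂(lawP p) ≤ ENNReal.ofReal C * ∫⁻ w, F w := by
  have h := marg_bound (qH p) hp.qH_meas hp.qH_nonneg hp.qH_int C (fun w => hp.leZ _) F hF
  have hm : Measurable (fun v : Dat dX dY dZ => (v.1, v.2.2)) := by fun_prop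
  rw [← hp.map_law, lintegral_map (f := fun q : Euc dX × Euc dZ => F q.2)
    (hF.comp measurable_snd) hm] at h
  exact h

end GoodDens

instance prodHaar (dY dZ : ℕ) : (volume : Measure (Euc dY × Euc dZ)).IsAddHaarMeasure :=
  inferInstanceAs ((volume : Measure (Euc dY)).prod (volume : Measure (Euc dZ))).IsAddHaarMeasure

lemma scaled_kernel {V : Type*}
    [NormedAddCommGroup V] [NormedSpace ℝ V] [FiniteDimensional ℝ V] [MeasureSpace V] [BorelSpace V]
    [(volume : Measure V).IsAddHaarMeasure] (g : V → ℝ) (hgi : Integrable g)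
    (hg0 : ∀ u, 0 ≤ g u) (hg1 : ∫ u, g u = 1) (h : ℝ) (hh : 0 < h) (w : V) :
    ∫⁻ w', ENNReal.ofReal ((h ^ Module.finrank ℝ V)⁻¹ * g (h⁻¹ • (w - w'))) = 1 := by
  have : ProperSpace V := FiniteDimensional.proper ℝ V
  have hki : Integrable (fun w' : V => (h ^ Module.finrank ℝ V)⁻¹ * g (h⁻¹ • (w - w'))) := by
    refine Integrable.const_mul ?_ _
    have h1 : Integrable (fun v : V => g (h⁻¹ • v)) := hgi.comp_smul (inv_ne_zero hh.ne')
    exact h1.comp_sub_left w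
  have h2 := smoothK_eq (X := Unit) g (fun _ => 1) h hh () w
  simp only [mul_one, smoothK] at h2
  rw [hg1] at h2
  rw [← ofReal_integral_eq_lintegral_ofReal hki
    (ae_of_all _ fun w' => mul_nonneg (by positivity) (hg0 _)), h2, ENNReal.ofReal_one]

lemma ballδ_mem {d : ℕ} (x y z : Euc d) : 0 ≤ ballδ x y z ∧ ballδ x y z ≤ 1 := by
  unfold ballδ
  split_ifs <;> norm_num

lemma ballη_mem {d : ℕ} (x y z z' : Euc d) : 0 ≤ ballη x y z z' ∧ ballη x y z z' ≤ 1 := by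
  have h1 := ballδ_mem x y z
  have h2 := ballδ_mem x y z'
  exact ⟨mul_nonneg h1.1 h2.1, mul_le_one₀ h1.2 h2.1 h2.2⟩

lemma ballφ_abs {d : ℕ} (u v : Fin 4 → Euc d) : |ballφ u v| ≤ 8 := by
  unfold ballφ ballφA
  have a1 := ballη_mem (u 0) (u 1) (u 2) (u 3)
  have a2 := ballη_mem (u 0) (u 1) (v 2) (v 3)
  have a3 := ballη_mem (u 0) (u 1) (u 2) (v 2)
  have a4 := ballη_mem (u 0) (u 1) (u 3) (v 3)
  have b1 := ballη_mem (v 0) (v 1) (v 2) (v 3)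
  have b2 := ballη_mem (v 0) (v 1) (u 2) (u 3)
  have b3 := ballη_mem (v 0) (v 1) (v 2) (u 2)
  have b4 := ballη_mem (v 0) (v 1) (v 3) (u 3)
  rw [abs_le]
  constructor <;> linarith [a1.1, a1.2, a2.1, a2.2, a3.1, a3.2, a4.1, a4.2, b1.1, b1.2, b2.1, b2.2,
    b3.1, b3.2, b4.1, b4.2]

lemma ballφ'_abs {d : ℕ} (u v : Fin 4 → Euc d) : |ballφ' u v| ≤ 8 := by
  unfold ballφ'
  rw [abs_mul, abs_of_nonneg (by positivity)]
  have h1 : |∑ τ : Equiv.Perm (Fin 4), ∑ σ : Equiv.Perm (Fin 4), ballφ (u ∘ τ) (v ∘ σ)|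
      ≤ ∑ τ : Equiv.Perm (Fin 4), ∑ σ : Equiv.Perm (Fin 4), 8 :=
    (Finset.abs_sum_le_sum_abs _ _).trans (Finset.sum_le_sum fun τ _ =>
      (Finset.abs_sum_le_sum_abs _ _).trans (Finset.sum_le_sum fun σ _ => ballφ_abs _ _))
  have h2 : (∑ τ : Equiv.Perm (Fin 4), ∑ σ : Equiv.Perm (Fin 4), (8 : ℝ))
      = ((Nat.factorial 4 * Nat.factorial 4 : ℕ) : ℝ) * 8 := by
    simp only [Finset.sum_const, Finset.card_univ, Fintype.card_perm, Fintype.card_fin,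
      nsmul_eq_mul]
    push_cast
    ring
  rw [h2] at h1
  rw [inv_mul_le_iff₀ (by positivity)]
  exact h1

lemma ballδ_meas {d : ℕ} {α : Type*} [MeasurableSpace α] {a b c : α → Euc d} (ha : Measurable a)
    (hb : Measurable b) (hc : Measurable c) : Measurable (fun t => ballδ (a t) (b t) (c t)) := by
  unfold ballδ
  exact Measurable.ite (measurableSet_le (ha.dist hc) (ha.dist hb)) measurable_const
    measurable_const

lemma ballη_meas {d : ℕ} {α : Type*} [MeasurableSpace α] {a b c e : α → Euc d} (ha : Measurable a)
    (hb : Measurable b) (hc : Measurable c) (he : Measurable e) :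
    Measurable (fun t => ballη (a t) (b t) (c t) (e t)) :=
  (ballδ_meas ha hb hc).mul (ballδ_meas ha hb he)

lemma ballφA_meas {d : ℕ} {α : Type*} [MeasurableSpace α] {a b c e f g : α → Euc d}
    (ha : Measurable a) (hb : Measurable b) (hc : Measurable c) (he : Measurable e)
    (hf : Measurable f) (hg : Measurable g) :
    Measurable (fun t => ballφA (a t) (b t) (c t) (e t) (f t) (g t)) :=
  (((ballη_meas ha hb hc he).add (ballη_meas ha hb hf hg)).sub (ballη_meas ha hb hc hf)).sub
    (ballη_meas ha hb he hg)

lemma psi_meas {dX : ℕ} : Measurable (psi (dX := dX)) := by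
  unfold psi ballφ' ballφ
  refine Measurable.const_mul (Finset.measurable_sum _ fun τ _ =>
    Finset.measurable_sum _ fun σ _ => Measurable.add (ballφA_meas ?_ ?_ ?_ ?_ ?_ ?_)
      (ballφA_meas ?_ ?_ ?_ ?_ ?_ ?_)) _ <;> exact measurable_pi_apply _

lemma psi_abs {dX : ℕ} (x : Fin 8 → Euc dX) : |psi x| ≤ 8 := ballφ'_abs _ _

/-- The properties of the kernel versions. -/
structure GoodKer {V : Type*} [MeasureSpace V] (g : V → ℝ) (CK : ℝ) : Prop where
  meas : Measurable g
  nonneg : ∀ u, 0 ≤ g u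
  CK0 : 0 ≤ CK
  le : ∀ u, g u ≤ CK
  int : Integrable g
  one : ∫ u, g u = 1

section kernfacts

variable {dX dY dZ : ℕ} {p : Euc dX → Euc dY → Euc dZ → ℝ} {C : ℝ}
  {g1 : Euc dY × Euc dZ → ℝ} {g2 : Euc dZ → ℝ} {c1 c2 : ℝ} {h1 h2 : ℝ}

lemma kern_meas (k1 : GoodKer g1 c1) (k2 : GoodKer g2 c2) (l : Fin 8) :
    Measurable (fun q : Dat dX dY dZ × Dat dX dY dZ => kern g1 g2 h1 h2 l q.1 q.2) := by
  unfold kern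
  split_ifs
  · exact (k1.meas.comp (by fun_prop)).const_mul _
  · exact (k2.meas.comp (by fun_prop)).const_mul _

lemma kern_meas' (k1 : GoodKer g1 c1) (k2 : GoodKer g2 c2) (l : Fin 8) (v0 : Dat dX dY dZ) :
    Measurable (fun v => kern g1 g2 h1 h2 l v0 v) := by
  unfold kern
  split_ifs
  · exact (k1.meas.comp (by fun_prop)).const_mul _
  · exact (k2.meas.comp (by fun_prop)).const_mul _

lemma kern_nonneg (k1 : GoodKer g1 c1) (k2 : GoodKer g2 c2) (hh1 : 0 < h1) (hh2 : 0 < h2)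
    (l : Fin 8) (v0 v : Dat dX dY dZ) : 0 ≤ kern g1 g2 h1 h2 l v0 v := by
  unfold kern
  split_ifs
  · exact mul_nonneg (by positivity) (k1.nonneg _)
  · exact mul_nonneg (by positivity) (k2.nonneg _)

lemma kern_le (k1 : GoodKer g1 c1) (k2 : GoodKer g2 c2) (hh1 : 0 < h1) (hh2 : 0 < h2)
    (l : Fin 8) (v0 v : Dat dX dY dZ) :
    kern g1 g2 h1 h2 l v0 v ≤ c1 * (h1 ^ (dY + dZ))⁻¹ + c2 * (h2 ^ dZ)⁻¹ := by
  have a1 : 0 ≤ c1 * (h1 ^ (dY + dZ))⁻¹ := mul_nonneg k1.CK0 (by positivity)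
  have a2 : 0 ≤ c2 * (h2 ^ dZ)⁻¹ := mul_nonneg k2.CK0 (by positivity)
  unfold kern
  split_ifs
  · have := mul_le_mul_of_nonneg_left (k1.le (h1⁻¹ • (v0.2 - v.2)))
      (by positivity : 0 ≤ (h1 ^ (dY + dZ))⁻¹)
    linarith
  · have := mul_le_mul_of_nonneg_left (k2.le (h2⁻¹ • (v0.2.2 - v.2.2)))
      (by positivity : 0 ≤ (h2 ^ dZ)⁻¹)
    linarith

lemma kern_lint (hp : GoodDens p C) (k1 : GoodKer g1 c1) (k2 : GoodKer g2 c2) (hh1 : 0 < h1)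
    (hh2 : 0 < h2) (l : Fin 8) (v0 : Dat dX dY dZ) :
    ∫⁻ v, ENNReal.ofReal (kern g1 g2 h1 h2 l v0 v) ∂(lawP p) ≤ ENNReal.ofReal C := by
  unfold kern
  split_ifs
  · have hm : Measurable (fun w : Euc dY × Euc dZ =>
        ENNReal.ofReal ((h1 ^ (dY + dZ))⁻¹ * g1 (h1⁻¹ • (v0.2 - w)))) :=
      ((k1.meas.comp (by fun_prop)).const_mul _).ennreal_ofReal
    refine (hp.boundW _ hm).trans (le_of_eq ?_)
    have := scaled_kernel g1 k1.int k1.nonneg k1.one h1 hh1 v0.2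
    rw [show Module.finrank ℝ (Euc dY × Euc dZ) = dY + dZ by simp] at this
    rw [this, mul_one]
  · have hm : Measurable (fun w : Euc dZ =>
        ENNReal.ofReal ((h2 ^ dZ)⁻¹ * g2 (h2⁻¹ • (v0.2.2 - w)))) :=
      ((k2.meas.comp (by fun_prop)).const_mul _).ennreal_ofReal
    refine (hp.boundZ _ hm).trans (le_of_eq ?_)
    have := scaled_kernel g2 k2.int k2.nonneg k2.one h2 hh2 v0.2.2
    rw [show Module.finrank ℝ (Euc dZ) = dZ by simp] at this
    rw [this, mul_one]

lemma kern_int (hp : GoodDens p C) (k1 : GoodKer g1 c1) (k2 : GoodKer g2 c2) (hh1 : 0 < h1)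
    (hh2 : 0 < h2) (l : Fin 8) (v0 : Dat dX dY dZ) :
    Integrable (fun v => kern g1 g2 h1 h2 l v0 v) (lawP p) := by
  have hm := kern_meas' (dX := dX) (h1 := h1) (h2 := h2) k1 k2 l v0
  refine ⟨hm.aestronglyMeasurable, ?_⟩
  rw [hasFiniteIntegral_iff_ofReal (ae_of_all _ fun v => kern_nonneg k1 k2 hh1 hh2 l v0 v)]
  exact (kern_lint hp k1 k2 hh1 hh2 l v0).trans_lt ENNReal.ofReal_lt_top

lemma kern_int_le (hp : GoodDens p C) (k1 : GoodKer g1 c1) (k2 : GoodKer g2 c2) (hh1 : 0 < h1)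
    (hh2 : 0 < h2) (l : Fin 8) (v0 : Dat dX dY dZ) :
    ∫ v, kern g1 g2 h1 h2 l v0 v ∂(lawP p) ≤ C := by
  have h := kern_lint hp k1 k2 hh1 hh2 l v0
  rw [← ofReal_integral_eq_lintegral_ofReal (kern_int hp k1 k2 hh1 hh2 l v0)
    (ae_of_all _ fun v => kern_nonneg k1 k2 hh1 hh2 l v0 v)] at h
  exact (ENNReal.ofReal_le_ofReal_iff (by linarith [hp.one_le])).1 h

end kernfacts

/-- Smoothed densities. -/
def smD {dX dY dZ : ℕ} (p : Euc dX → Euc dY → Euc dZ → ℝ) (g1 : Euc dY × Euc dZ → ℝ)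
    (g2 : Euc dZ → ℝ) (h1 h2 : ℝ) (l : Fin 8) (w : Euc dY × Euc dZ) (x : Euc dX) : ℝ :=
  if l.val < 4 then smoothK g1 (pH p) h1 x w else smoothK g2 (qH p) h2 x w.2

/-- Limiting densities. -/
def limD {dX dY dZ : ℕ} (p : Euc dX → Euc dY → Euc dZ → ℝ) (l : Fin 8) (w : Euc dY × Euc dZ)
    (x : Euc dX) : ℝ :=
  if l.val < 4 then pH p (x, w) else qH p (x, w.2)

/-- Limiting mean. -/
def thetaL {dX dY dZ : ℕ} (p : Euc dX → Euc dY → Euc dZ → ℝ) (w : Euc dY × Euc dZ) : ℝ :=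
  ∫ x, psi x * ∏ l, limD p l w (x l) ∂(Measure.pi fun _ : Fin 8 => (volume : Measure (Euc dX)))

section

variable {dX dY dZ : ℕ} {p : Euc dX → Euc dY → Euc dZ → ℝ} {C : ℝ}
  {g1 : Euc dY × Euc dZ → ℝ} {g2 : Euc dZ → ℝ} {c1 c2 : ℝ} {h1 h2 : ℝ}

lemma smD_meas (hp : GoodDens p C) (k1 : GoodKer g1 c1) (k2 : GoodKer g2 c2) (l : Fin 8) :
    Measurable (fun q : Euc dX × (Euc dY × Euc dZ) => smD p g1 g2 h1 h2 l q.2 q.1) := by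
  unfold smD
  split_ifs
  · exact smoothK_measurable g1 k1.meas (pH p) hp.meas h1
  · have h := smoothK_measurable g2 k2.meas (qH p) hp.qH_meas h2
    have hm : Measurable (fun q : Euc dX × (Euc dY × Euc dZ) => (q.1, q.2.2)) := by fun_prop
    exact h.comp hm

lemma limD_meas (hp : GoodDens p C) (l : Fin 8) :
    Measurable (fun q : Euc dX × (Euc dY × Euc dZ) => limD p l q.2 q.1) := by
  unfold limD
  split_ifs
  · exact hp.meas
  · have hm : Measurable (fun q : Euc dX × (Euc dY × Euc dZ) => (q.1, q.2.2)) := by fun_prop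
    exact hp.qH_meas.comp hm

lemma smD_nonneg (hp : GoodDens p C) (k1 : GoodKer g1 c1) (k2 : GoodKer g2 c2) (l : Fin 8) (w)
    (x : Euc dX) : 0 ≤ smD p g1 g2 h1 h2 l w x := by
  unfold smD smoothK
  split_ifs
  · exact integral_nonneg fun u => mul_nonneg (k1.nonneg _) (hp.pH_nonneg _)
  · exact integral_nonneg fun u => mul_nonneg (k2.nonneg _) (hp.qH_nonneg _)

lemma limD_nonneg (hp : GoodDens p C) (l : Fin 8) (w) (x : Euc dX) : 0 ≤ limD p l w x := by
  unfold limD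
  split_ifs
  · exact hp.pH_nonneg _
  · exact hp.qH_nonneg _

lemma smD_law (hp : GoodDens p C) (k1 : GoodKer g1 c1) (k2 : GoodKer g2 c2) (hh1 : 0 < h1)
    (hh2 : 0 < h2) (l : Fin 8) (v0 : Dat dX dY dZ) :
    Measure.map Prod.fst ((lawP p).withDensity fun v => ENNReal.ofReal (kern g1 g2 h1 h2 l v0 v))
      = volume.withDensity fun x => ENNReal.ofReal (smD p g1 g2 h1 h2 l v0.2 x) := by
  unfold kern smD
  split_ifs
  · have := smoothK_law g1 k1.meas k1.int k1.nonneg (pH p) hp.meas hp.pH_nonneg C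
      (fun q => hp.le _ _ _) h1 hh1 v0.2
    rw [show Module.finrank ℝ (Euc dY × Euc dZ) = dY + dZ by simp] at this
    exact this
  · have := smoothK_law g2 k2.meas k2.int k2.nonneg (qH p) hp.qH_meas hp.qH_nonneg C
      (fun q => hp.qH_le _) h2 hh2 v0.2.2
    rw [show Module.finrank ℝ (Euc dZ) = dZ by simp] at this
    rw [← this, ← hp.map_law]
    have hT : Measurable (fun v : Dat dX dY dZ => (v.1, v.2.2)) := by fun_prop
    have hk : Measurable (fun q : Euc dX × Euc dZ =>
        ENNReal.ofReal ((h2 ^ dZ)⁻¹ * g2 (h2⁻¹ • (v0.2.2 - q.2)))) :=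
      ((k2.meas.comp (by fun_prop)).const_mul _).ennreal_ofReal
    rw [← map_withDensity_comp (lawP p) _ hT _ hk, Measure.map_map measurable_fst hT]
    rfl

lemma smD_lint (hp : GoodDens p C) (k1 : GoodKer g1 c1) (k2 : GoodKer g2 c2) (hh1 : 0 < h1)
    (hh2 : 0 < h2) (l : Fin 8) (w : Euc dY × Euc dZ) :
    ∫⁻ x, ENNReal.ofReal (smD p g1 g2 h1 h2 l w x) ≤ ENNReal.ofReal C := by
  have h := congrArg (fun ν => ν Set.univ) (smD_law hp k1 k2 hh1 hh2 l ((0 : Euc dX), w))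
  simp only at h
  rw [Measure.map_apply measurable_fst MeasurableSet.univ, Set.preimage_univ,
    withDensity_apply _ MeasurableSet.univ, withDensity_apply _ MeasurableSet.univ,
    Measure.restrict_univ, Measure.restrict_univ] at h
  rw [← h]
  exact kern_lint hp k1 k2 hh1 hh2 l _

lemma smD_meas' (hp : GoodDens p C) (k1 : GoodKer g1 c1) (k2 : GoodKer g2 c2) (l : Fin 8) (w) :
    Measurable (fun x : Euc dX => smD p g1 g2 h1 h2 l w x) := by
  have h := smD_meas (h1 := h1) (h2 := h2) hp k1 k2 l
  have hm : Measurable (fun x : Euc dX => (x, w)) := measurable_prodMk_right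
  exact h.comp hm

lemma smD_int (hp : GoodDens p C) (k1 : GoodKer g1 c1) (k2 : GoodKer g2 c2) (hh1 : 0 < h1)
    (hh2 : 0 < h2) (l : Fin 8) (w : Euc dY × Euc dZ) :
    Integrable (fun x => smD p g1 g2 h1 h2 l w x) := by
  refine ⟨(smD_meas' hp k1 k2 l w).aestronglyMeasurable, ?_⟩
  rw [hasFiniteIntegral_iff_ofReal (ae_of_all _ fun v => smD_nonneg hp k1 k2 l w v)]
  exact (smD_lint hp k1 k2 hh1 hh2 l w).trans_lt ENNReal.ofReal_lt_top

lemma smD_int_le (hp : GoodDens p C) (k1 : GoodKer g1 c1) (k2 : GoodKer g2 c2) (hh1 : 0 < h1)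
    (hh2 : 0 < h2) (l : Fin 8) (w : Euc dY × Euc dZ) :
    ∫ x, smD p g1 g2 h1 h2 l w x ≤ C := by
  have h := smD_lint hp k1 k2 hh1 hh2 l w
  rw [← ofReal_integral_eq_lintegral_ofReal (smD_int hp k1 k2 hh1 hh2 l w)
    (ae_of_all _ fun v => smD_nonneg hp k1 k2 l w v)] at h
  exact (ENNReal.ofReal_le_ofReal_iff (by linarith [hp.one_le])).1 h

lemma thetaN_eq (hp : GoodDens p C) (k1 : GoodKer g1 c1) (k2 : GoodKer g2 c2) (hh1 : 0 < h1)
    (hh2 : 0 < h2) (v0 : Dat dX dY dZ) :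
    ∫ v, coreG g1 g2 h1 h2 v0 v ∂(Measure.pi fun _ : Fin 8 => lawP p)
      = ∫ x, psi x * ∏ l, smD p g1 g2 h1 h2 l v0.2 (x l)
        ∂(Measure.pi fun _ : Fin 8 => (volume : Measure (Euc dX))) := by
  have := hp.prob
  unfold coreG
  exact theta_rep (lawP p) volume (fun l v => kern g1 g2 h1 h2 l v0 v)
    (fun l => kern_meas' k1 k2 l v0) (fun l v => kern_nonneg k1 k2 hh1 hh2 l v0 v)
    (fun l => kern_int hp k1 k2 hh1 hh2 l v0) Prod.fst measurable_fst
    (fun l x => smD p g1 g2 h1 h2 l v0.2 x) (fun l => smD_meas' hp k1 k2 l _)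
    (fun l x => smD_nonneg hp k1 k2 l _ x) (fun l => smD_int hp k1 k2 hh1 hh2 l _)
    (fun l => smD_law hp k1 k2 hh1 hh2 l v0) psi psi_meas

/-- Good points: the sections are integrable. -/
lemma limD_ae (hp : GoodDens p C) :
    ∀ᵐ w : Euc dY × Euc dZ, ∀ l, Integrable (fun x : Euc dX => limD p l w x) := by
  have a1 : ∀ᵐ w : Euc dY × Euc dZ, Integrable (fun x : Euc dX => pH p (x, w)) :=
    Integrable.prod_left_ae (μ := (volume : Measure (Euc dX))) hp.pH_int
  have a2 : ∀ᵐ z : Euc dZ, Integrable (fun x : Euc dX => qH p (x, z)) := hp.qH_int.prod_left_ae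
  have a3 : ∀ᵐ w : Euc dY × Euc dZ, Integrable (fun x : Euc dX => qH p (x, w.2)) :=
    (Measure.quasiMeasurePreserving_snd (μ := (volume : Measure (Euc dY)))
      (ν := (volume : Measure (Euc dZ)))).ae a2
  filter_upwards [a1, a3] with w h1 h3 l
  unfold limD
  split_ifs
  · exact h1
  · exact h3

lemma limD_int_le (hp : GoodDens p C) (l : Fin 8) (w : Euc dY × Euc dZ) :
    ∫ x, limD p l w x ≤ C := by
  unfold limD
  split_ifs
  · exact hp.leYZ w.1 w.2
  · exact hp.leZ _

lemma theta_diff_pt (hp : GoodDens p C) (k1 : GoodKer g1 c1) (k2 : GoodKer g2 c2) (hh1 : 0 < h1)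
    (hh2 : 0 < h2) (v0 : Dat dX dY dZ)
    (hw : ∀ l, Integrable (fun x : Euc dX => limD p l v0.2 x)) :
    ‖∫ v, coreG g1 g2 h1 h2 v0 v ∂(Measure.pi fun _ : Fin 8 => lawP p) - thetaL p v0.2‖ₑ
      ≤ ENNReal.ofReal (8 * (2 * C) ^ 8) *
        ∑ l, ∫⁻ x, ‖smD p g1 g2 h1 h2 l v0.2 x - limD p l v0.2 x‖ₑ := by
  have h := theta_diff (volume : Measure (Euc dX)) psi psi_meas 8 C psi_abs hp.one_le
    (fun l x => smD p g1 g2 h1 h2 l v0.2 x) (fun l x => limD p l v0.2 x)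
    (fun l x => smD_nonneg hp k1 k2 l _ x) (fun l x => limD_nonneg hp l _ x)
    (fun l => smD_int hp k1 k2 hh1 hh2 l _) hw (fun l => smD_int_le hp k1 k2 hh1 hh2 l _)
    (fun l => limD_int_le hp l _)
  rw [thetaN_eq hp k1 k2 hh1 hh2, thetaL, ← ofReal_norm, Real.norm_eq_abs]
  refine (ENNReal.ofReal_le_ofReal h).trans (le_of_eq ?_)
  have hC := hp.one_le
  rw [Fintype.card_fin, ENNReal.ofReal_mul (by positivity), ENNReal.ofReal_sum_of_nonneg
    (fun l _ => integral_nonneg fun x => abs_nonneg _)]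
  congr 1
  refine Finset.sum_congr rfl fun l _ => ?_
  have hi : Integrable (fun x => smD p g1 g2 h1 h2 l v0.2 x - limD p l v0.2 x) :=
    (smD_int hp k1 k2 hh1 hh2 l v0.2).sub (hw l)
  rw [← ofReal_integral_norm_eq_lintegral_enorm hi]
  rfl

end

lemma limD_tendsto {dX dY dZ : ℕ} {p : Euc dX → Euc dY → Euc dZ → ℝ} {C : ℝ}
    {g1 : Euc dY × Euc dZ → ℝ} {g2 : Euc dZ → ℝ} {c1 c2 : ℝ}
    (hp : GoodDens p C) (k1 : GoodKer g1 c1) (k2 : GoodKer g2 c2) (h1 h2 : ℕ → ℝ)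
    (t1 : Tendsto h1 atTop (𝓝 0)) (t2 : Tendsto h2 atTop (𝓝 0)) (l : Fin 8) :
    Tendsto (fun n => ∫⁻ v : Dat dX dY dZ, ∫⁻ x,
      ‖smD p g1 g2 (h1 n) (h2 n) l v.2 x - limD p l v.2 x‖ₑ ∂volume ∂(lawP p)) atTop (𝓝 0) := by
  have hm : ∀ n, Measurable (fun q : Euc dX × (Euc dY × Euc dZ) =>
      ‖smD p g1 g2 (h1 n) (h2 n) l q.2 q.1 - limD p l q.2 q.1‖ₑ) := fun n =>
    ((smD_meas hp k1 k2 l).sub (limD_meas hp l)).enorm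
  by_cases hl : l.val < 4
  · have h := smoothK_tendsto (pH p) hp.meas hp.pH_int C
      (fun q => by rw [abs_of_nonneg (hp.pH_nonneg _)]; exact hp.le _ _ _) g1 k1.meas k1.int k1.one
      h1 t1
    have h' := ENNReal.Tendsto.const_mul (a := ENNReal.ofReal C) h (Or.inr ENNReal.ofReal_ne_top)
    rw [mul_zero] at h'
    refine tendsto_of_tendsto_of_tendsto_of_le_of_le tendsto_const_nhds h' (fun _ => zero_le)
      fun n => ?_
    have hmn := hm n
    refine (hp.boundW (fun w => ∫⁻ x, ‖smD p g1 g2 (h1 n) (h2 n) l w x - limD p l w x‖ₑ)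
      (Measurable.lintegral_prod_left' hmn)).trans (le_of_eq ?_)
    congr 1
    have e := lintegral_prod_symm' (μ := (volume : Measure (Euc dX)))
      (ν := (volume : Measure (Euc dY × Euc dZ))) _ hmn
    rw [← e]
    refine lintegral_congr fun q => ?_
    simp only [smD, limD, if_pos hl]
  · have h := smoothK_tendsto (qH p) hp.qH_meas hp.qH_int C
      (fun q => by rw [abs_of_nonneg (hp.qH_nonneg _)]; exact hp.qH_le _) g2 k2.meas k2.int k2.one
      h2 t2
    have h' := ENNReal.Tendsto.const_mul (a := ENNReal.ofReal C) h (Or.inr ENNReal.ofReal_ne_top)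
    rw [mul_zero] at h'
    refine tendsto_of_tendsto_of_tendsto_of_le_of_le tendsto_const_nhds h' (fun _ => zero_le)
      fun n => ?_
    have hmn : Measurable (fun q : Euc dX × Euc dZ =>
        ‖smoothK g2 (qH p) (h2 n) q.1 q.2 - qH p q‖ₑ) :=
      ((smoothK_measurable g2 k2.meas (qH p) hp.qH_meas (h2 n)).sub hp.qH_meas).enorm
    simp only [smD, limD, if_neg hl]
    refine (hp.boundZ (fun z => ∫⁻ x, ‖smoothK g2 (qH p) (h2 n) x z - qH p (x, z)‖ₑ)
      (Measurable.lintegral_prod_left' hmn)).trans (le_of_eq ?_)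
    congr 1
    have e := lintegral_prod_symm' (μ := (volume : Measure (Euc dX)))
      (ν := (volume : Measure (Euc dZ))) _ hmn
    rw [← e]

lemma thetaL_meas {dX dY dZ : ℕ} {p : Euc dX → Euc dY → Euc dZ → ℝ} {C : ℝ}
    (hp : GoodDens p C) : Measurable (thetaL p) := by
  have hm : Measurable (fun a : (Euc dY × Euc dZ) × (Fin 8 → Euc dX) =>
      psi a.2 * ∏ l, limD p l a.1 (a.2 l)) := by
    refine (psi_meas.comp measurable_snd).mul (Finset.measurable_prod _ fun l _ => ?_)
    have h : Measurable (fun a : (Euc dY × Euc dZ) × (Fin 8 → Euc dX) => (a.2 l, a.1)) := by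
      fun_prop
    exact (limD_meas hp l).comp h
  exact (hm.stronglyMeasurable.integral_prod_right').measurable

/-- Convergence of the means. -/
lemma mean_tendsto {dX dY dZ : ℕ} {p : Euc dX → Euc dY → Euc dZ → ℝ} {C : ℝ}
    {g1 : Euc dY × Euc dZ → ℝ} {g2 : Euc dZ → ℝ} {c1 c2 : ℝ}
    (hp : GoodDens p C) (k1 : GoodKer g1 c1) (k2 : GoodKer g2 c2) (h1 h2 : ℕ → ℝ)
    (hh1 : ∀ n, 0 < h1 n) (hh2 : ∀ n, 0 < h2 n)
    (t1 : Tendsto h1 atTop (𝓝 0)) (t2 : Tendsto h2 atTop (𝓝 0)) :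
    Tendsto (fun n => ∫⁻ v0, ‖∫ v, coreG g1 g2 (h1 n) (h2 n) v0 v
      ∂(Measure.pi fun _ : Fin 8 => lawP p) - thetaL p v0.2‖ₑ ∂(lawP p)) atTop (𝓝 0) := by
  have hs : Tendsto (fun n => ENNReal.ofReal (8 * (2 * C) ^ 8) *
      ∑ l : Fin 8, ∫⁻ v : Dat dX dY dZ, ∫⁻ x,
      ‖smD p g1 g2 (h1 n) (h2 n) l v.2 x - limD p l v.2 x‖ₑ ∂volume ∂(lawP p)) atTop (𝓝 0) := by
    have h := tendsto_finsetSum (Finset.univ : Finset (Fin 8)) fun l _ =>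
      limD_tendsto hp k1 k2 h1 h2 t1 t2 l
    have h' := ENNReal.Tendsto.const_mul (a := ENNReal.ofReal (8 * (2 * C) ^ 8)) h
      (Or.inr ENNReal.ofReal_ne_top)
    simpa using h'
  refine tendsto_of_tendsto_of_tendsto_of_le_of_le tendsto_const_nhds hs (fun _ => zero_le)
      fun n => ?_
  have hml : ∀ l : Fin 8, Measurable (fun v : Dat dX dY dZ => ∫⁻ x,
      ‖smD p g1 g2 (h1 n) (h2 n) l v.2 x - limD p l v.2 x‖ₑ) := by
    intro l
    have hmn : Measurable (fun q : Euc dX × (Euc dY × Euc dZ) =>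
      ‖smD p g1 g2 (h1 n) (h2 n) l q.2 q.1 - limD p l q.2 q.1‖ₑ) :=
      ((smD_meas hp k1 k2 l).sub (limD_meas hp l)).enorm
    have h := Measurable.lintegral_prod_left' (μ := (volume : Measure (Euc dX))) hmn
    exact h.comp measurable_snd
  simp only
  rw [← lintegral_finsetSum _ fun l _ => hml l, ← lintegral_const_mul _
    (Finset.measurable_sum _ fun l _ => hml l)]
  refine lintegral_mono_ae ?_
  have hac : lawP p ≪ volume := withDensity_absolutelyContinuous _ _
  have hae : ∀ᵐ v : Dat dX dY dZ, ∀ l, Integrable (fun x : Euc dX => limD p l v.2 x) :=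
    (Measure.quasiMeasurePreserving_snd (μ := (volume : Measure (Euc dX)))
      (ν := (volume : Measure (Euc dY × Euc dZ)))).ae (limD_ae hp)
  filter_upwards [hac.ae_le hae] with v0 hv0
  exact theta_diff_pt hp k1 k2 (hh1 n) (hh2 n) v0 hv0

/-- Mass of the ball centred at the first point with the second point on the boundary. -/
def bm {d : ℕ} (A : Measure (Euc d)) (q : Euc d × Euc d) : ℝ :=
  (A (Metric.closedBall q.1 (dist q.2 q.1))).toReal

lemma bm_meas {d : ℕ} (A : Measure (Euc d)) [IsProbabilityMeasure A] : Measurable (bm A) := by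
  have hs : MeasurableSet {t : (Euc d × Euc d) × Euc d | dist t.2 t.1.1 ≤ dist t.1.2 t.1.1} :=
    measurableSet_le (by fun_prop) (by fun_prop)
  exact (measurable_measure_prodMk_left (ν := A) hs).ennreal_toReal

lemma bm_mem {d : ℕ} (A : Measure (Euc d)) [IsProbabilityMeasure A] (q) :
    0 ≤ bm A q ∧ bm A q ≤ 1 := by
  refine ⟨ENNReal.toReal_nonneg, ?_⟩
  exact measureReal_le_one

lemma bm_eq {d : ℕ} (A : Measure (Euc d)) (q : Euc d × Euc d) :
    ∫ s, ballδ q.1 q.2 s ∂A = bm A q := by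
  have : (fun s => ballδ q.1 q.2 s)
      = (Metric.closedBall q.1 (dist q.2 q.1)).indicator (fun _ => (1 : ℝ)) := by
    funext s
    unfold ballδ
    simp only [Set.indicator, Metric.mem_closedBall, dist_comm s q.1, dist_comm q.2 q.1]
  rw [this, integral_indicator Metric.isClosed_closedBall.measurableSet]
  simp [bm, Measure.real]

lemma quad_mp {E : Type*} [MeasurableSpace E] (ν : Fin 4 → Measure E)
    [∀ i, IsProbabilityMeasure (ν i)] :
    MeasurePreserving (fun t : (E × E) × (E × E) => ![t.1.1, t.1.2, t.2.1, t.2.2])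
      (((ν 0).prod (ν 1)).prod ((ν 2).prod (ν 3))) (Measure.pi ν) := by
  have hm : Measurable (fun t : (E × E) × (E × E) => ![t.1.1, t.1.2, t.2.1, t.2.2]) := by
    refine measurable_pi_iff.2 fun i => ?_
    fin_cases i
    · exact measurable_fst.comp measurable_fst
    · exact measurable_snd.comp measurable_fst
    · exact measurable_fst.comp measurable_snd
    · exact measurable_snd.comp measurable_snd
  refine ⟨hm, ?_⟩
  symm
  refine Measure.pi_eq fun s hs => ?_
  rw [Measure.map_apply hm (MeasurableSet.univ_pi hs)]
  have : (fun t : (E × E) × (E × E) => ![t.1.1, t.1.2, t.2.1, t.2.2]) ⁻¹' (Set.univ.pi s)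
      = (s 0 ×ˢ s 1) ×ˢ (s 2 ×ˢ s 3) := by
    ext t
    simp [Set.mem_pi, Fin.forall_fin_succ]
    tauto
  rw [this, Measure.prod_prod, Measure.prod_prod, Measure.prod_prod, Fin.prod_univ_four]
  ring

lemma eta_int {d : ℕ} {ι : Type*} [Fintype ι] (ν : ι → Measure (Euc d))
    [∀ i, IsProbabilityMeasure (ν i)] (e : Fin 4 → ι) (he : Function.Injective e) :
    ∫ x, ballη (x (e 0)) (x (e 1)) (x (e 2)) (x (e 3)) ∂(Measure.pi ν)
      = ∫ q, bm (ν (e 2)) q * bm (ν (e 3)) q ∂((ν (e 0)).prod (ν (e 1))) := by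
  have hF : Measurable (fun y : Fin 4 → Euc d => ballη (y 0) (y 1) (y 2) (y 3)) :=
    ballη_meas (measurable_pi_apply _) (measurable_pi_apply _) (measurable_pi_apply _)
      (measurable_pi_apply _)
  have m1 := mp_precomp ν e he
  have m2 := quad_mp fun k => ν (e k)
  have i1 : ∫ x, ballη (x (e 0)) (x (e 1)) (x (e 2)) (x (e 3)) ∂(Measure.pi ν)
      = ∫ y, ballη (y 0) (y 1) (y 2) (y 3) ∂(Measure.pi fun k => ν (e k)) := by
    rw [← m1.map_eq, integral_map m1.measurable.aemeasurable hF.aestronglyMeasurable]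
  rw [i1, ← m2.map_eq, integral_map m2.measurable.aemeasurable hF.aestronglyMeasurable]
  have hIntg : Integrable (fun t : (Euc d × Euc d) × (Euc d × Euc d) =>
      ballη t.1.1 t.1.2 t.2.1 t.2.2)
      (((ν (e 0)).prod (ν (e 1))).prod ((ν (e 2)).prod (ν (e 3)))) := by
    refine Integrable.of_bound (ballη_meas (by fun_prop) (by fun_prop) (by fun_prop)
      (by fun_prop)).aestronglyMeasurable 1 (ae_of_all _ fun t => ?_)
    have := ballη_mem t.1.1 t.1.2 t.2.1 t.2.2
    rw [Real.norm_eq_abs, abs_of_nonneg this.1]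
    exact this.2
  have i2 := integral_prod _ hIntg
  refine Eq.trans i2 ?_
  refine integral_congr_ae (ae_of_all _ fun q => ?_)
  simp only [ballη]
  rw [integral_prod_mul (fun s => ballδ q.1 q.2 s) (fun s => ballδ q.1 q.2 s), bm_eq, bm_eq]

lemma bounded_int {α : Type*} [MeasurableSpace α] (μ : Measure α) [IsProbabilityMeasure μ]
    {f : α → ℝ} (hf : Measurable f) (C : ℝ) (hC : ∀ x, |f x| ≤ C) : Integrable f μ :=
  Integrable.of_bound hf.aestronglyMeasurable C (ae_of_all _ hC)

lemma bmm_int {d : ℕ} (A B P : Measure (Euc d)) [IsProbabilityMeasure A] [IsProbabilityMeasure B]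
    [IsProbabilityMeasure P] : Integrable (fun q => bm A q * bm B q) (P.prod P) := by
  refine bounded_int _ ((bm_meas A).mul (bm_meas B)) 1 fun q => ?_
  have a := bm_mem A q
  have b := bm_mem B q
  rw [abs_of_nonneg (mul_nonneg a.1 b.1)]
  exact mul_le_one₀ a.2 b.1 b.2

lemma eta_integrable {d : ℕ} {ι : Type*} [Fintype ι] (ν : ι → Measure (Euc d))
    [∀ i, IsProbabilityMeasure (ν i)] (a b c e : ι) :
    Integrable (fun x => ballη (x a) (x b) (x c) (x e)) (Measure.pi ν) := by
  refine bounded_int _ (ballη_meas (measurable_pi_apply _) (measurable_pi_apply _)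
    (measurable_pi_apply _) (measurable_pi_apply _)) 1 fun x => ?_
  have := ballη_mem (x a) (x b) (x c) (x e)
  rw [abs_of_nonneg this.1]
  exact this.2

lemma integral_four {α : Type*} [MeasurableSpace α] (μ : Measure α) {f1 f2 f3 f4 : α → ℝ}
    (i1 : Integrable f1 μ) (i2 : Integrable f2 μ) (i3 : Integrable f3 μ) (i4 : Integrable f4 μ) :
    ∫ x, f1 x + f2 x - f3 x - f4 x ∂μ
      = ∫ x, f1 x ∂μ + ∫ x, f2 x ∂μ - ∫ x, f3 x ∂μ - ∫ x, f4 x ∂μ := by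
  have j1 : Integrable (fun x => f1 x + f2 x) μ := i1.add i2
  have j2 : Integrable (fun x => f1 x + f2 x - f3 x) μ := j1.sub i3
  rw [integral_sub j2 i4, integral_sub j1 i3, integral_add i1 i2]

lemma phiA_int {d : ℕ} {ι : Type*} [Fintype ι] (ν : ι → Measure (Euc d))
    [∀ i, IsProbabilityMeasure (ν i)] (P Q : Measure (Euc d)) [IsProbabilityMeasure P]
    [IsProbabilityMeasure Q] (a b : Fin 4 → ι) (ha : Function.Injective a)
    (hb : Function.Injective b) (hab : ∀ i j, a i ≠ b j) (hP : ∀ i, ν (a i) = P)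
    (hQ : ∀ i, ν (b i) = Q) :
    ∫ x, ballφA (x (a 0)) (x (a 1)) (x (a 2)) (x (a 3)) (x (b 2)) (x (b 3)) ∂(Measure.pi ν)
      = ∫ u, ∫ v, ((P (Metric.closedBall u (dist v u))).toReal
      - (Q (Metric.closedBall u (dist v u))).toReal) ^ 2 ∂P ∂P := by
  have key : ∀ s t : ι, s ≠ t → s ≠ a 0 → s ≠ a 1 → t ≠ a 0 → t ≠ a 1 →
      ∫ x, ballη (x (a 0)) (x (a 1)) (x s) (x t) ∂(Measure.pi ν)
      = ∫ q, bm (ν s) q * bm (ν t) q ∂(P.prod P) := by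
    intro s t h1 h2 h3 h4 h5
    have h01 : a 0 ≠ a 1 := ha.ne (by decide)
    have hinj : Function.Injective ![a 0, a 1, s, t] := by
      intro i j hij
      fin_cases i <;> fin_cases j <;> simp_all
    have := eta_int ν ![a 0, a 1, s, t] hinj
    simp only [Matrix.cons_val_zero, Matrix.cons_val_one, Matrix.cons_val] at this
    rw [this, hP, hP]
  unfold ballφA
  have n : ∀ i j : Fin 4, i ≠ j → a i ≠ a j := fun i j h => ha.ne h
  have n' : ∀ i j : Fin 4, i ≠ j → b i ≠ b j := fun i j h => hb.ne h
  rw [integral_four _ (eta_integrable ν _ _ _ _) (eta_integrable ν _ _ _ _)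
      (eta_integrable ν _ _ _ _) (eta_integrable ν _ _ _ _),
    key (a 2) (a 3) (n _ _ (by decide)) (n _ _ (by decide)) (n _ _ (by decide))
      (n _ _ (by decide)) (n _ _ (by decide)),
    key (b 2) (b 3) (n' _ _ (by decide)) (hab _ _).symm (hab _ _).symm (hab _ _).symm
      (hab _ _).symm,
    key (a 2) (b 2) (hab _ _) (n _ _ (by decide)) (n _ _ (by decide)) (hab _ _).symm
      (hab _ _).symm,
    key (a 3) (b 3) (hab _ _) (n _ _ (by decide)) (n _ _ (by decide)) (hab _ _).symm
      (hab _ _).symm]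
  simp only [hP, hQ]
  rw [← integral_four _ (bmm_int _ _ _) (bmm_int _ _ _) (bmm_int _ _ _) (bmm_int _ _ _)]
  have hIntg : Integrable (fun q : Euc d × Euc d => (bm P q - bm Q q) ^ 2) (P.prod P) := by
    refine bounded_int _ (((bm_meas P).sub (bm_meas Q)).pow_const 2) 1 fun q => ?_
    have h1 := bm_mem P q
    have h2 := bm_mem Q q
    rw [abs_of_nonneg (sq_nonneg _), sq_le_one_iff_abs_le_one, abs_le]
    constructor <;> linarith [h1.1, h1.2, h2.1, h2.2]
  refine Eq.trans ?_ (integral_prod _ hIntg)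
  refine integral_congr_ae (ae_of_all _ fun q => ?_)
  simp only
  ring

lemma phi_int {d : ℕ} {ι : Type*} [Fintype ι] (ν : ι → Measure (Euc d))
    [∀ i, IsProbabilityMeasure (ν i)] (P Q : Measure (Euc d)) [IsProbabilityMeasure P]
    [IsProbabilityMeasure Q] (a b : Fin 4 → ι) (ha : Function.Injective a)
    (hb : Function.Injective b) (hab : ∀ i j, a i ≠ b j) (hP : ∀ i, ν (a i) = P)
    (hQ : ∀ i, ν (b i) = Q) :
    ∫ x, ballφ (fun k => x (a k)) (fun k => x (b k)) ∂(Measure.pi ν) = ballDiv P Q := by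
  have hi : ∀ a b c e f g : ι, Integrable (fun x => ballφA (x a) (x b) (x c) (x e) (x f) (x g))
      (Measure.pi ν) := by
    intro a b c e f g
    unfold ballφA
    exact (((eta_integrable ν _ _ _ _).add (eta_integrable ν _ _ _ _)).sub
      (eta_integrable ν _ _ _ _)).sub (eta_integrable ν _ _ _ _)
  unfold ballφ ballDiv
  rw [integral_add (hi _ _ _ _ _ _) (hi _ _ _ _ _ _), phiA_int ν P Q a b ha hb hab hP hQ,
    phiA_int ν Q P b a hb ha (fun i j => (hab j i).symm) hQ hP]
  congr 1
  refine integral_congr_ae (ae_of_all _ fun u => integral_congr_ae (ae_of_all _ fun v => ?_))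
  simp only
  ring

lemma psi_int {d : ℕ} (ν : Fin 8 → Measure (Euc d))
    [∀ i, IsProbabilityMeasure (ν i)] (P Q : Measure (Euc d)) [IsProbabilityMeasure P]
    [IsProbabilityMeasure Q] (hν : ∀ l, ν l = if l.val < 4 then P else Q) :
    ∫ x, psi x ∂(Measure.pi ν) = ballDiv P Q := by
  have hmi : ∀ a b : Fin 4 → Fin 8, Integrable (fun x : Fin 8 → Euc d =>
      ballφ (fun k => x (a k)) (fun k => x (b k))) (Measure.pi ν) := by
    intro a b
    unfold ballφ ballφA
    exact ((((eta_integrable ν _ _ _ _).add (eta_integrable ν _ _ _ _)).sub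
      (eta_integrable ν _ _ _ _)).sub (eta_integrable ν _ _ _ _)).add
      ((((eta_integrable ν _ _ _ _).add (eta_integrable ν _ _ _ _)).sub
      (eta_integrable ν _ _ _ _)).sub (eta_integrable ν _ _ _ _))
  have hone : ∀ τ σ : Equiv.Perm (Fin 4), ∫ x : Fin 8 → Euc d,
      ballφ ((fun k : Fin 4 => x ⟨k.val, by omega⟩) ∘ τ)
        ((fun k : Fin 4 => x ⟨k.val + 4, by omega⟩) ∘ σ) ∂(Measure.pi ν) = ballDiv P Q := by
    intro τ σ
    refine phi_int ν P Q (fun k => ⟨(τ k).val, by omega⟩) (fun k => ⟨(σ k).val + 4, by omega⟩)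
      ?_ ?_ ?_ ?_ ?_
    · intro i j h
      exact τ.injective (Fin.ext (by simpa using h))
    · intro i j h
      exact σ.injective (Fin.ext (by simpa using h))
    · intro i j h
      have := congrArg Fin.val h
      simp only at this
      omega
    · intro i
      rw [hν, if_pos (by simp)]
    · intro i
      rw [hν, if_neg (by simp)]
  unfold psi ballφ'
  rw [integral_const_mul, integral_finsetSum]
  · have : ∀ τ : Equiv.Perm (Fin 4), ∫ x : Fin 8 → Euc d, ∑ σ : Equiv.Perm (Fin 4),
      ballφ ((fun k : Fin 4 => x ⟨k.val, by omega⟩) ∘ τ)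
        ((fun k : Fin 4 => x ⟨k.val + 4, by omega⟩) ∘ σ) ∂(Measure.pi ν)
          = ∑ σ : Equiv.Perm (Fin 4), ballDiv P Q := by
      intro τ
      rw [integral_finsetSum]
      · exact Finset.sum_congr rfl fun σ _ => hone τ σ
      · intro σ _
        exact hmi (fun k => ⟨(τ k).val, by omega⟩) (fun k => ⟨(σ k).val + 4, by omega⟩)
    rw [Finset.sum_congr rfl fun τ _ => this τ]
    simp only [Finset.sum_const, Finset.card_univ, Fintype.card_perm, Fintype.card_fin,
      nsmul_eq_mul]
    rw [← mul_assoc ((Nat.factorial 4 : ℕ) : ℝ), ← Nat.cast_mul, inv_mul_cancel_left₀]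
    exact_mod_cast (by decide : Nat.factorial 4 * Nat.factorial 4 ≠ 0)
  · intro τ _
    refine integrable_finsetSum _ fun σ _ => ?_
    exact hmi (fun k => ⟨(τ k).val, by omega⟩) (fun k => ⟨(σ k).val + 4, by omega⟩)

lemma thetaL_abs {dX dY dZ : ℕ} {p : Euc dX → Euc dY → Euc dZ → ℝ} {C : ℝ} (hp : GoodDens p C)
    (w : Euc dY × Euc dZ) (hw : ∀ l, Integrable (fun x : Euc dX => limD p l w x)) :
    |thetaL p w| ≤ 8 * ∏ l, ∫ x, limD p l w x := by
  unfold thetaL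
  have hi : Integrable (fun x : Fin 8 → Euc dX => 8 * ∏ l, limD p l w (x l))
      (Measure.pi fun _ : Fin 8 => (volume : Measure (Euc dX))) :=
    (Integrable.fintype_prod (f := fun l x => limD p l w x) hw).const_mul 8
  have h := norm_integral_le_of_norm_le (f := fun x : Fin 8 → Euc dX =>
    psi x * ∏ l, limD p l w (x l)) hi (ae_of_all _ fun x => ?_)
  · rw [integral_const_mul, integral_fintype_prod_eq_prod (f := fun l x => limD p l w x)] at h
    exact h
  · rw [norm_mul]
    have : 0 ≤ ∏ l, limD p l w (x l) := Finset.prod_nonneg fun l _ => limD_nonneg hp l _ _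
    rw [Real.norm_of_nonneg this]
    exact mul_le_mul_of_nonneg_right (psi_abs x) this

lemma thetaL_eq {dX dY dZ : ℕ} {p : Euc dX → Euc dY → Euc dZ → ℝ} {C : ℝ} (hp : GoodDens p C)
    (w : Euc dY × Euc dZ) (hw : ∀ l, Integrable (fun x : Euc dX => limD p l w x)) :
    thetaL p w = ballDiv (condAtYZ p w.1 w.2) (condAtZ p w.2)
        * (margYZ p w.1 w.2 ^ 4 * margZ p w.2 ^ 4) := by
  set m : Fin 8 → ℝ := fun l => ∫ x, limD p l w x with hm
  have hml : ∀ l, m l = if l.val < 4 then margYZ p w.1 w.2 else margZ p w.2 := by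
    intro l
    simp only [hm, limD]
    split_ifs <;> rfl
  have hprod : ∏ l, m l = margYZ p w.1 w.2 ^ 4 * margZ p w.2 ^ 4 := by
    simp only [hml]
    simp [Fin.prod_univ_succ]
    ring
  have hm0 : ∀ l, 0 ≤ m l := fun l => integral_nonneg fun x => limD_nonneg hp l _ _
  by_cases hz : ∏ l, m l = 0
  · have h := thetaL_abs hp w hw
    rw [← hm] at h
    change |thetaL p w| ≤ 8 * ∏ l, m l at h
    rw [hz, mul_zero] at h
    rw [← hprod, hz, mul_zero]
    exact abs_eq_zero.1 (le_antisymm h (abs_nonneg _))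
  have hne : ∀ l, m l ≠ 0 := fun l h => hz (Finset.prod_eq_zero (Finset.mem_univ l) h)
  set f : Fin 8 → Euc dX → ℝ := fun l x => limD p l w x / m l with hf
  have hf0 : ∀ l x, 0 ≤ f l x := fun l x => div_nonneg (limD_nonneg hp l _ _) (hm0 l)
  have hfi : ∀ l, Integrable (f l) := fun l => (hw l).div_const _
  have hfm : ∀ l, Measurable (f l) := fun l =>
    ((limD_meas hp l).comp (measurable_id.prodMk measurable_const)).div_const _
  set ν : Fin 8 → Measure (Euc dX) := fun l => volume.withDensity fun x => ENNReal.ofReal (f l x)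
    with hν
  have hνp : ∀ l, IsProbabilityMeasure (ν l) := by
    intro l
    refine ⟨?_⟩
    rw [hν, withDensity_apply _ MeasurableSet.univ, Measure.restrict_univ,
      ← ofReal_integral_eq_lintegral_ofReal (hfi l) (ae_of_all _ (hf0 l))]
    simp only [hf]
    rw [integral_div]
    change ENNReal.ofReal (m l / m l) = 1
    rw [div_self (hne l), ENNReal.ofReal_one]
  have hcase : ∀ l, ν l = if l.val < 4 then condAtYZ p w.1 w.2 else condAtZ p w.2 := by
    intro l
    simp only [hν, hf, hml, limD]
    split_ifs <;> rfl
  have P1 : IsProbabilityMeasure (condAtYZ p w.1 w.2) := by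
    have := hνp 0
    rwa [hcase 0, if_pos (by decide)] at this
  have P2 : IsProbabilityMeasure (condAtZ p w.2) := by
    have := hνp 7
    rwa [hcase 7, if_neg (by decide)] at this
  have h1 := psi_int ν _ _ hcase
  rw [hν, pi_withDensity_real (fun _ => volume) f hf0 hfi,
    integral_withDensity_eq_integral_toReal_smul] at h1
  · rw [← h1, ← hprod, mul_comm, ← integral_const_mul]
    refine integral_congr_ae (ae_of_all _ fun x => ?_)
    simp only
    rw [ENNReal.toReal_ofReal (Finset.prod_nonneg fun l _ => hf0 l _), smul_eq_mul, ← mul_assoc,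
      ← Finset.prod_mul_distrib, mul_comm]
    congr 1
    refine Finset.prod_congr rfl fun l _ => ?_
    simp only [hf]
    rw [mul_div_cancel₀ _ (hne l)]
  · exact (Finset.measurable_prod _ fun l _ => (hfm l).comp (measurable_pi_apply l)).ennreal_ofReal
  · exact ae_of_all _ fun x => ENNReal.ofReal_lt_top

/-- The truncated limiting mean. -/
def thC {dX dY dZ : ℕ} (p : Euc dX → Euc dY → Euc dZ → ℝ) (B : ℝ) (w : Euc dY × Euc dZ) : ℝ :=
  max (-B) (min B (thetaL p w))

section

variable {dX dY dZ : ℕ} {p : Euc dX → Euc dY → Euc dZ → ℝ} {C : ℝ}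
  {g1 : Euc dY × Euc dZ → ℝ} {g2 : Euc dZ → ℝ} {c1 c2 : ℝ} {h1 h2 : ℝ}

lemma thC_meas (hp : GoodDens p C) (B : ℝ) : Measurable (thC p B) :=
  measurable_const.max (measurable_const.min (thetaL_meas hp))

lemma thC_abs (B : ℝ) (hB : 0 ≤ B) (w : Euc dY × Euc dZ) : |thC p B w| ≤ B := by
  unfold thC
  rw [abs_le]
  exact ⟨le_max_left _ _, max_le (by linarith) (min_le_left _ _)⟩

lemma thC_eq (hp : GoodDens p C) (w : Euc dY × Euc dZ)
    (hw : ∀ l, Integrable (fun x : Euc dX => limD p l w x)) :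
    thC p (8 * C ^ 8) w = thetaL p w := by
  have h := thetaL_abs hp w hw
  have h2 : ∏ l, ∫ x, limD p l w x ≤ C ^ 8 := by
    refine (Finset.prod_le_prod (fun l _ => integral_nonneg fun x => limD_nonneg hp l _ _)
      (fun l _ => limD_int_le hp l w)).trans (le_of_eq ?_)
    simp
  have h3 : |thetaL p w| ≤ 8 * C ^ 8 := h.trans (by linarith)
  rw [abs_le] at h3
  unfold thC
  rw [min_eq_right h3.2, max_eq_right h3.1]

lemma law_snd (p : Euc dX → Euc dY → Euc dZ → ℝ) :
    Measure.QuasiMeasurePreserving (fun v : Dat dX dY dZ => v.2) (lawP p) volume :=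
  (Measure.quasiMeasurePreserving_snd (μ := (volume : Measure (Euc dX)))
    (ν := (volume : Measure (Euc dY × Euc dZ)))).mono_left
    (withDensity_absolutelyContinuous _ _)

lemma law_snd_snd (p : Euc dX → Euc dY → Euc dZ → ℝ) :
    Measure.QuasiMeasurePreserving (fun v : Dat dX dY dZ => v.2.2) (lawP p) volume :=
  (Measure.quasiMeasurePreserving_snd (μ := (volume : Measure (Euc dY)))
    (ν := (volume : Measure (Euc dZ)))).comp (law_snd p)

lemma target_eq (hp : GoodDens p C) :
    ∫ v, thC p (8 * C ^ 8) v.2 ∂(lawP p)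
      = ∫ y, ∫ z, ballDiv (condAtYZ p y z) (condAtZ p z)
        * (margYZ p y z ^ 4 * margZ p z ^ 4) * margYZ p y z := by
  have hC := hp.one_le
  have hB : 0 ≤ 8 * C ^ 8 := by positivity
  rw [lawP, integral_withDensity_eq_integral_toReal_smul hp.meas.ennreal_ofReal
    (ae_of_all _ fun _ => ENNReal.ofReal_lt_top)]
  have hi : Integrable (fun v : Dat dX dY dZ => pH p v * thC p (8 * C ^ 8) v.2)
      ((volume : Measure (Euc dX)).prod (volume : Measure (Euc dY × Euc dZ))) := by
    refine Integrable.mul_bdd (c := 8 * C ^ 8) hp.pH_int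
      ((thC_meas hp _).comp measurable_snd).aestronglyMeasurable (ae_of_all _ fun v => ?_)
    exact thC_abs _ hB _
  have e1 : ∫ v : Dat dX dY dZ, (ENNReal.ofReal (pH p v)).toReal • thC p (8 * C ^ 8) v.2
      = ∫ w : Euc dY × Euc dZ, thC p (8 * C ^ 8) w * margYZ p w.1 w.2 := by
    have e2 : ∫ v : Dat dX dY dZ, (ENNReal.ofReal (pH p v)).toReal • thC p (8 * C ^ 8) v.2
        = ∫ v : Dat dX dY dZ, pH p v * thC p (8 * C ^ 8) v.2
          ∂((volume : Measure (Euc dX)).prod (volume : Measure (Euc dY × Euc dZ))) := by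
      refine integral_congr_ae (ae_of_all _ fun v => ?_)
      simp only
      rw [ENNReal.toReal_ofReal (hp.pH_nonneg v), smul_eq_mul]
    rw [e2, integral_prod_symm _ hi]
    refine integral_congr_ae (ae_of_all _ fun w => ?_)
    simp only
    rw [integral_mul_const, mul_comm]
    rfl
  rw [e1]
  have hi2 : Integrable (fun w : Euc dY × Euc dZ => thC p (8 * C ^ 8) w * margYZ p w.1 w.2)
      ((volume : Measure (Euc dY)).prod (volume : Measure (Euc dZ))) := by
    refine (hi.integral_prod_right).congr (ae_of_all _ fun w => ?_)
    simp only
    rw [integral_mul_const, mul_comm]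
    rfl
  refine (integral_prod _ hi2).trans ?_
  have hae := Measure.ae_ae_of_ae_prod (μ := (volume : Measure (Euc dY)))
    (ν := (volume : Measure (Euc dZ))) (limD_ae hp)
  refine integral_congr_ae ?_
  filter_upwards [hae] with y hy
  refine integral_congr_ae ?_
  filter_upwards [hy] with z hz
  rw [thC_eq hp _ hz, thetaL_eq hp _ hz]

lemma coreG_meas (k1 : GoodKer g1 c1) (k2 : GoodKer g2 c2) :
    Measurable (fun q : Dat dX dY dZ × (Fin 8 → Dat dX dY dZ) => coreG g1 g2 h1 h2 q.1 q.2) := by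
  have hl : ∀ l : Fin 8, Measurable (fun q : Dat dX dY dZ × (Fin 8 → Dat dX dY dZ) =>
      kern g1 g2 h1 h2 l q.1 (q.2 l)) := by
    intro l
    have h : Measurable (fun q : Dat dX dY dZ × (Fin 8 → Dat dX dY dZ) => (q.1, q.2 l)) :=
      measurable_fst.prodMk ((measurable_pi_apply l).comp measurable_snd)
    have h3 : Measurable (fun q : Dat dX dY dZ × Dat dX dY dZ => kern g1 g2 h1 h2 l q.1 q.2) :=
      kern_meas k1 k2 l
    have h4 := Measurable.comp h3 h
    simp only [Function.comp_def] at h4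
    exact h4
  have hpr : Measurable (fun q : Dat dX dY dZ × (Fin 8 → Dat dX dY dZ) =>
      ∏ l, kern g1 g2 h1 h2 l q.1 (q.2 l)) := Finset.measurable_prod _ fun l _ => hl l
  have hx : Measurable (fun q : Dat dX dY dZ × (Fin 8 → Dat dX dY dZ) =>
      fun l => (q.2 l).1) := measurable_pi_iff.2 fun l =>
        measurable_fst.comp ((measurable_pi_apply l).comp measurable_snd)
  exact hpr.mul (psi_meas.comp hx)

lemma coreG_abs (k1 : GoodKer g1 c1) (k2 : GoodKer g2 c2) (hh1 : 0 < h1) (hh2 : 0 < h2)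
    (v0 : Dat dX dY dZ) (v : Fin 8 → Dat dX dY dZ) :
    |coreG g1 g2 h1 h2 v0 v| ≤ ∏ l, 8 * kern g1 g2 h1 h2 l v0 (v l) := by
  have hk : 0 ≤ ∏ l, kern g1 g2 h1 h2 l v0 (v l) :=
    Finset.prod_nonneg fun l _ => kern_nonneg k1 k2 hh1 hh2 l _ _
  unfold coreG
  rw [abs_mul, abs_of_nonneg hk, Finset.prod_mul_distrib, mul_comm]
  refine mul_le_mul_of_nonneg_right ((psi_abs _).trans ?_) hk
  simp
  norm_num

end

lemma hlim_core {dX dY dZ : ℕ} {p : Euc dX → Euc dY → Euc dZ → ℝ} {C : ℝ}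
    {g1 : Euc dY × Euc dZ → ℝ} {g2 : Euc dZ → ℝ} {c1 c2 : ℝ}
    (hp : GoodDens p C) (k1 : GoodKer g1 c1) (k2 : GoodKer g2 c2) (h1 h2 : ℕ → ℝ)
    (hh1 : ∀ n, 0 < h1 n) (hh2 : ∀ n, 0 < h2 n)
    (t1 : Tendsto h1 atTop (𝓝 0)) (t2 : Tendsto h2 atTop (𝓝 0)) :
    Tendsto (fun n => ∫ v0, |∫ v, coreG g1 g2 (h1 n) (h2 n) v0 v
      ∂(Measure.pi fun _ : Fin 8 => lawP p) - thC p (8 * C ^ 8) v0.2| ∂(lawP p)) atTop (𝓝 0) := by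
  have := hp.prob
  have h := mean_tendsto hp k1 k2 h1 h2 hh1 hh2 t1 t2
  have h' := (ENNReal.tendsto_toReal ENNReal.zero_ne_top).comp h
  rw [ENNReal.toReal_zero] at h'
  refine h'.congr fun n => ?_
  simp only [Function.comp]
  have hm : Measurable (fun v0 : Dat dX dY dZ => ∫ v, coreG g1 g2 (h1 n) (h2 n) v0 v
      ∂(Measure.pi fun _ : Fin 8 => lawP p) - thC p (8 * C ^ 8) v0.2) :=
    ((coreG_meas k1 k2).stronglyMeasurable.integral_prod_right').measurable.sub
      ((thC_meas hp _).comp measurable_snd)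
  have e := integral_norm_eq_lintegral_enorm (μ := lawP p) hm.aestronglyMeasurable
  simp only [Real.norm_eq_abs] at e
  rw [e]
  congr 1
  refine lintegral_congr_ae ?_
  filter_upwards [(law_snd p).ae (limD_ae hp)] with v hv
  rw [thC_eq hp _ hv]

lemma band_zero (d : ℕ) (h : ℕ → ℝ) (h0 : ∀ n, 0 < h n)
    (a : Tendsto (fun n : ℕ => (n : ℝ) * h n ^ d) atTop atTop)
    (b : Tendsto (fun n : ℕ => (n : ℝ) * h n ^ (d + 4)) atTop (𝓝 0)) :
    Tendsto h atTop (𝓝 0) := by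
  have h4 : Tendsto (fun n => h n ^ 4) atTop (𝓝 0) := by
    have h5 := b.mul a.inv_tendsto_atTop
    rw [zero_mul] at h5
    refine h5.congr' ?_
    filter_upwards [eventually_gt_atTop 0] with n hn
    have hn' : (n : ℝ) ≠ 0 := by positivity
    have := (h0 n).ne'
    simp only [Pi.inv_apply]
    rw [pow_add]
    field_simp
  have h6 := (Real.continuous_sqrt.tendsto 0).comp ((Real.continuous_sqrt.tendsto 0).comp
    (by simpa using h4 : Tendsto (fun n => h n ^ 4) atTop (𝓝 0)) |> fun t => by simpa using t)
  rw [Real.sqrt_zero] at h6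
  refine h6.congr fun n => ?_
  simp only [Function.comp]
  rw [show h n ^ 4 = (h n ^ 2) ^ 2 by ring, Real.sqrt_sq (by positivity), Real.sqrt_sq (h0 n).le]

lemma band_inv (d : ℕ) (h : ℕ → ℝ)
    (a : Tendsto (fun n : ℕ => (n : ℝ) * h n ^ d) atTop atTop) (c : ℝ) :
    Tendsto (fun n : ℕ => c * (h n ^ d)⁻¹ / n) atTop (𝓝 0) := by
  have := a.inv_tendsto_atTop.const_mul c
  rw [mul_zero] at this
  refine this.congr fun n => ?_
  simp only [Pi.inv_apply]
  rw [mul_inv, div_eq_mul_inv]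
  ring

lemma pi_consistent {dX dY dZ : ℕ} {p : Euc dX → Euc dY → Euc dZ → ℝ} {C : ℝ}
    {g1 : Euc dY × Euc dZ → ℝ} {g2 : Euc dZ → ℝ} {c1 c2 : ℝ}
    (hp : GoodDens p C) (k1 : GoodKer g1 c1) (k2 : GoodKer g2 c2) (h1 h2 : ℕ → ℝ)
    (hA3 : BandwidthAssumption dY dZ h1 h2) :
    Tendsto (fun n : ℕ => ∫ v : Fin n → Dat dX dY dZ, |((n.descFactorial 9 : ℕ) : ℝ)⁻¹ *
        (∑ i ∈ Finset.univ.filter (fun i : Fin 9 → Fin n => Function.Injective i),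
          coreG g1 g2 (h1 n) (h2 n) (v (i 0)) (fun l => v (i l.succ)))
        - ∫ v, thC p (8 * C ^ 8) v.2 ∂(lawP p)| ∂(Measure.pi fun _ : Fin n => lawP p))
      atTop (𝓝 0) := by
  obtain ⟨hh1, hh2, -, a1, a2, b1, b2⟩ := hA3
  have := hp.prob
  have hC := hp.one_le
  have t1 := band_zero _ h1 hh1 a1 b1
  have t2 := band_zero _ h2 hh2 a2 b2
  refine abstract_consistency (lawP p) 8 (fun n => coreG g1 g2 (h1 n) (h2 n))
    (fun n => coreG_meas k1 k2) (fun n l x y => 8 * kern g1 g2 (h1 n) (h2 n) l x y)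
    (fun n l x => (kern_meas' k1 k2 l x).const_mul 8)
    (fun n => 8 * (c1 * (h1 n ^ (dY + dZ))⁻¹ + c2 * (h2 n ^ dZ)⁻¹)) ?_ ?_ (8 * C) (by linarith)
    ?_ ?_ ?_ ?_ (fun v => thC p (8 * C ^ 8) v.2) ((thC_meas hp _).comp measurable_snd) (8 * C ^ 8)
    (fun v => thC_abs _ (by positivity) _) (hlim_core hp k1 k2 h1 h2 hh1 hh2 t1 t2)
  · have := ((band_inv _ h1 a1 c1).add (band_inv _ h2 a2 c2)).const_mul 8
    rw [add_zero, mul_zero] at this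
    refine this.congr fun n => ?_
    ring
  · intro n
    have x1 := k1.CK0
    have x2 := k2.CK0
    have x3 := hh1 n
    have x4 := hh2 n
    positivity
  · intro n l x y
    exact mul_nonneg (by norm_num) (kern_nonneg k1 k2 (hh1 n) (hh2 n) l x y)
  · intro n l x y
    exact mul_le_mul_of_nonneg_left (kern_le k1 k2 (hh1 n) (hh2 n) l x y) (by norm_num)
  · intro n l x
    rw [integral_const_mul]
    exact mul_le_mul_of_nonneg_left (kern_int_le hp k1 k2 (hh1 n) (hh2 n) l x) (by norm_num)
  · intro n x v
    exact coreG_abs k1 k2 (hh1 n) (hh2 n) x v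

/-- Almost surely the U-statistic may be computed with the measurable kernel versions. -/
lemma ustat_ae {dX dY dZ : ℕ} {Ω : Type} [MeasurableSpace Ω]
    (μ : Measure Ω) [IsProbabilityMeasure μ] (V : ℕ → Ω → Dat dX dY dZ)
    (hmeas : ∀ i, Measurable (V i)) (p : Euc dX → Euc dY → Euc dZ → ℝ) {C : ℝ}
    (hp : GoodDens p C) (hiid : iIndepFun V μ) (hlaw : ∀ i, μ.map (V i) = lawP p) (K : ℝ → ℝ)
    (g1 : Euc dY × Euc dZ → ℝ) (g2 : Euc dZ → ℝ)
    (e1 : g1 =ᵐ[volume] fun u => K (Real.sqrt (‖u.1‖ ^ 2 + ‖u.2‖ ^ 2)))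
    (e2 : g2 =ᵐ[volume] fun u => K ‖u‖) (h1 h2 : ℝ) (hh1 : 0 < h1) (hh2 : 0 < h2) (n : ℕ) :
    ∀ᵐ ω ∂μ, ∀ i : Fin 9 → Fin n, Function.Injective i →
      ustatCore K h1 h2 (fun k => V (i k) ω)
        = coreG g1 g2 h1 h2 (V (i 0) ω) (fun l => V (i l.succ) ω) := by
  have := hp.prob
  have q1 := ae_kernel_agree (lawP p) (fun v : Dat dX dY dZ => v.2) (law_snd p)
    (fun u => g1 u = K (Real.sqrt (‖u.1‖ ^ 2 + ‖u.2‖ ^ 2))) e1 h1 hh1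
  have q2 := ae_kernel_agree (lawP p) (fun v : Dat dX dY dZ => v.2.2) (law_snd_snd p)
    (fun u => g2 u = K ‖u‖) e2 h2 hh2
  have hpair : ∀ s t : ℕ, s ≠ t →
      μ.map (fun ω => (V s ω, V t ω)) = (lawP p).prod (lawP p) := by
    intro s t hst
    have h := (indepFun_iff_map_prod_eq_prod_map_map (hmeas s).aemeasurable
      (hmeas t).aemeasurable).1 (hiid.indepFun hst)
    rw [h, hlaw, hlaw]
  have key : ∀ s t : ℕ, s ≠ t → ∀ᵐ ω ∂μ,
      (g1 (h1⁻¹ • ((V s ω).2 - (V t ω).2))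
        = K (Real.sqrt (‖(h1⁻¹ • ((V s ω).2 - (V t ω).2)).1‖ ^ 2
          + ‖(h1⁻¹ • ((V s ω).2 - (V t ω).2)).2‖ ^ 2))) ∧
      (g2 (h2⁻¹ • ((V s ω).2.2 - (V t ω).2.2)) = K ‖h2⁻¹ • ((V s ω).2.2 - (V t ω).2.2)‖) := by
    intro s t hst
    rw [← hpair s t hst] at q1 q2
    have hm : Measurable (fun ω => (V s ω, V t ω)) := (hmeas s).prodMk (hmeas t)
    filter_upwards [ae_of_ae_map hm.aemeasurable q1, ae_of_ae_map hm.aemeasurable q2] with ω w1 w2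
    exact ⟨w1, w2⟩
  have key2 : ∀ᵐ ω ∂μ, ∀ s t : ℕ, s ≠ t →
      (g1 (h1⁻¹ • ((V s ω).2 - (V t ω).2))
        = K (Real.sqrt (‖(h1⁻¹ • ((V s ω).2 - (V t ω).2)).1‖ ^ 2
          + ‖(h1⁻¹ • ((V s ω).2 - (V t ω).2)).2‖ ^ 2))) ∧
      (g2 (h2⁻¹ • ((V s ω).2.2 - (V t ω).2.2)) = K ‖h2⁻¹ • ((V s ω).2.2 - (V t ω).2.2)‖) := by
    rw [ae_all_iff]
    intro s
    rw [ae_all_iff]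
    intro t
    rw [eventually_imp_distrib_left]
    exact key s t
  filter_upwards [key2] with ω hω i hi
  have hne : ∀ l : Fin 8, ((i 0 : Fin n) : ℕ) ≠ ((i l.succ : Fin n) : ℕ) := fun l h =>
    (Fin.succ_ne_zero l).symm (hi (Fin.ext h))
  exact core_eq K g1 g2 h1 h2 hh1 hh2 (fun k => V (i k) ω) (fun l => (hω _ _ (hne l)).1)
    (fun l => (hω _ _ (hne l)).2)

/-- **Theorem 3(2).** Under (A1)-(A3), the order-9 U-statistic `ζ̂*_n` converges in
probability to `ζ*(X, Y | Z) = E[Θ²(P_{X|Y,Z}, P_{X|Z}) p_{Y,Z}(Y,Z)⁴ p_Z(Z)⁴]`. -/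
theorem ustat_consistent
    {dX dY dZ : ℕ} {Ω : Type} [MeasurableSpace Ω]
    (μ : Measure Ω) [IsProbabilityMeasure μ]
    (Xs : ℕ → Ω → Euc dX) (Ys : ℕ → Ω → Euc dY) (Zs : ℕ → Ω → Euc dZ)
    (hmeas : ∀ i, Measurable fun ω => (Xs i ω, Ys i ω, Zs i ω))
    (p : Euc dX → Euc dY → Euc dZ → ℝ)
    (hp_meas : Measurable fun v : Euc dX × Euc dY × Euc dZ => p v.1 v.2.1 v.2.2)
    (hp_nonneg : ∀ x y z, 0 ≤ p x y z)
    (hiid : iIndepFun (fun i ω => (Xs i ω, Ys i ω, Zs i ω)) μ)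
    (hlaw : ∀ i, μ.map (fun ω => (Xs i ω, Ys i ω, Zs i ω))
      = volume.withDensity fun v => ENNReal.ofReal (p v.1 v.2.1 v.2.2))
    (hA1 : A1 p)
    (K : ℝ → ℝ) (hK1 : KernelAssumption K (dY + dZ)) (hK2 : KernelAssumption K dZ)
    (h1 h2 : ℕ → ℝ) (hA3 : BandwidthAssumption dY dZ h1 h2) :
    TendstoInMeasure μ
      (fun n ω => ustat K (h1 n) (h2 n) n Xs Ys Zs ω)
      atTop
      (fun _ => ∫ y, ∫ z, ballDiv (condAtYZ p y z) (condAtZ p z)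
        * (margYZ p y z ^ 4 * margZ p z ^ 4) * margYZ p y z) := by
  obtain ⟨-, -, C0, hC1, hC2, hC3, -, -, -, hC4⟩ := hA1
  have hCC : C0 ≤ max C0 1 := le_max_left _ _
  have hp : GoodDens p (max C0 1) :=
    { meas := hp_meas
      nonneg := hp_nonneg
      prob := by
        have h0 : lawP p = μ.map (fun ω => (Xs 0 ω, Ys 0 ω, Zs 0 ω)) := (hlaw 0).symm
        rw [h0]
        exact Measure.isProbabilityMeasure_map (hmeas 0).aemeasurable
      one_le := le_max_right _ _
      le := fun x y z => (hC1 x y z).trans hCC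
      leYZ := fun y z => (hC2 y z).trans hCC
      leXZ := fun x z => (hC3 x z).trans hCC
      leZ := fun z => (hC4 z).trans hCC }
  obtain ⟨g1, c1, m1, n1, c1n, l1, i1, o1, e1⟩ := kernel_version_prod hK1
  obtain ⟨g2, c2, m2, n2, c2n, l2, i2, o2, e2⟩ := kernel_version hK2
  have k1 : GoodKer g1 c1 := ⟨m1, n1, c1n, l1, i1, o1⟩
  have k2 : GoodKer g2 c2 := ⟨m2, n2, c2n, l2, i2, o2⟩
  have hprob := hp.prob
  have hcons := pi_consistent hp k1 k2 h1 h2 hA3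
  obtain ⟨hh1, hh2, -⟩ := hA3
  rw [← target_eq hp]
  set c := ∫ v, thC p (8 * max C0 1 ^ 8) v.2 ∂(lawP p) with hc
  set V : ℕ → Ω → Dat dX dY dZ := fun i ω => (Xs i ω, Ys i ω, Zs i ω) with hV
  have hlaw' : ∀ i, μ.map (V i) = lawP p := hlaw
  -- the version of the statistic with measurable kernels
  let T : (n : ℕ) → (Fin n → Dat dX dY dZ) → ℝ := fun n v => ((n.descFactorial 9 : ℕ) : ℝ)⁻¹ *
    (∑ i ∈ Finset.univ.filter (fun i : Fin 9 → Fin n => Function.Injective i),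
      coreG g1 g2 (h1 n) (h2 n) (v (i 0)) (fun l => v (i l.succ)))
  have hTm : ∀ n, Measurable (T n) := by
    intro n
    refine Measurable.const_mul (Finset.measurable_sum _ fun i _ => ?_) _
    have hq : Measurable (fun v : Fin n → Dat dX dY dZ => (v (i 0), fun l : Fin 8 => v (i l.succ))) :=
      (measurable_pi_apply _).prodMk (measurable_pi_iff.2 fun l => measurable_pi_apply _)
    have hq2 : Measurable (fun q : Dat dX dY dZ × (Fin 8 → Dat dX dY dZ) =>
      coreG g1 g2 (h1 n) (h2 n) q.1 q.2) := coreG_meas k1 k2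
    have hq3 := Measurable.comp hq2 hq
    simp only [Function.comp_def] at hq3
    exact hq3
  have hTi : ∀ n, Integrable (T n) (Measure.pi fun _ : Fin n => lawP p) := by
    intro n
    refine bounded_int _ (hTm n) (((n.descFactorial 9 : ℕ) : ℝ)⁻¹ *
      ∑ i ∈ Finset.univ.filter (fun i : Fin 9 → Fin n => Function.Injective i),
        ∏ _l : Fin 8, 8 * (c1 * (h1 n ^ (dY + dZ))⁻¹ + c2 * (h2 n ^ dZ)⁻¹)) fun v => ?_
    simp only [T]
    rw [abs_mul, abs_of_nonneg (by positivity)]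
    refine mul_le_mul_of_nonneg_left ((Finset.abs_sum_le_sum_abs _ _).trans
      (Finset.sum_le_sum fun i _ => ?_)) (by positivity)
    refine (coreG_abs k1 k2 (hh1 n) (hh2 n) _ _).trans (Finset.prod_le_prod (fun l _ => ?_)
      fun l _ => ?_)
    · exact mul_nonneg (by norm_num) (kern_nonneg k1 k2 (hh1 n) (hh2 n) l _ _)
    · exact mul_le_mul_of_nonneg_left (kern_le k1 k2 (hh1 n) (hh2 n) l _ _) (by norm_num)
  have hVm : ∀ n, Measurable (fun ω => fun k : Fin n => V k ω) := fun n =>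
    measurable_pi_iff.2 fun k => hmeas k
  have hpi : ∀ n : ℕ, μ.map (fun ω => fun k : Fin n => V k ω)
      = Measure.pi fun _ : Fin n => lawP p := by
    intro n
    have hind : iIndepFun (fun k : Fin n => V k) μ := hiid.precomp Fin.val_injective
    rw [(iIndepFun_iff_map_fun_eq_pi_map fun k => (hmeas _).aemeasurable).1 hind]
    congr 1
    funext k
    exact hlaw' k
  have hmain : TendstoInMeasure μ (fun n ω => T n (fun k : Fin n => V k ω)) atTop
      (fun _ => c) := by
    refine tendstoInMeasure_of_tendsto_eLpNorm (p := 1) one_ne_zero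
      (fun n => ((hTm n).comp (hVm n)).aestronglyMeasurable) aestronglyMeasurable_const ?_
    have h0 := ENNReal.tendsto_ofReal hcons
    rw [ENNReal.ofReal_zero] at h0
    refine h0.congr fun n => ?_
    have hi : Integrable (fun v => T n v - c) (Measure.pi fun _ : Fin n => lawP p) :=
      (hTi n).sub (integrable_const c)
    have hs := ofReal_integral_norm_eq_lintegral_enorm hi
    rw [eLpNorm_one_eq_lintegral_enorm]
    refine Eq.trans hs ?_
    rw [← hpi n, lintegral_map ((hTm n).sub_const c).enorm (hVm n)]
    rfl
  refine hmain.congr_left fun n => ?_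
  filter_upwards [ustat_ae μ V hmeas p hp hiid hlaw' K g1 g2 e1 e2 (h1 n) (h2 n) (hh1 n) (hh2 n) n]
    with ω hω
  simp only [T, ustat]
  congr 1
  refine Finset.sum_congr rfl fun i hi => ?_
  exact (hω i (Finset.mem_filter.1 hi).2).symm

end
end

section
/- Let Z₁, …, Z_n be i.i.d. random vectors with a bounded Lebesgue density p_Z on ℝ^{d_Z}, and let K: [0,∞) → [0,∞) be bounded, nonnegative, compactly supported, with ∫_{ℝ^{d_Z}} K(‖u‖)du = 1 and K(0) > 0. For a bandwidth h' > 0 define the normalized kernel weights κ_s(z) = K(‖z − Z_s‖/h') / Σ_{j=1}^n K(‖z − Z_j‖/h'), s = 1,…,n. If h' = h'(n) satisfies n^{2/d_Z} h'(n) → 0 as n → ∞ (i.e., h' = o(n^{−2/d_Z})), then ∏_{s=1}^n κ_s(Z_s) → 1 in probability as n → ∞. -/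
open MeasureTheory ProbabilityTheory Filter
open scoped ENNReal NNReal Topology

noncomputable section

lemma ball_bound_aux {dZ : ℕ} (pZ : Euc dZ → ℝ) (C : ℝ) (hC : ∀ v, pZ v ≤ C)
    (x : Euc dZ) (r : ℝ) (hr : 0 ≤ r) :
    (volume.withDensity fun v => ENNReal.ofReal (pZ v)) (Metric.closedBall x r)
      ≤ ENNReal.ofReal C * (ENNReal.ofReal (r ^ dZ) * volume (Metric.ball (0 : Euc dZ) 1)) := by
  rw [withDensity_apply _ Metric.isClosed_closedBall.measurableSet]
  calc ∫⁻ v in Metric.closedBall x r, ENNReal.ofReal (pZ v)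
      ≤ ∫⁻ v in Metric.closedBall x r, ENNReal.ofReal C :=
        lintegral_mono fun v => ENNReal.ofReal_le_ofReal (hC v)
    _ = _ := by
        rw [setLIntegral_const, Measure.addHaar_closedBall volume x hr]
        simp

lemma pair_bound_aux {dZ : ℕ} {Ω : Type} [MeasurableSpace Ω]
    (μ : Measure Ω) [IsProbabilityMeasure μ] (X Y : Ω → Euc dZ) (hX : Measurable X)
    (hY : Measurable Y) (hXY : IndepFun X Y μ) (r : ℝ) (B : ℝ≥0∞)
    (hB : ∀ x, μ.map Y (Metric.closedBall x r) ≤ B) :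
    μ {ω | dist (X ω) (Y ω) ≤ r} ≤ B := by
  have hS : MeasurableSet {p : Euc dZ × Euc dZ | dist p.1 p.2 ≤ r} :=
    (isClosed_le continuous_dist continuous_const).measurableSet
  have : IsProbabilityMeasure (μ.map X) := Measure.isProbabilityMeasure_map hX.aemeasurable
  have : IsProbabilityMeasure (μ.map Y) := Measure.isProbabilityMeasure_map hY.aemeasurable
  have h1 : μ {ω | dist (X ω) (Y ω) ≤ r} =
      (μ.map fun ω => (X ω, Y ω)) {p : Euc dZ × Euc dZ | dist p.1 p.2 ≤ r} := by
    rw [Measure.map_apply (hX.prodMk hY) hS]; rfl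
  rw [h1, (indepFun_iff_map_prod_eq_prod_map_map hX.aemeasurable hY.aemeasurable).1 hXY,
    Measure.prod_apply hS]
  calc _ ≤ ∫⁻ _x, B ∂(μ.map X) := by
        refine lintegral_mono fun x => ?_
        refine le_trans (measure_mono ?_) (hB x)
        intro y hy
        simpa [dist_comm] using hy
    _ = B := by simp

/-- **weight-condition lemma for the local wild bootstrap.** For i.i.d. `Z₁, Z₂, …`
with a bounded Lebesgue density on `ℝ^{d_Z}` and a bounded, nonnegative, compactly supported
kernel `K` with `∫ K(‖u‖) du = 1` and `K(0) > 0`, if the bandwidth satisfies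
`h' = o(n^{-2/d_Z})`, then the product of the normalized kernel self-weights
`∏_{s<n} κ_s(Z_s) = ∏_{s<n} K(‖Z_s - Z_s‖/h') / ∑_{j<n} K(‖Z_s - Z_j‖/h')` converges to `1` in
probability. -/
theorem local_wild_bootstrap_weight_condition
    {dZ : ℕ} (hdZ : 0 < dZ) {Ω : Type} [MeasurableSpace Ω]
    (μ : Measure Ω) [IsProbabilityMeasure μ]
    (Zs : ℕ → Ω → Euc dZ) (hmeas : ∀ i, Measurable (Zs i))
    (pZ : Euc dZ → ℝ) (hpZ_meas : Measurable pZ) (hpZ_nonneg : ∀ v, 0 ≤ pZ v)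
    (hpZ_bdd : ∃ C : ℝ, ∀ v, pZ v ≤ C)
    (hiid : iIndepFun Zs μ)
    (hlaw : ∀ i, μ.map (Zs i) = volume.withDensity fun v => ENNReal.ofReal (pZ v))
    (K : ℝ → ℝ) (hK_nonneg : ∀ t, 0 ≤ K t) (hK_bdd : ∃ C : ℝ, ∀ t, K t ≤ C)
    (hK_compact : ∃ R : ℝ, 0 < R ∧ ∀ t : ℝ, R < |t| → K t = 0)
    (hK_int : (∫ u : Euc dZ, K ‖u‖) = 1) (hK0 : 0 < K 0)
    (h' : ℕ → ℝ) (h'_pos : ∀ n, 0 < h' n)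
    (hband : Tendsto (fun n : ℕ => (n : ℝ) ^ ((2 : ℝ) / dZ) * h' n) atTop (𝓝 0)) :
    TendstoInMeasure μ
      (fun n ω => ∏ s ∈ Finset.range n,
        (K (dist (Zs s ω) (Zs s ω) / h' n) /
          ∑ j ∈ Finset.range n, K (dist (Zs s ω) (Zs j ω) / h' n)))
      atTop (fun _ => 1) := by
  obtain ⟨C, hC⟩ := hpZ_bdd
  obtain ⟨R, hR, hKR⟩ := hK_compact
  intro ε hε
  set V : ℝ≥0∞ := volume (Metric.ball (0 : Euc dZ) 1) with hV
  have hVtop : V ≠ ∞ := measure_ball_lt_top.ne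
  have key : ∀ n : ℕ, μ {ω | ε ≤ edist (∏ s ∈ Finset.range n,
        (K (dist (Zs s ω) (Zs s ω) / h' n) /
          ∑ j ∈ Finset.range n, K (dist (Zs s ω) (Zs j ω) / h' n))) 1} ≤
      ENNReal.ofReal C * V *
        ENNReal.ofReal (R ^ dZ * ((n : ℝ) ^ ((2 : ℝ) / dZ) * h' n) ^ dZ) := by
    intro n
    have hr : 0 ≤ R * h' n := (mul_pos hR (h'_pos n)).le
    set B : ℝ≥0∞ := ENNReal.ofReal C * (ENNReal.ofReal ((R * h' n) ^ dZ) * V) with hB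
    have hsub : {ω | ε ≤ edist (∏ s ∈ Finset.range n,
        (K (dist (Zs s ω) (Zs s ω) / h' n) /
          ∑ j ∈ Finset.range n, K (dist (Zs s ω) (Zs j ω) / h' n))) 1} ⊆
        ⋃ s ∈ Finset.range n, ⋃ j ∈ Finset.range n,
          {ω | s ≠ j ∧ dist (Zs s ω) (Zs j ω) ≤ R * h' n} := by
      intro ω hω
      by_contra hcon
      simp only [Set.mem_iUnion, Set.mem_setOf_eq, not_exists, not_and, not_le] at hcon
      have hone : ∏ s ∈ Finset.range n,
        (K (dist (Zs s ω) (Zs s ω) / h' n) /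
          ∑ j ∈ Finset.range n, K (dist (Zs s ω) (Zs j ω) / h' n)) = 1 := by
        refine Finset.prod_eq_one fun s hs => ?_
        rw [Finset.sum_eq_single_of_mem s hs]
        · simp only [dist_self, zero_div]
          exact div_self hK0.ne'
        · intro j hj hjs
          apply hKR
          have := hcon s hs j hj hjs.symm
          rw [abs_of_nonneg (div_nonneg dist_nonneg (h'_pos n).le), lt_div_iff₀ (h'_pos n)]
          exact this
      rw [Set.mem_setOf_eq, hone, edist_self] at hω
      exact absurd hω (not_le.2 hε)
    have hpair : ∀ s j, μ {ω | s ≠ j ∧ dist (Zs s ω) (Zs j ω) ≤ R * h' n} ≤ B := by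
      intro s j
      by_cases hsj : s = j
      · simp [hsj]
      · simp only [ne_eq, hsj, not_false_eq_true, true_and]
        refine pair_bound_aux μ _ _ (hmeas s) (hmeas j) (hiid.indepFun hsj) _ _ fun x => ?_
        rw [hlaw j]
        exact ball_bound_aux pZ C hC x _ hr
    calc _ ≤ μ (⋃ s ∈ Finset.range n, ⋃ j ∈ Finset.range n,
          {ω | s ≠ j ∧ dist (Zs s ω) (Zs j ω) ≤ R * h' n}) := measure_mono hsub
      _ ≤ ∑ s ∈ Finset.range n, ∑ j ∈ Finset.range n, B :=
          (measure_biUnion_finset_le _ _).trans <| Finset.sum_le_sum fun s _ =>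
            (measure_biUnion_finset_le _ _).trans <| Finset.sum_le_sum fun j _ => hpair s j
      _ = ENNReal.ofReal ((n : ℝ) ^ 2) * B := by
          rw [ENNReal.ofReal_pow (Nat.cast_nonneg n), ENNReal.ofReal_natCast]
          simp only [Finset.sum_const, Finset.card_range, nsmul_eq_mul]
          ring
      _ = ENNReal.ofReal C * V * (ENNReal.ofReal ((n : ℝ) ^ 2) *
            ENNReal.ofReal ((R * h' n) ^ dZ)) := by
          rw [hB]; ring
      _ = _ := by
          rw [← ENNReal.ofReal_mul (by positivity)]
          congr 2
          have hpow : ((n : ℝ) ^ ((2 : ℝ) / dZ)) ^ dZ = (n : ℝ) ^ 2 := by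
            rw [← Real.rpow_mul_natCast (Nat.cast_nonneg n),
              div_mul_cancel₀ _ (by exact_mod_cast hdZ.ne')]
            exact_mod_cast Real.rpow_natCast (n : ℝ) 2
          rw [mul_pow, mul_pow, hpow]; ring
  refine tendsto_of_tendsto_of_tendsto_of_le_of_le tendsto_const_nhds ?_ (fun _ => zero_le) key
  have h1 : Tendsto (fun n : ℕ => R ^ dZ * ((n : ℝ) ^ ((2 : ℝ) / dZ) * h' n) ^ dZ)
      atTop (𝓝 0) := by
    have := (hband.pow dZ).const_mul (R ^ dZ)
    simpa [hdZ.ne'] using this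
  have h2 := ENNReal.Tendsto.const_mul (a := ENNReal.ofReal C * V) (ENNReal.tendsto_ofReal h1)
    (Or.inr (ENNReal.mul_ne_top ENNReal.ofReal_ne_top hVtop))
  simpa using h2


end
end
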